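/- arXiv:2212.07520 — 4 statements merged into one kernel-verified Lean document; each statement's English description precedes it below -/
import Mathlib

section
/- There exists a linear map ε : C^∞_0(B̄_1, ℂ) → S_0(ℝ^m) such that for each f ∈ C^∞_0(B̄_1, ℂ): (i) ε(f) restricted to B̄_1 equals f; (ii) ε(f) has compact support; and (iii) for all n, k ∈ ℕ, ⟨ε(f)⟩_{n,k} ≤ C · ⟨f⟩_{n,k,1} with constants C = C(n,k) > 0. -/
open Metric Set

/-- Membership in `C^∞₀(B̄_1, ℂ)`: smooth on the closed unit ball and flat at the
origin. -/
def FlatSmoothOnBall (m : ℕ) (f : EuclideanSpace ℝ (Fin m) → ℂ) : Prop :=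
  ContDiffOn ℝ (⊤ : ℕ∞) f (closedBall 0 1) ∧
    ∀ i : ℕ, iteratedFDerivWithin ℝ i f (closedBall 0 1) 0 = 0

/-- The weighted norm `⟨f⟩_{n,k,1}` on flat functions on the closed unit ball. -/
noncomputable def flatBallNorm (m : ℕ) (n k : ℕ)
    (f : EuclideanSpace ℝ (Fin m) → ℂ) : ℝ :=
  ⨆ p : (closedBall (0 : EuclideanSpace ℝ (Fin m)) 1 \ {0} :
      Set (EuclideanSpace ℝ (Fin m))) × Fin (n + 1),
    ‖(p.1 : EuclideanSpace ℝ (Fin m))‖ ^ (-(k : ℤ)) *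
      ‖iteratedFDerivWithin ℝ p.2 f (closedBall 0 1) p.1‖

/-- The norm `⟨g⟩_{n,k} = sup_{x ≠ 0} max_{|a| ≤ n, l ≤ k} |x|^{-l} |D^a g(x)|` on
Schwartz functions flat at the origin. -/
noncomputable def flatGlobalNorm (m : ℕ) (n k : ℕ)
    (f : EuclideanSpace ℝ (Fin m) → ℂ) : ℝ :=
  ⨆ p : ({x : EuclideanSpace ℝ (Fin m) | x ≠ 0} :
      Set (EuclideanSpace ℝ (Fin m))) × Fin (n + 1) × Fin (k + 1),
    ‖(p.1 : EuclideanSpace ℝ (Fin m))‖ ^ (-((p.2.2 : ℕ) : ℤ)) *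
      ‖iteratedFDeriv ℝ p.2.1 f p.1‖

open Filter Topology

namespace Seeley

/-- unnormalised Seeley coefficients -/
noncomputable def u : ℕ → ℝ
  | 0 => 1
  | (j + 1) => - u j / (2 ^ (j + 1) - 1)

lemma den_pos (j : ℕ) : (1 : ℝ) ≤ 2 ^ (j + 1) - 1 := by
  have : (1 : ℝ) ≤ 2 ^ j := one_le_pow₀ (by norm_num)
  rw [pow_succ]; linarith

lemma u_ne (j : ℕ) : u j ≠ 0 := by
  induction j with
  | zero => simp [u]
  | succ j ih =>
    rw [u]
    exact div_ne_zero (neg_ne_zero.mpr ih) (by linarith [den_pos j])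

lemma u_le (j : ℕ) : |u j| ≤ 1 := by
  induction j with
  | zero => simp [u]
  | succ j ih =>
    have h := den_pos j
    rw [u, abs_div, abs_neg, abs_of_pos (by linarith : (0 : ℝ) < 2 ^ (j + 1) - 1)]
    rw [div_le_one (by linarith)]
    linarith

lemma u_rec (j : ℕ) : (2 ^ (j + 1) - 1) * u (j + 1) = - u j := by
  have h := den_pos j
  rw [u]
  field_simp [show (2 : ℝ) ^ (j + 1) - 1 ≠ 0 by linarith]

lemma u_summable (z : ℝ) (hz : 0 < z) : Summable (fun j => u j * z ^ j) := by
  refine summable_of_ratio_test_tendsto_lt_one (l := 0) (by norm_num) ?_ ?_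
  · exact Eventually.of_forall fun j => mul_ne_zero (u_ne j) (pow_ne_zero _ hz.ne')
  · have : (fun n => ‖u (n + 1) * z ^ (n + 1)‖ / ‖u n * z ^ n‖)
        = fun n : ℕ => z / (2 ^ (n + 1) - 1) := by
      funext n
      have h := den_pos n
      have hu : |u n| ≠ 0 := abs_ne_zero.mpr (u_ne n)
      simp only [norm_mul, Real.norm_eq_abs, abs_pow, abs_of_pos hz]
      rw [u, abs_div, abs_neg, abs_of_pos (by linarith : (0 : ℝ) < 2 ^ (n + 1) - 1)]
      have h2 : (2 : ℝ) ^ (n + 1) - 1 ≠ 0 := by linarith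
      field_simp
      ring
    rw [this]
    refine Tendsto.div_atTop tendsto_const_nhds ?_
    refine tendsto_atTop_add_const_right _ _ ?_
    exact (tendsto_pow_atTop_atTop_of_one_lt (by norm_num)).comp (tendsto_add_atTop_nat 1)

noncomputable def e (z : ℝ) : ℝ := ∑' j, u j * z ^ j

lemma e_two (z : ℝ) (hz : 0 < z) : e (2 * z) = (1 - z) * e z := by
  have h1 := u_summable z hz
  have h2 := u_summable (2 * z) (by linarith)
  unfold e
  rw [h2.tsum_eq_zero_add, sub_mul, one_mul]
  nth_rewrite 1 [h1.tsum_eq_zero_add]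
  rw [← tsum_mul_left]
  simp only [pow_zero]
  rw [add_sub_assoc, ← Summable.tsum_sub ((summable_nat_add_iff 1).mpr h1) (h1.mul_left z)]
  congr 1
  refine tsum_congr fun j => ?_
  have := u_rec j
  rw [mul_pow]
  linear_combination z ^ (j + 1) * this

lemma e_quarter : e (1 / 4) ≠ 0 := by
  have h1 := u_summable (1 / 4) (by norm_num)
  have hs : Summable (fun j : ℕ => (1 / 4 : ℝ) ^ (j + 1)) :=
    (summable_nat_add_iff 1).mpr (summable_geometric_of_lt_one (by norm_num) (by norm_num))
  have hval : ∑' j : ℕ, (1 / 4 : ℝ) ^ (j + 1) = 1 / 3 := by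
    simp only [pow_succ]
    rw [tsum_mul_right, tsum_geometric_of_lt_one (by norm_num) (by norm_num)]
    norm_num
  have hb : ‖∑' j : ℕ, u (j + 1) * (1 / 4) ^ (j + 1)‖ ≤ 1 / 3 := by
    rw [← hval]
    refine tsum_of_norm_bounded hs.hasSum fun j => ?_
    rw [norm_mul, Real.norm_eq_abs, norm_pow, Real.norm_eq_abs, abs_of_pos (by norm_num : (0:ℝ) < 1/4)]
    exact mul_le_of_le_one_left (by positivity) (u_le _)
  unfold e
  rw [h1.tsum_eq_zero_add]
  rw [Real.norm_eq_abs, abs_le] at hb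
  simp only [u, pow_zero]
  simp only [u] at hb
  intro h
  linarith [hb.1]

lemma e_one : e 1 ≠ 0 := by
  have h1 := e_two (1 / 4) (by norm_num)
  have h2 := e_two (1 / 2) (by norm_num)
  norm_num at h1 h2
  rw [h2, h1]
  have := e_quarter
  simp at this ⊢
  exact this

lemma e_pow (p : ℕ) : e (2 ^ (p + 1)) = 0 := by
  induction p with
  | zero => have := e_two 1 (by norm_num); simpa using this
  | succ p ih =>
    rw [pow_succ, mul_comm, e_two _ (by positivity), ih, mul_zero]

/-- Seeley coefficients -/
noncomputable def a (j : ℕ) : ℝ := u j / e 1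

/-- coefficient of order `p` -/
noncomputable def al (p j : ℕ) : ℝ := a j * (2 ^ j) ^ p

lemma al_summable (p : ℕ) : Summable (al p) := by
  have := (u_summable (2 ^ p) (by positivity)).div_const (e 1)
  refine this.congr fun j => ?_
  unfold al a
  rw [← pow_mul, ← pow_mul, mul_comm p j]
  ring

lemma al_abs_summable (p : ℕ) : Summable (fun j => |al p j|) := (al_summable p).abs

lemma al_succ (p j : ℕ) : al (p + 1) j = al p j * 2 ^ j := by
  unfold al; ring

lemma al_tsum (p : ℕ) : ∑' j, al p j = if p = 0 then 1 else 0 := by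
  have : ∑' j, al p j = e (2 ^ p) / e 1 := by
    unfold e
    rw [← tsum_div_const]
    refine tsum_congr fun j => ?_
    unfold al a e
    rw [← pow_mul, ← pow_mul, mul_comm p j]
    ring
  rw [this]
  cases p with
  | zero => simpa using div_self e_one
  | succ p => simp [e_pow]

set_option linter.unusedSectionVars false

section

variable {E F F' : Type} [NormedAddCommGroup E] [InnerProductSpace ℝ E] [FiniteDimensional ℝ E]
  [NormedAddCommGroup F] [NormedSpace ℝ F]
  [NormedAddCommGroup F'] [NormedSpace ℝ F']

noncomputable def rho (x : E) : ℝ := ‖x‖ ^ 2 - 1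

noncomputable def T (j : ℕ) (x : E) : E := Real.exp (-(2 ^ j * rho x)) • x

noncomputable def term (p q : ℕ) (g : E → F) (j : ℕ) (x : E) : F :=
  (al p j * Real.exp (-(2 ^ j * rho x)) ^ q) • g (T j x)

noncomputable def glue (p q : ℕ) (g : E → F) (x : E) : F :=
  if ‖x‖ ≤ 1 then (if p = 0 then g x else 0) else ∑' j, term p q g j x

lemma exp_le (j : ℕ) {x : E} (hx : 1 ≤ ‖x‖) : Real.exp (-(2 ^ j * rho x)) ≤ 1 := by
  rw [Real.exp_le_one_iff]
  have : 0 ≤ rho x := by unfold rho; nlinarith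
  have : 0 ≤ 2 ^ j * rho x := by positivity
  linarith

lemma T_sq (j : ℕ) {x : E} (hx : 1 ≤ ‖x‖) : ‖T j x‖ ^ 2 ≤ Real.exp (-rho x) := by
  have h0 : 0 ≤ rho x := by unfold rho; nlinarith
  have h1 : (1 : ℝ) ≤ 2 ^ j := one_le_pow₀ (by norm_num)
  have h2 : ‖x‖ ^ 2 ≤ Real.exp (rho x) := by
    have := Real.add_one_le_exp (rho x)
    unfold rho at *; linarith
  unfold T
  rw [norm_smul, mul_pow, Real.norm_eq_abs, Real.abs_exp, ← Real.exp_nat_mul]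
  calc _ ≤ Real.exp (((2 : ℕ) : ℝ) * -(2 ^ j * rho x)) * Real.exp (rho x) := by gcongr
    _ = Real.exp (((2 : ℕ) : ℝ) * -(2 ^ j * rho x) + rho x) := by rw [Real.exp_add]
    _ ≤ _ := by
      rw [Real.exp_le_exp]
      push_cast
      nlinarith

lemma T_mem (j : ℕ) {x : E} (hx : 1 ≤ ‖x‖) : T j x ∈ closedBall (0 : E) 1 := by
  rw [mem_closedBall_zero_iff]
  have h := T_sq j hx
  have h0 : 0 ≤ rho x := by unfold rho; nlinarith
  have : Real.exp (-rho x) ≤ 1 := by rw [Real.exp_le_one_iff]; linarith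
  nlinarith [norm_nonneg (T j x)]

lemma T_mem' (j : ℕ) {x : E} (hx : 1 < ‖x‖) : T j x ∈ ball (0 : E) 1 := by
  rw [mem_ball_zero_iff]
  have h := T_sq j hx.le
  have h0 : 0 < rho x := by unfold rho; nlinarith
  have : Real.exp (-rho x) < 1 := by rw [Real.exp_lt_one_iff]; linarith
  nlinarith [norm_nonneg (T j x)]

lemma norm_term_le (p q : ℕ) (g : E → F) {M : ℝ} (hM : ∀ y ∈ closedBall (0 : E) 1, ‖g y‖ ≤ M)
    (j : ℕ) {x : E} (hx : 1 ≤ ‖x‖) : ‖term p q g j x‖ ≤ |al p j| * M := by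
  unfold term
  rw [norm_smul, norm_mul, Real.norm_eq_abs, norm_pow, Real.norm_eq_abs, Real.abs_exp]
  have h1 := exp_le j hx
  have h2 : Real.exp (-(2 ^ j * rho x)) ^ q ≤ 1 := pow_le_one₀ (Real.exp_pos _).le h1
  have h3 := hM _ (T_mem j hx)
  calc _ ≤ |al p j| * 1 * M := by gcongr
    _ = _ := by ring

lemma term_summable [CompleteSpace F] (p q : ℕ) (g : E → F) {M : ℝ}
    (hM : ∀ y ∈ closedBall (0 : E) 1, ‖g y‖ ≤ M)
    {x : E} (hx : 1 ≤ ‖x‖) : Summable (fun j => term p q g j x) :=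
  Summable.of_norm_bounded ((al_abs_summable p).mul_right M)
    fun j => norm_term_le p q g hM j hx

lemma norm_glue_le (p q : ℕ) : ∃ C : ℝ, 0 ≤ C ∧ ∀ (g : E → F) (M : ℝ),
    (∀ y ∈ closedBall (0 : E) 1, ‖g y‖ ≤ M) → ∀ x, ‖glue p q g x‖ ≤ C * M := by
  refine ⟨1 + ∑' j, |al p j|, add_nonneg zero_le_one (tsum_nonneg fun j => abs_nonneg _), ?_⟩
  intro g M hM x
  have hM0 : 0 ≤ M := (norm_nonneg _).trans (hM 0 (by simp))
  have hs : 0 ≤ ∑' j, |al p j| := tsum_nonneg fun j => abs_nonneg _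
  unfold glue
  split_ifs with h1 h2
  · have := hM x (by simpa using h1)
    nlinarith
  · rw [norm_zero]; positivity
  · have := tsum_of_norm_bounded ((al_abs_summable p).mul_right M).hasSum
      fun j => norm_term_le p q g hM j (x := x) (by linarith)
    rw [tsum_mul_right] at this
    linarith

lemma bdd_of_cont {g : E → F} (hg : ContinuousOn g (closedBall 0 1)) :
    ∃ M, ∀ y ∈ closedBall (0 : E) 1, ‖g y‖ ≤ M :=
  (isCompact_closedBall (0 : E) 1).exists_bound_of_continuousOn hg

lemma rho_cont : Continuous (rho : E → ℝ) := by unfold rho; fun_prop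

lemma T_cont (j : ℕ) : Continuous (T j : E → E) := by
  have := rho_cont (E := E)
  unfold T; fun_prop

lemma glue_cont [CompleteSpace F] (p q : ℕ) {g : E → F} (hg : ContinuousOn g (closedBall 0 1)) :
    Continuous (glue p q g) := by
  obtain ⟨M, hM⟩ := bdd_of_cont hg
  unfold glue
  refine continuous_if_le continuous_norm continuous_const ?_ ?_ ?_
  · split_ifs
    · refine hg.mono fun x hx => by simpa using hx
    · exact continuousOn_const
  · refine continuousOn_tsum (u := fun j => |al p j| * M) ?_ ((al_abs_summable p).mul_right M) ?_
    · intro j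
      unfold term
      have := rho_cont (E := E)
      refine ContinuousOn.smul (Continuous.continuousOn (by fun_prop)) ?_
      exact hg.comp (T_cont j).continuousOn fun x hx => T_mem j hx
    · intro j x hx
      exact norm_term_le p q g hM j hx
  · intro x hx
    have hr : rho x = 0 := by unfold rho; rw [hx]; norm_num
    simp only [term, T, hr]
    simp only [mul_zero, neg_zero, Real.exp_zero, one_pow, mul_one, one_smul]
    rw [(al_summable p).tsum_smul_const, al_tsum]
    split_ifs <;> simp

/-- `c2 x v = ⟨x, ·⟩ v` -/
noncomputable def c2 (F : Type) [NormedAddCommGroup F] [NormedSpace ℝ F] (x : E) :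
    F →L[ℝ] (E →L[ℝ] F) := ContinuousLinearMap.smulRightL ℝ E F (innerSL ℝ x)

noncomputable def c1 (F : Type) [NormedAddCommGroup F] [NormedSpace ℝ F] (x : E) :
    (E →L[ℝ] F) →L[ℝ] (E →L[ℝ] F) := (c2 F x).comp (ContinuousLinearMap.apply ℝ F x)

lemma c2_smooth {n : WithTop ℕ∞} : ContDiff ℝ n (c2 F : E → _) := by
  let L : E →L[ℝ] F →L[ℝ] (E →L[ℝ] F) :=
    (ContinuousLinearMap.smulRightL ℝ E F).comp (innerSL ℝ : E →L[ℝ] E →L[ℝ] ℝ)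
  exact ContinuousLinearMap.contDiff (𝕜 := ℝ) (E := E) (F := F →L[ℝ] (E →L[ℝ] F)) (n := n) L

lemma c1_smooth {n : WithTop ℕ∞} : ContDiff ℝ n (c1 F : E → _) := by
  unfold c1
  let L : E →L[ℝ] (E →L[ℝ] F) →L[ℝ] F := ContinuousLinearMap.apply ℝ F
  have h := ContinuousLinearMap.contDiff (𝕜 := ℝ) (E := E) (F := (E →L[ℝ] F) →L[ℝ] F) (n := n) L
  exact c2_smooth.clm_comp h

@[simp] lemma c2_apply (x : E) (v : F) (y : E) : c2 F x v y = inner ℝ x y • v := by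
  simp [c2]

@[simp] lemma c1_apply (x : E) (v : E →L[ℝ] F) (y : E) : c1 F x v y = inner ℝ x y • v x := by
  simp [c1]

/-- the derivative of `term` -/
noncomputable def dterm (p q : ℕ) (g : E → F) (g' : E → E →L[ℝ] F) (j : ℕ) (x : E) : E →L[ℝ] F :=
  term p (q + 1) g' j x - ((2 : ℝ) • c1 F x) (term (p + 1) (q + 1) g' j x)
    - ((2 * q : ℝ) • c2 F x) (term (p + 1) q g j x)

noncomputable def dglue (p q : ℕ) (g : E → F) (g' : E → E →L[ℝ] F) (x : E) : E →L[ℝ] F :=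
  glue p (q + 1) g' x - ((2 : ℝ) • c1 F x) (glue (p + 1) (q + 1) g' x)
    - ((2 * q : ℝ) • c2 F x) (glue (p + 1) q g x)

lemma rho_deriv (x : E) : HasFDerivAt (rho : E → ℝ) ((2 : ℝ) • innerSL ℝ x) x := by
  unfold rho
  have := (hasStrictFDerivAt_norm_sq x).hasFDerivAt
  have h2 := this.sub_const 1
  refine h2.congr_fderiv ?_
  ext v
  simp

lemma term_deriv (p q : ℕ) {g : E → F} {g' : E → E →L[ℝ] F}
    (hg : ∀ y ∈ ball (0 : E) 1, HasFDerivAt g (g' y) y) (j : ℕ) {x : E} (hx : 1 < ‖x‖) :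
    HasFDerivAt (term p q g j) (dterm p q g g' j x) x := by
  have hr := rho_deriv x
  have he : HasFDerivAt (fun x : E => Real.exp (-(2 ^ j * rho x))) _ x :=
    ((hr.const_mul (2 ^ j)).neg).exp
  have hT : HasFDerivAt (T j) _ x := he.smul (hasFDerivAt_id x)
  have hgT := (hg _ (T_mem' j hx)).comp x hT
  have hq := (he.pow q).const_mul (al p j)
  have := hq.smul hgT
  refine this.congr_fderiv ?_
  ext v
  simp [dterm, term, al_succ]
  rcases q with _ | q
  · simp
    module
  · simp
    module

lemma glue_deriv_out [CompleteSpace F] (p q : ℕ) {g : E → F} {g' : E → E →L[ℝ] F} {M : ℝ}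
    (hM : ∀ y ∈ closedBall (0 : E) 1, ‖g y‖ ≤ M)
    (hM' : ∀ y ∈ closedBall (0 : E) 1, ‖g' y‖ ≤ M)
    (hg : ∀ y ∈ ball (0 : E) 1, HasFDerivAt g (g' y) y) {x : E} (hx : 1 < ‖x‖) :
    HasFDerivAt (glue p q g) (dglue p q g g' x) x := by
  have hM0 : 0 ≤ M := (norm_nonneg _).trans (hM 0 (by simp))
  have hopen : IsOpen {y : E | 1 < ‖y‖} := isOpen_lt continuous_const continuous_norm
  have hK1 : ∃ K, ∀ᶠ y in 𝓝 x, ‖(2 : ℝ) • c1 F y‖ ≤ K := by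
    have : Continuous (fun y : E => ‖(2 : ℝ) • c1 F y‖) := by
      have h := (c1_smooth (F := F) (E := E) (n := 0)).continuous
      exact (continuous_norm (E := (E →L[ℝ] F) →L[ℝ] (E →L[ℝ] F))).comp (h.const_smul (2 : ℝ))
    exact ⟨_, (this.tendsto x).eventually_le_const (lt_add_one _)⟩
  have hK2 : ∃ K, ∀ᶠ y in 𝓝 x, ‖(2 * q : ℝ) • c2 F y‖ ≤ K := by
    have : Continuous (fun y : E => ‖(2 * q : ℝ) • c2 F y‖) := by
      have h := (c2_smooth (F := F) (E := E) (n := 0)).continuous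
      exact (continuous_norm (E := F →L[ℝ] (E →L[ℝ] F))).comp (h.const_smul (2 * q : ℝ))
    exact ⟨_, (this.tendsto x).eventually_le_const (lt_add_one _)⟩
  obtain ⟨K1, hK1⟩ := hK1
  obtain ⟨K2, hK2⟩ := hK2
  obtain ⟨r, hr, hball⟩ := Metric.eventually_nhds_iff_ball.mp
    ((show ∀ᶠ y in 𝓝 x, 1 < ‖y‖ from hopen.mem_nhds hx).and (hK1.and hK2))
  have hx0 : x ∈ ball x r := mem_ball_self hr
  have key := hasFDerivAt_tsum_of_isPreconnected
    (u := fun j => |al p j| * M + K1 * (|al (p + 1) j| * M) + K2 * (|al (p + 1) j| * M))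
    (f := term p q g) (f' := dterm p q g g') (s := ball x r) (x₀ := x) (x := x)
    ((((al_abs_summable p).mul_right M).add (((al_abs_summable (p + 1)).mul_right M).mul_left K1)).add
      (((al_abs_summable (p + 1)).mul_right M).mul_left K2))
    isOpen_ball (convex_ball x r).isPreconnected
    (fun j y hy => term_deriv p q hg j (hball y hy).1)
    (fun j y hy => by
      obtain ⟨h1, h2, h3⟩ := hball y hy
      unfold dterm
      refine (norm_sub_le _ _).trans (add_le_add ((norm_sub_le _ _).trans (add_le_add ?_ ?_)) ?_)
      · exact norm_term_le _ _ _ hM' j h1.le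
      · refine (ContinuousLinearMap.le_opNorm _ _).trans ?_
        exact mul_le_mul h2 (norm_term_le _ _ _ hM' j h1.le) (norm_nonneg _)
          ((ContinuousLinearMap.opNorm_nonneg _).trans h2)
      · refine (ContinuousLinearMap.le_opNorm _ _).trans ?_
        exact mul_le_mul h3 (norm_term_le _ _ _ hM j h1.le) (norm_nonneg _)
          ((ContinuousLinearMap.opNorm_nonneg _).trans h3))
    hx0 (term_summable p q g hM hx.le) hx0
  have hd : ∑' j, dterm p q g g' j x = dglue p q g g' x := by
    have s1 := term_summable p (q + 1) g' hM' hx.le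
    have s2 := term_summable (p + 1) (q + 1) g' hM' hx.le
    have s3 := term_summable (p + 1) q g hM hx.le
    have s2' := s2.mapL ((2 : ℝ) • c1 F x)
    have s3' := s3.mapL ((2 * q : ℝ) • c2 F x)
    unfold dterm dglue glue
    simp only [if_neg (not_le.mpr hx)]
    rw [(s1.sub s2').tsum_sub s3', s1.tsum_sub s2', ContinuousLinearMap.map_tsum _ s2,
      ContinuousLinearMap.map_tsum _ s3]
  rw [hd] at key
  refine key.congr_of_eventuallyEq ?_
  filter_upwards [hopen.mem_nhds hx] with y hy
  unfold glue
  rw [if_neg (not_le.mpr hy)]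

lemma glue_deriv_in (p q : ℕ) {g : E → F} {g' : E → E →L[ℝ] F}
    (hg : ∀ y ∈ ball (0 : E) 1, HasFDerivAt g (g' y) y) {x : E} (hx : ‖x‖ < 1) :
    HasFDerivAt (glue p q g) (dglue p q g g' x) x := by
  have h1 : (glue p q g) =ᶠ[𝓝 x] fun y => if p = 0 then g y else 0 := by
    filter_upwards [(isOpen_lt continuous_norm continuous_const).mem_nhds hx] with y hy
    unfold glue
    rw [if_pos (le_of_lt hy)]
  have h2 : dglue p q g g' x = if p = 0 then g' x else 0 := by
    unfold dglue glue
    simp [hx.le]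
  rw [h2]
  refine HasFDerivAt.congr_of_eventuallyEq ?_ h1
  split_ifs
  · exact hg x (by simpa using hx)
  · exact hasFDerivAt_const _ _

/-- derivative across the unit sphere -/
lemma deriv_across [CompleteSpace F] {G : E → F} {D : E → E →L[ℝ] F} (hG : Continuous G)
    (hD : Continuous D) (h : ∀ x, ‖x‖ ≠ 1 → HasFDerivAt G (D x) x) (x : E) :
    HasFDerivAt G (D x) x := by
  by_cases hx : ‖x‖ ≠ 1
  · exact h x hx
  push Not at hx
  rw [hasFDerivAt_iff_isLittleO_nhds_zero, Asymptotics.isLittleO_iff]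
  intro c hc
  have hev : ∀ᶠ y in 𝓝 x, ‖D y - D x‖ ≤ c := by
    have : Continuous (fun y => ‖D y - D x‖) := (hD.sub continuous_const).norm
    have := this.tendsto x
    simp only [sub_self, norm_zero] at this
    exact this.eventually_le_const hc
  obtain ⟨r, hr, hball⟩ := Metric.eventually_nhds_iff_ball.mp hev
  filter_upwards [ball_mem_nhds (0 : E) hr] with v hv
  rw [mem_ball_zero_iff] at hv
  by_cases hv0 : v = 0
  · simp [hv0]
  let φ : ℝ → F := fun t => G (x + t • v) - D x (t • v)
  let φ' : ℝ → F := fun t => (D (x + t • v) - D x) v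
  have hline : Continuous (fun t : ℝ => x + t • v) := by fun_prop
  have hcount : ({0, -2 * inner ℝ x v / ‖v‖ ^ 2} : Set ℝ).Countable := Set.Countable.insert _ (Set.countable_singleton _)
  have hInteg := MeasureTheory.integral_eq_of_hasDerivAt_off_countable φ φ' (a := 0) (b := 1) hcount
    (by
      have : Continuous φ := by
        have := hG.comp hline
        exact this.sub ((D x).continuous.comp (by fun_prop))
      exact this.continuousOn)
    (by
      intro t ht
      have ht2 := ht.2
      simp only [mem_insert_iff, mem_singleton_iff, not_or] at ht2
      have hne : ‖x + t • v‖ ≠ 1 := by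
        intro h1
        have h2 := norm_add_sq_real x (t • v)
        rw [h1, hx, norm_smul, inner_smul_right, mul_pow, Real.norm_eq_abs, sq_abs] at h2
        have h3 : t * (2 * inner ℝ x v + t * ‖v‖ ^ 2) = 0 := by linarith
        rcases mul_eq_zero.mp h3 with h4 | h4
        · exact ht2.1 h4
        · apply ht2.2
          have : ‖v‖ ^ 2 ≠ 0 := by simpa using hv0
          field_simp
          linarith
      have hl : HasDerivAt (fun t : ℝ => t • v) v t := by
        simpa using (hasDerivAt_id t).smul_const v
      have h1 := (h _ hne).comp_hasDerivAt t (hl.const_add x)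
      have h2 := (D x).hasFDerivAt.comp_hasDerivAt t hl
      exact h1.sub h2)
    (by
      have : Continuous φ' := by
        have := (hD.comp hline).sub (continuous_const (y := D x))
        exact this.clm_apply continuous_const
      exact this.intervalIntegrable _ _)
  have hle := intervalIntegral.norm_integral_le_of_norm_le_const (f := φ') (a := 0) (b := 1)
    (C := c * ‖v‖) (by
      intro t ht
      rw [uIoc_of_le zero_le_one] at ht
      refine (ContinuousLinearMap.le_opNorm _ _).trans ?_
      gcongr
      apply hball
      rw [mem_ball, dist_eq_norm, add_sub_cancel_left, norm_smul, Real.norm_eq_abs, abs_of_pos ht.1]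
      have := norm_nonneg v
      nlinarith [ht.2])
  rw [hInteg] at hle
  have h3 : φ 1 - φ 0 = G (x + v) - G x - D x v := by
    simp [φ]; abel
  rw [h3] at hle
  simpa using hle

lemma uniq : UniqueDiffOn ℝ (closedBall (0 : E) 1) := by
  refine uniqueDiffOn_convex (convex_closedBall _ _) ⟨0, ?_⟩
  exact mem_interior_iff_mem_nhds.mpr (closedBall_mem_nhds _ zero_lt_one)

lemma glue_deriv [CompleteSpace F] (p q : ℕ) {g : E → F} {n : WithTop ℕ∞}
    (hn1 : 1 ≤ n) (hg : ContDiffOn ℝ n g (closedBall 0 1)) (x : E) :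
    HasFDerivAt (glue p q g) (dglue p q g (fderivWithin ℝ g (closedBall 0 1)) x) x := by
  set g' := fderivWithin ℝ g (closedBall 0 1) with hg'
  have hc' : ContinuousOn g' (closedBall 0 1) := hg.continuousOn_fderivWithin uniq hn1
  have hc : ContinuousOn g (closedBall 0 1) := hg.continuousOn
  have hd : ∀ y ∈ ball (0 : E) 1, HasFDerivAt g (g' y) y := by
    intro y hy
    have hn : closedBall (0 : E) 1 ∈ 𝓝 y :=
      mem_of_superset (isOpen_ball.mem_nhds hy) ball_subset_closedBall
    exact ((hg.differentiableOn (by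
      intro h; rw [h] at hn1; simp at hn1) y (ball_subset_closedBall hy)).hasFDerivWithinAt).hasFDerivAt hn
  obtain ⟨M, hM⟩ := bdd_of_cont hc
  obtain ⟨M', hM'⟩ := bdd_of_cont hc'
  refine deriv_across (glue_cont p q hc) ?_ ?_ x
  · unfold dglue
    refine ((glue_cont _ _ hc').sub (Continuous.clm_apply ?_ (glue_cont _ _ hc'))).sub
      (Continuous.clm_apply ?_ (glue_cont _ _ hc))
    · exact (c1_smooth (n := 0)).continuous.const_smul (2 : ℝ)
    · exact (c2_smooth (n := 0)).continuous.const_smul (2 * q : ℝ)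
  · intro y hy
    rcases lt_or_gt_of_ne hy with h | h
    · exact glue_deriv_in p q hd h
    · exact glue_deriv_out p q (M := max M M') (fun y hy => (hM y hy).trans (le_max_left _ _))
        (fun y hy => (hM' y hy).trans (le_max_right _ _)) hd h

end

lemma glue_contDiff_nat {E : Type} [NormedAddCommGroup E] [InnerProductSpace ℝ E]
    [FiniteDimensional ℝ E] (n : ℕ) : ∀ {F : Type} [NormedAddCommGroup F] [NormedSpace ℝ F]
    [CompleteSpace F] (p q : ℕ) {g : E → F}, ContDiffOn ℝ n g (closedBall 0 1) →
    ContDiff ℝ n (glue p q g) := by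
  induction n with
  | zero =>
    intro F _ _ _ p q g hg
    exact contDiff_zero.mpr (glue_cont p q hg.continuousOn)
  | succ n ih =>
    intro F _ _ _ p q g hg
    have hg' : ContDiffOn ℝ n (fderivWithin ℝ g (closedBall 0 1)) (closedBall 0 1) :=
      hg.fderivWithin uniq (by norm_cast)
    have hg0 : ContDiffOn ℝ n g (closedBall 0 1) := hg.of_le (by norm_cast; omega)
    have h1 : ((1 : ℕ) : WithTop ℕ∞) ≤ ((n + 1 : ℕ) : WithTop ℕ∞) := by
      norm_cast; omega
    rw [Nat.cast_succ, contDiff_succ_iff_hasFDerivAt]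
    refine ⟨_, ?_, fun x => glue_deriv p q (by exact_mod_cast h1) hg x⟩
    unfold dglue
    refine ((ih _ _ hg').sub (ContDiff.clm_apply ?_ (ih _ _ hg'))).sub
      (ContDiff.clm_apply ?_ (ih _ _ hg0))
    · exact c1_smooth.const_smul (2 : ℝ)
    · exact c2_smooth.const_smul (2 * q : ℝ)

section

variable {E F F' : Type} [NormedAddCommGroup E] [InnerProductSpace ℝ E] [FiniteDimensional ℝ E]
  [NormedAddCommGroup F] [NormedSpace ℝ F]
  [NormedAddCommGroup F'] [NormedSpace ℝ F']

lemma nat_le_top (i : ℕ) : (i : WithTop ℕ∞) ≤ ((⊤ : ℕ∞) : WithTop ℕ∞) := by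
  exact_mod_cast le_top

lemma glue_contDiff [CompleteSpace F] (p q : ℕ) {g : E → F}
    (hg : ContDiffOn ℝ (⊤ : ℕ∞) g (closedBall 0 1)) : ContDiff ℝ (⊤ : ℕ∞) (glue p q g) :=
  contDiff_infty.mpr fun n => glue_contDiff_nat n p q (hg.of_le (nat_le_top n))

/-- derivatives up to order `i` bounded by `M` on the ball of radius 2 -/
def Bd (i : ℕ) (h : E → F) (M : ℝ) : Prop :=
  ∀ j ≤ i, ∀ x, ‖x‖ ≤ 2 → ‖iteratedFDeriv ℝ j h x‖ ≤ M

lemma sub_bd {i : ℕ} {f g : E → F} {M N : ℝ} (hf : ContDiff ℝ (⊤ : ℕ∞) f)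
    (hg : ContDiff ℝ (⊤ : ℕ∞) g) (h1 : Bd i f M) (h2 : Bd i g N) :
    Bd i (fun x => f x - g x) (M + N) := by
  intro j hj x hx
  have := iteratedFDeriv_sub (hf.of_le (nat_le_top j)) (hg.of_le (nat_le_top j))
  have h3 : iteratedFDeriv ℝ j (fun x => f x - g x) x
      = iteratedFDeriv ℝ j f x - iteratedFDeriv ℝ j g x := congrFun this x
  rw [h3]
  exact (norm_sub_le _ _).trans (add_le_add (h1 j hj x hx) (h2 j hj x hx))

lemma mul_bd {c : E → F →L[ℝ] F'} (hc : ContDiff ℝ (⊤ : ℕ∞) c) (i : ℕ) :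
    ∃ C : ℝ, 0 ≤ C ∧ ∀ (h : E → F) (M : ℝ), ContDiff ℝ (⊤ : ℕ∞) h → Bd i h M →
      Bd i (fun x => c x (h x)) (C * M) := by
  have hK : ∀ j : ℕ, ∃ K : ℝ, ∀ x ∈ closedBall (0 : E) 2, ‖iteratedFDeriv ℝ j c x‖ ≤ K := fun j =>
    (isCompact_closedBall (0 : E) 2).exists_bound_of_continuousOn
      (hc.continuous_iteratedFDeriv (nat_le_top j)).continuousOn
  choose K hK using hK
  have hK0 : ∀ j, 0 ≤ K j := fun j => (norm_nonneg _).trans (hK j 0 (by simp))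
  refine ⟨∑ j ∈ Finset.range (i + 1), ∑ l ∈ Finset.range (j + 1), (j.choose l : ℝ) * K l,
    Finset.sum_nonneg fun j _ => Finset.sum_nonneg fun l _ =>
      mul_nonneg (Nat.cast_nonneg _) (hK0 l), ?_⟩
  intro h M hh hM j hj x hx
  have hM0 : 0 ≤ M := (norm_nonneg _).trans (hM 0 (Nat.zero_le _) x hx)
  refine (norm_iteratedFDeriv_clm_apply hc hh x (nat_le_top j)).trans ?_
  calc _ ≤ ∑ l ∈ Finset.range (j + 1), (j.choose l : ℝ) * K l * M := by
        refine Finset.sum_le_sum fun l hl => ?_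
        refine mul_le_mul ?_ (hM _ (by omega) x hx) (norm_nonneg _)
          (mul_nonneg (Nat.cast_nonneg _) (hK0 l))
        exact mul_le_mul_of_nonneg_left (hK l x (by simpa using hx)) (Nat.cast_nonneg _)
    _ = (∑ l ∈ Finset.range (j + 1), (j.choose l : ℝ) * K l) * M := by rw [Finset.sum_mul]
    _ ≤ _ := by
      refine mul_le_mul_of_nonneg_right ?_ hM0
      exact Finset.single_le_sum
        (f := fun j => ∑ l ∈ Finset.range (j + 1), (j.choose l : ℝ) * K l)
        (fun j _ => Finset.sum_nonneg fun l _ => mul_nonneg (Nat.cast_nonneg _) (hK0 l))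
        (Finset.mem_range.mpr (by omega))

/-- derivatives up to order `i` bounded by `M` on the closed unit ball -/
def BdB (i : ℕ) (h : E → F) (M : ℝ) : Prop :=
  ∀ j ≤ i, ∀ x ∈ closedBall (0 : E) 1, ‖iteratedFDerivWithin ℝ j h (closedBall 0 1) x‖ ≤ M

lemma BdB.fderiv {i : ℕ} {h : E → F} {M : ℝ} (hb : BdB (i + 1) h M) :
    BdB i (fderivWithin ℝ h (closedBall 0 1)) M := by
  intro j hj x hx
  rw [norm_iteratedFDerivWithin_fderivWithin uniq hx]
  exact hb _ (by omega) x hx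

lemma smooth_fderiv {g : E → F} (hg : ContDiffOn ℝ (⊤ : ℕ∞) g (closedBall 0 1)) :
    ContDiffOn ℝ (⊤ : ℕ∞) (fderivWithin ℝ g (closedBall 0 1)) (closedBall 0 1) :=
  hg.fderivWithin uniq (by exact_mod_cast le_top)

end

lemma glue_bd {E : Type} [NormedAddCommGroup E] [InnerProductSpace ℝ E]
    [FiniteDimensional ℝ E] (i : ℕ) : ∀ (F : Type) [NormedAddCommGroup F] [NormedSpace ℝ F]
    [CompleteSpace F] (p q : ℕ), ∃ C : ℝ, 0 ≤ C ∧ ∀ (g : E → F) (M : ℝ),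
      ContDiffOn ℝ (⊤ : ℕ∞) g (closedBall 0 1) → BdB i g M → Bd i (glue p q g) (C * M) := by
  induction i with
  | zero =>
    intro F _ _ _ p q
    obtain ⟨C, hC, h⟩ := norm_glue_le (E := E) (F := F) p q
    refine ⟨C, hC, fun g M hg hb j hj x hx => ?_⟩
    obtain rfl : j = 0 := by omega
    rw [norm_iteratedFDeriv_zero]
    refine h g M (fun y hy => ?_) x
    simpa using hb 0 le_rfl y hy
  | succ i ih =>
    intro F _ _ _ p q
    obtain ⟨C0, hC0, h0⟩ := norm_glue_le (E := E) (F := F) p q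
    obtain ⟨C1, hC1, h1⟩ := ih (E →L[ℝ] F) p (q + 1)
    obtain ⟨C2, hC2, h2⟩ := ih (E →L[ℝ] F) (p + 1) (q + 1)
    obtain ⟨C3, hC3, h3⟩ := ih F (p + 1) q
    have hs1 : ContDiff ℝ (⊤ : ℕ∞) (fun x : E => (2 : ℝ) • c1 F x) := c1_smooth.const_smul (2 : ℝ)
    have hs2 : ContDiff ℝ (⊤ : ℕ∞) (fun x : E => (2 * q : ℝ) • c2 F x) :=
      c2_smooth.const_smul (2 * q : ℝ)
    obtain ⟨A1, hA1, m1⟩ := mul_bd hs1 i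
    obtain ⟨A2, hA2, m2⟩ := mul_bd hs2 i
    refine ⟨C0 + (C1 + A1 * C2 + A2 * C3), by positivity, fun g M hg hb j hj x hx => ?_⟩
    have hM0 : 0 ≤ M := (norm_nonneg _).trans (hb 0 (Nat.zero_le _) 0 (by simp))
    rcases j with _ | j
    · rw [norm_iteratedFDeriv_zero]
      refine (h0 g M (fun y hy => ?_) x).trans ?_
      · simpa using hb 0 (Nat.zero_le _) y hy
      · have : 0 ≤ (C1 + A1 * C2 + A2 * C3) * M := by positivity
        linarith
    · rw [← norm_iteratedFDeriv_fderiv]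
      have hfd : fderiv ℝ (glue p q g) = dglue p q g (fderivWithin ℝ g (closedBall 0 1)) := by
        funext y
        exact (glue_deriv p q (nat_le_top 1) hg y).fderiv
      rw [hfd]
      have hg' := smooth_fderiv hg
      have b1 := h1 _ M hg' hb.fderiv
      have b2 := m1 _ _ (glue_contDiff (p + 1) (q + 1) hg') (h2 _ M hg' hb.fderiv)
      have hb0 : BdB i g M := fun l hl => hb l (by omega)
      have b3 := m2 _ _ (glue_contDiff (p + 1) q hg) (h3 _ M hg hb0)
      have s1 := glue_contDiff p (q + 1) hg'
      have s2 := hs1.clm_apply (glue_contDiff (p + 1) (q + 1) hg')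
      have s3 := hs2.clm_apply (glue_contDiff (p + 1) q hg)
      have key := sub_bd (s1.sub s2) s3 (sub_bd s1 s2 b1 b2) b3
      refine (key j (by omega) x hx).trans ?_
      have : 0 ≤ C0 * M := by positivity
      linarith

lemma flat_bd {E : Type} [NormedAddCommGroup E] [InnerProductSpace ℝ E]
    [FiniteDimensional ℝ E] (k : ℕ) : ∀ {F : Type} [NormedAddCommGroup F] [NormedSpace ℝ F]
    {g : E → F}, ContDiffOn ℝ (⊤ : ℕ∞) g (closedBall 0 1) →
    (∀ i : ℕ, iteratedFDerivWithin ℝ i g (closedBall 0 1) 0 = 0) →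
    ∃ C : ℝ, ∀ y ∈ closedBall (0 : E) 1, ‖g y‖ ≤ C * ‖y‖ ^ k := by
  induction k with
  | zero =>
    intro F _ _ g hg _
    simpa using bdd_of_cont hg.continuousOn
  | succ k ih =>
    intro F _ _ g hg h0
    obtain ⟨C, hC⟩ := ih (smooth_fderiv hg) (fun i => by
      rw [← norm_eq_zero, norm_iteratedFDerivWithin_fderivWithin uniq (by simp), h0, norm_zero])
    refine ⟨C, fun y hy => ?_⟩
    rw [mem_closedBall_zero_iff] at hy
    have hg0 : g 0 = 0 := by
      have := h0 0
      rw [← norm_eq_zero, norm_iteratedFDerivWithin_zero, norm_eq_zero] at this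
      exact this
    have hsub : closedBall (0 : E) ‖y‖ ⊆ closedBall 0 1 := closedBall_subset_closedBall hy
    by_cases hy0 : y = 0
    · simp [hy0, hg0]
    have hyp : 0 < ‖y‖ := norm_pos_iff.mpr hy0
    have hC0 : 0 ≤ C := by
      have := (norm_nonneg _).trans (hC y (by simpa using hy))
      exact nonneg_of_mul_nonneg_left this (by positivity)
    have hd := hg.differentiableOn (by simp)
    have := Convex.norm_image_sub_le_of_norm_hasFDerivWithin_le (𝕜 := ℝ) (f := g)
      (f' := fderivWithin ℝ g (closedBall 0 1)) (C := C * ‖y‖ ^ k) (s := closedBall (0 : E) ‖y‖)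
      (x := 0) (y := y)
      (fun x hx => ((hd x (hsub hx)).hasFDerivWithinAt).mono hsub)
      (fun x hx => (hC x (hsub hx)).trans (by
        rw [mem_closedBall_zero_iff] at hx
        gcongr))
      (convex_closedBall _ _) (by simp) (by simp)
    rw [hg0, sub_zero, sub_zero] at this
    rw [pow_succ, ← mul_assoc]
    exact this

lemma flat_bd' {E : Type} [NormedAddCommGroup E] [InnerProductSpace ℝ E]
    [FiniteDimensional ℝ E] (k i : ℕ) : ∀ {F : Type} [NormedAddCommGroup F] [NormedSpace ℝ F]
    {g : E → F}, ContDiffOn ℝ (⊤ : ℕ∞) g (closedBall 0 1) →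
    (∀ i : ℕ, iteratedFDerivWithin ℝ i g (closedBall 0 1) 0 = 0) →
    ∃ C : ℝ, ∀ y ∈ closedBall (0 : E) 1,
      ‖iteratedFDerivWithin ℝ i g (closedBall 0 1) y‖ ≤ C * ‖y‖ ^ k := by
  induction i with
  | zero =>
    intro F _ _ g hg h0
    simpa using flat_bd k hg h0
  | succ i ih =>
    intro F _ _ g hg h0
    obtain ⟨C, hC⟩ := ih (smooth_fderiv hg) (fun i => by
      rw [← norm_eq_zero, norm_iteratedFDerivWithin_fderivWithin uniq (by simp), h0, norm_zero])
    refine ⟨C, fun y hy => ?_⟩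
    rw [← norm_iteratedFDerivWithin_fderivWithin uniq hy]
    exact hC y hy

lemma ballNorm_bddAbove {m : ℕ} (n k : ℕ) {f : EuclideanSpace ℝ (Fin m) → ℂ}
    (hf : FlatSmoothOnBall m f) :
    BddAbove (range fun p : (closedBall (0 : EuclideanSpace ℝ (Fin m)) 1 \ {0} :
      Set (EuclideanSpace ℝ (Fin m))) × Fin (n + 1) =>
    ‖(p.1 : EuclideanSpace ℝ (Fin m))‖ ^ (-(k : ℤ)) *
      ‖iteratedFDerivWithin ℝ p.2 f (closedBall 0 1) p.1‖) := by
  choose C hC using fun i => flat_bd' k i hf.1 hf.2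
  refine ⟨∑ i ∈ Finset.range (n + 1), |C i|, ?_⟩
  rintro _ ⟨⟨⟨y, hy⟩, i⟩, rfl⟩
  have hy0 : 0 < ‖y‖ := norm_pos_iff.mpr hy.2
  have h1 := hC i y hy.1
  have h2 : |C i| ≤ ∑ i ∈ Finset.range (n + 1), |C i| :=
    Finset.single_le_sum (f := fun i => |C i|) (fun _ _ => abs_nonneg _)
      (Finset.mem_range.mpr i.2)
  refine le_trans ?_ h2
  simp only [zpow_neg, zpow_natCast]
  rw [inv_mul_le_iff₀ (by positivity)]
  refine h1.trans ?_
  rw [mul_comm]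
  gcongr
  exact le_abs_self _

lemma le_ballNorm {m : ℕ} (n k : ℕ) {f : EuclideanSpace ℝ (Fin m) → ℂ}
    (hf : FlatSmoothOnBall m f) {j : ℕ} (hj : j ≤ n) {y : EuclideanSpace ℝ (Fin m)}
    (hy : y ∈ closedBall (0 : EuclideanSpace ℝ (Fin m)) 1) (hy0 : y ≠ 0) :
    ‖y‖ ^ (-(k : ℤ)) * ‖iteratedFDerivWithin ℝ j f (closedBall 0 1) y‖ ≤ flatBallNorm m n k f := by
  have hy' : y ∈ (closedBall (0 : EuclideanSpace ℝ (Fin m)) 1 \ {0} :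
      Set (EuclideanSpace ℝ (Fin m))) := ⟨hy, hy0⟩
  have h := ballNorm_bddAbove n k hf
  unfold flatBallNorm
  exact le_ciSup h (⟨y, hy'⟩, (⟨j, Nat.lt_succ_of_le hj⟩ : Fin (n + 1)))

lemma ballNorm_nonneg {m : ℕ} (n k : ℕ) (f : EuclideanSpace ℝ (Fin m) → ℂ) :
    0 ≤ flatBallNorm m n k f :=
  Real.iSup_nonneg fun _ => mul_nonneg (zpow_nonneg (norm_nonneg _) _) (norm_nonneg _)

lemma one_le_zpow_neg {r : ℝ} (h0 : 0 < r) (h1 : r ≤ 1) (k : ℕ) : 1 ≤ r ^ (-(k : ℤ)) := by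
  rw [zpow_neg, zpow_natCast]
  exact (one_le_inv₀ (by positivity)).mpr (pow_le_one₀ h0.le h1)

lemma BdB_ballNorm {m : ℕ} (n k : ℕ) {f : EuclideanSpace ℝ (Fin m) → ℂ}
    (hf : FlatSmoothOnBall m f) : BdB n f (flatBallNorm m n k f) := by
  intro j hj y hy
  by_cases hy0 : y = 0
  · rw [hy0, hf.2, norm_zero]
    exact ballNorm_nonneg _ _ _
  · refine le_trans ?_ (le_ballNorm n k hf hj hy hy0)
    refine le_mul_of_one_le_left (norm_nonneg _) ?_
    exact one_le_zpow_neg (norm_pos_iff.mpr hy0) (by simpa using hy) k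

/-- functions bounded on the closed unit ball -/
def bddSub (E : Type) [NormedAddCommGroup E] : Submodule ℂ (E → ℂ) where
  carrier := {f | ∃ M : ℝ, ∀ y ∈ closedBall (0 : E) 1, ‖f y‖ ≤ M}
  zero_mem' := ⟨0, by simp⟩
  add_mem' := by
    rintro f g ⟨M, hM⟩ ⟨N, hN⟩
    exact ⟨M + N, fun y hy => (norm_add_le _ _).trans (add_le_add (hM y hy) (hN y hy))⟩
  smul_mem' := by
    rintro c f ⟨M, hM⟩
    refine ⟨‖c‖ * M, fun y hy => ?_⟩
    simp only [Pi.smul_apply, norm_smul]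
    exact mul_le_mul_of_nonneg_left (hM y hy) (norm_nonneg _)

noncomputable def bump (E : Type) [NormedAddCommGroup E] : ContDiffBump (0 : E) :=
  ⟨1, 2, by norm_num, by norm_num⟩

noncomputable def eps0 (E : Type) [NormedAddCommGroup E] [InnerProductSpace ℝ E]
    [FiniteDimensional ℝ E] : bddSub E →ₗ[ℂ] (E → ℂ) where
  toFun f := fun x => (bump E x : ℝ) • glue 0 0 (f : E → ℂ) x
  map_add' := by
    rintro ⟨f, M, hM⟩ ⟨g, N, hN⟩
    funext x
    simp only [Pi.add_apply, ← smul_add]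
    congr 1
    unfold glue
    by_cases h : ‖x‖ ≤ 1
    · simp [h]
    · simp only [if_neg h]
      have hx : 1 ≤ ‖x‖ := by linarith
      rw [← (term_summable 0 0 f hM hx).tsum_add (term_summable 0 0 g hN hx)]
      refine tsum_congr fun j => ?_
      simp [term]
  map_smul' := by
    rintro c ⟨f, M, hM⟩
    funext x
    simp only [Pi.smul_apply, RingHom.id_apply]
    rw [smul_comm c]
    congr 1
    unfold glue
    by_cases h : ‖x‖ ≤ 1
    · simp [h]
    · simp only [if_neg h]
      rw [← tsum_const_smul'' c]
      refine tsum_congr fun j => ?_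
      simp [term]
      ring

end Seeley

open Seeley

/-- there is a linear extension operator
`ε : C^∞₀(B̄_1, ℂ) → S₀(ℝ^m)`: for each smooth `f` on `B̄_1` flat at the origin, `ε f`
is a smooth compactly supported (hence Schwartz) function, flat at the origin,
extending `f`, and satisfying `⟨ε f⟩_{n,k} ≤ C(n,k) ⟨f⟩_{n,k,1}`. -/
theorem extension_operator (m : ℕ) (hm : 1 ≤ m) :
    ∃ ε : (EuclideanSpace ℝ (Fin m) → ℂ) →ₗ[ℂ] (EuclideanSpace ℝ (Fin m) → ℂ),
      (∀ f, FlatSmoothOnBall m f →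
        ContDiff ℝ (⊤ : ℕ∞) (ε f) ∧
        HasCompactSupport (ε f) ∧
        (∀ i : ℕ, iteratedFDeriv ℝ i (ε f) 0 = 0) ∧
        EqOn (ε f) f (closedBall 0 1)) ∧
      ∀ n k : ℕ, ∃ C > (0 : ℝ), ∀ f, FlatSmoothOnBall m f →
        flatGlobalNorm m n k (ε f) ≤ C * flatBallNorm m n k f := by
  obtain ⟨ε, hε⟩ := LinearMap.exists_extend (eps0 (EuclideanSpace ℝ (Fin m)))
  have hval : ∀ f, FlatSmoothOnBall m f →
      ε f = fun x => (bump (EuclideanSpace ℝ (Fin m)) x : ℝ) • glue 0 0 f x := by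
    intro f hf
    exact LinearMap.congr_fun hε ⟨f, bdd_of_cont hf.1.continuousOn⟩
  have hsm : ∀ f, FlatSmoothOnBall m f → ContDiff ℝ (⊤ : ℕ∞) (ε f) := by
    intro f hf
    rw [hval f hf]
    exact (bump _).contDiff.smul (glue_contDiff 0 0 hf.1)
  have heq : ∀ f, FlatSmoothOnBall m f → EqOn (ε f) f (closedBall 0 1) := by
    intro f hf x hx
    rw [hval f hf]
    have h1 : (bump (EuclideanSpace ℝ (Fin m)) x : ℝ) = 1 :=
      (bump _).one_of_mem_closedBall (by simpa [bump] using hx)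
    simp only [h1, one_smul]
    unfold glue
    rw [if_pos (by simpa using hx), if_pos rfl]
  have hder : ∀ f, FlatSmoothOnBall m f → ∀ i : ℕ, ∀ x ∈ closedBall (0 : EuclideanSpace ℝ (Fin m)) 1,
      iteratedFDeriv ℝ i (ε f) x = iteratedFDerivWithin ℝ i f (closedBall 0 1) x := by
    intro f hf i x hx
    rw [← iteratedFDerivWithin_eq_iteratedFDeriv uniq
      ((hsm f hf).contDiffAt.of_le (nat_le_top i)) hx]
    exact iteratedFDerivWithin_congr (heq f hf) hx i
  have hsup : ∀ f, FlatSmoothOnBall m f →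
      tsupport (ε f) ⊆ closedBall (0 : EuclideanSpace ℝ (Fin m)) 2 := by
    intro f hf
    refine closure_minimal ?_ isClosed_closedBall
    intro x hx
    by_contra hx2
    apply hx
    rw [hval f hf]
    have h0 : (bump (EuclideanSpace ℝ (Fin m)) x : ℝ) = 0 := by
      refine (bump _).zero_of_le_dist ?_
      rw [mem_closedBall, not_le] at hx2
      exact hx2.le
    simp [h0]
  refine ⟨ε, fun f hf => ⟨hsm f hf, ?_, ?_, heq f hf⟩, ?_⟩
  · exact HasCompactSupport.of_support_subset_isCompact (isCompact_closedBall 0 2)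
      ((subset_tsupport _).trans (hsup f hf))
  · intro i
    rw [hder f hf i 0 (by simp), hf.2]
  · intro n k
    obtain ⟨C1, hC1, h1⟩ := glue_bd (E := EuclideanSpace ℝ (Fin m)) n ℂ 0 0
    have hs : ContDiff ℝ (⊤ : ℕ∞) (fun x : EuclideanSpace ℝ (Fin m) =>
        (bump (EuclideanSpace ℝ (Fin m)) x : ℝ) • ContinuousLinearMap.id ℝ ℂ) :=
      (bump _).contDiff.smul contDiff_const
    obtain ⟨A, hA, h2⟩ := mul_bd hs n
    refine ⟨A * C1 + 1, by positivity, fun f hf => ?_⟩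
    have hM := ballNorm_nonneg n k f
    have hAC : 0 ≤ A * C1 * flatBallNorm m n k f := by positivity
    refine Real.iSup_le ?_ (by positivity)
    rintro ⟨⟨x, hx0⟩, ⟨j, hj⟩, ⟨l, hl⟩⟩
    have hx0' : 0 < ‖x‖ := norm_pos_iff.mpr hx0
    show ‖x‖ ^ (-(l : ℤ)) * ‖iteratedFDeriv ℝ j (ε f) x‖ ≤ _
    by_cases hx1 : ‖x‖ ≤ 1
    · have hx1' : x ∈ closedBall (0 : EuclideanSpace ℝ (Fin m)) 1 := by simpa using hx1
      rw [hder f hf j x hx1']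
      have h3 := le_ballNorm n k hf (show j ≤ n by omega) hx1' hx0
      have h4 : ‖x‖ ^ (-(l : ℤ)) ≤ ‖x‖ ^ (-(k : ℤ)) :=
        zpow_le_zpow_right_of_le_one₀ hx0' hx1 (by omega)
      calc _ ≤ ‖x‖ ^ (-(k : ℤ)) * ‖iteratedFDerivWithin ℝ j f (closedBall 0 1) x‖ := by gcongr
        _ ≤ flatBallNorm m n k f := h3
        _ ≤ _ := by linarith
    · have hle : ‖x‖ ^ (-(l : ℤ)) ≤ 1 := by
        rw [zpow_neg, zpow_natCast]
        exact inv_le_one_of_one_le₀ (one_le_pow₀ (by linarith))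
      have hb : ‖iteratedFDeriv ℝ j (ε f) x‖ ≤ A * C1 * flatBallNorm m n k f := by
        by_cases hx2 : ‖x‖ ≤ 2
        · have := h2 _ _ (glue_contDiff 0 0 hf.1) (h1 f _ hf.1 (BdB_ballNorm n k hf)) j
            (by omega) x hx2
          rw [hval f hf, mul_assoc]
          exact this
        · have : iteratedFDeriv ℝ j (ε f) x = 0 := by
            by_contra hne
            have := hsup f hf (support_iteratedFDeriv_subset j hne)
            exact hx2 (by simpa using this)
          rw [this, norm_zero]
          exact hAC
      calc _ ≤ 1 * ‖iteratedFDeriv ℝ j (ε f) x‖ := by gcongr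
        _ ≤ _ := by linarith
end

section
/- Let K ∈ S(ℝ^m) be a Schwartz function and for t > 0 set K_t(x) := t^m K(t·x). Then for all n, k, l ∈ ℕ there exists a constant C = C(K, n, k, l) > 0 such that for all f ∈ S(ℝ^m) and all t ≥ 1, ‖K_t * f‖_{n+l,k} ≤ C · t^l · ‖f‖_{n,k}, where * denotes convolution. -/
open Metric Set MeasureTheory SchwartzMap

/-- The Schwartz norm `‖f‖_{n,k} = sup_x max_{|a| ≤ n, l ≤ k} |x|^l |D^a f(x)|`. -/
noncomputable def schwartzNorm (m : ℕ) (n k : ℕ)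
    (f : EuclideanSpace ℝ (Fin m) → ℂ) : ℝ :=
  ⨆ p : EuclideanSpace ℝ (Fin m) × Fin (n + 1) × Fin (k + 1),
    ‖p.1‖ ^ (p.2.2 : ℕ) * ‖iteratedFDeriv ℝ p.2.1 f p.1‖

/-- The convolution `(f * g)(x) = ∫ f(x - y) g(y) dy`. -/
noncomputable def conv (m : ℕ) (f g : EuclideanSpace ℝ (Fin m) → ℂ)
    (x : EuclideanSpace ℝ (Fin m)) : ℂ :=
  ∫ y : EuclideanSpace ℝ (Fin m), f (x - y) * g y

open LineDeriv FourierTransform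

/-- The bilinear map used for the convolution. -/
noncomputable abbrev mulB : ℂ →L[ℂ] ℂ →L[ℂ] ℂ := ContinuousLinearMap.mul ℂ ℂ

theorem lineDeriv_conv_left {m : ℕ} (v : EuclideanSpace ℝ (Fin m))
    (f g : 𝓢(EuclideanSpace ℝ (Fin m), ℂ)) :
    ∂_{v} (SchwartzMap.convolution mulB f g) = SchwartzMap.convolution mulB (∂_{v} f) g := by
  have hv : (fun x : EuclideanSpace ℝ (Fin m) => inner ℝ x v).HasTemperateGrowth := by fun_prop
  have h : 𝓕 (∂_{v} (SchwartzMap.convolution mulB f g))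
      = 𝓕 (SchwartzMap.convolution mulB (∂_{v} f) g) := by
    ext x
    simp [SchwartzMap.fourier_lineDerivOp_eq, SchwartzMap.fourier_convolution, hv]
    try ring
  simpa using congrArg (fun u => 𝓕⁻ u) h

theorem lineDeriv_conv_right {m : ℕ} (v : EuclideanSpace ℝ (Fin m))
    (f g : 𝓢(EuclideanSpace ℝ (Fin m), ℂ)) :
    ∂_{v} (SchwartzMap.convolution mulB f g) = SchwartzMap.convolution mulB f (∂_{v} g) := by
  have hv : (fun x : EuclideanSpace ℝ (Fin m) => inner ℝ x v).HasTemperateGrowth := by fun_prop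
  have h : 𝓕 (∂_{v} (SchwartzMap.convolution mulB f g))
      = 𝓕 (SchwartzMap.convolution mulB f (∂_{v} g)) := by
    ext x
    simp [SchwartzMap.fourier_lineDerivOp_eq, SchwartzMap.fourier_convolution, hv]
    try ring
  simpa using congrArg (fun u => 𝓕⁻ u) h

theorem iterated_conv_left {m : ℕ} (p : ℕ) (v : Fin p → EuclideanSpace ℝ (Fin m))
    (f g : 𝓢(EuclideanSpace ℝ (Fin m), ℂ)) :
    ∂^{v} (SchwartzMap.convolution mulB f g) = SchwartzMap.convolution mulB (∂^{v} f) g := by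
  induction p with
  | zero => rfl
  | succ p ih =>
    rw [iteratedLineDerivOp_succ_left, ih, lineDeriv_conv_left, iteratedLineDerivOp_succ_left]

theorem iterated_conv_split {m : ℕ} (p i : ℕ) (v : Fin (p + i) → EuclideanSpace ℝ (Fin m))
    (f g : 𝓢(EuclideanSpace ℝ (Fin m), ℂ)) :
    ∃ (a : Fin p → EuclideanSpace ℝ (Fin m)) (b : Fin i → EuclideanSpace ℝ (Fin m)),
      (∏ j, ‖a j‖) * (∏ j, ‖b j‖) = ∏ j, ‖v j‖ ∧
      ∂^{v} (SchwartzMap.convolution mulB f g)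
        = SchwartzMap.convolution mulB (∂^{a} f) (∂^{b} g) := by
  induction i with
  | zero => exact ⟨v, Fin.elim0, by simp, iterated_conv_left p v f g⟩
  | succ i ih =>
    obtain ⟨a, b, h1, h2⟩ := ih (Fin.tail (n := p + i) v)
    refine ⟨a, Fin.cons (v 0) b, ?_, ?_⟩
    · have h3 : ∏ j, ‖v j‖ = ‖v 0‖ * ∏ j, ‖Fin.tail (n := p + i) v j‖ :=
        Fin.prod_univ_succ (n := p + i) (fun j => ‖v j‖)
      rw [Fin.prod_univ_succ, h3, ← h1]
      simp only [Fin.cons_zero, Fin.cons_succ]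
      ring
    · have := iteratedLineDerivOp_succ_left (n := p + i) v (SchwartzMap.convolution mulB f g)
      refine this.trans ?_
      rw [h2, lineDeriv_conv_right, iteratedLineDerivOp_succ_left]
      simp

/-- The dilated kernel as a Schwartz function. -/
theorem exists_dilate {m : ℕ} (K : 𝓢(EuclideanSpace ℝ (Fin m), ℂ)) (t : ℝ) (ht : t ≠ 0) :
    ∃ G : 𝓢(EuclideanSpace ℝ (Fin m), ℂ), ∀ x, G x = (t : ℂ) ^ m * K (t • x) :=
  ⟨((t : ℂ) ^ m) • SchwartzMap.compCLMOfContinuousLinearEquiv ℂ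
    (ContinuousLinearEquiv.smulLeft (Units.mk0 t ht)) K, fun x => by
      simp [Units.smul_def]⟩

theorem one_add_pow_integrable {m : ℕ} (K : 𝓢(EuclideanSpace ℝ (Fin m), ℂ)) (k i : ℕ) :
    Integrable (fun w : EuclideanSpace ℝ (Fin m) => (1 + ‖w‖) ^ k * ‖iteratedFDeriv ℝ i K w‖) := by
  have h : ∀ w : EuclideanSpace ℝ (Fin m), (1 + ‖w‖) ^ k * ‖iteratedFDeriv ℝ i K w‖
      = ∑ j ∈ Finset.range (k + 1), (k.choose j : ℝ) * (‖w‖ ^ j * ‖iteratedFDeriv ℝ i K w‖) := by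
    intro w
    rw [add_comm, add_pow, Finset.sum_mul]
    refine Finset.sum_congr rfl fun j _ => ?_
    simp; ring
  simp_rw [h]
  exact integrable_finsetSum _ fun j _ =>
    (SchwartzMap.integrable_pow_mul_iteratedFDeriv volume K j i).const_mul _

theorem schwartzNorm_le {m n k : ℕ} (f : 𝓢(EuclideanSpace ℝ (Fin m), ℂ)) {p q : ℕ}
    (hp : p ≤ n) (hq : q ≤ k) (y : EuclideanSpace ℝ (Fin m)) :
    ‖y‖ ^ q * ‖iteratedFDeriv ℝ p f y‖ ≤ schwartzNorm m n k f := by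
  refine le_ciSup (f := fun p : EuclideanSpace ℝ (Fin m) × Fin (n + 1) × Fin (k + 1) =>
    ‖p.1‖ ^ (p.2.2 : ℕ) * ‖iteratedFDeriv ℝ p.2.1 f p.1‖) ?_
    (y, ⟨p, by omega⟩, ⟨q, by omega⟩)
  refine ⟨∑ a : Fin (n + 1), ∑ b : Fin (k + 1), SchwartzMap.seminorm ℝ b a f, ?_⟩
  rintro _ ⟨⟨y, a, b⟩, rfl⟩
  refine (SchwartzMap.le_seminorm ℝ b a f y).trans ?_
  refine le_trans ?_ (Finset.single_le_sum (f := fun a : Fin (n + 1) =>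
    ∑ b : Fin (k + 1), SchwartzMap.seminorm ℝ b a f) (fun _ _ => Finset.sum_nonneg fun _ _ =>
      apply_nonneg _ _) (Finset.mem_univ a))
  exact Finset.single_le_sum (f := fun b : Fin (k + 1) => SchwartzMap.seminorm ℝ b a f)
    (fun _ _ => apply_nonneg _ _) (Finset.mem_univ b)

theorem schwartzNorm_nonneg (m n k : ℕ) (f : EuclideanSpace ℝ (Fin m) → ℂ) :
    0 ≤ schwartzNorm m n k f :=
  Real.iSup_nonneg fun _ => by positivity

theorem one_add_pow_bound {m n k : ℕ} (f : 𝓢(EuclideanSpace ℝ (Fin m), ℂ)) {p q : ℕ}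
    (hp : p ≤ n) (hq : q ≤ k) (y : EuclideanSpace ℝ (Fin m)) :
    (1 + ‖y‖) ^ q * ‖iteratedFDeriv ℝ p f y‖ ≤ 2 ^ k * schwartzNorm m n k f := by
  have hN := schwartzNorm_nonneg m n k f
  have h0 := schwartzNorm_le f hp (Nat.zero_le k) y
  have h1 := schwartzNorm_le f hp hq y
  have h2 : (2 : ℝ) ^ q ≤ 2 ^ k := pow_le_pow_right₀ (by norm_num) hq
  have h3 := norm_nonneg (iteratedFDeriv ℝ p f y)
  rcases le_total ‖y‖ 1 with h | h
  · calc _ ≤ 2 ^ q * ‖iteratedFDeriv ℝ p f y‖ := by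
          gcongr; linarith
      _ ≤ 2 ^ k * schwartzNorm m n k f := by
          gcongr; simpa using h0
  · calc _ ≤ (2 * ‖y‖) ^ q * ‖iteratedFDeriv ℝ p f y‖ := by
          gcongr; linarith
      _ = 2 ^ q * (‖y‖ ^ q * ‖iteratedFDeriv ℝ p f y‖) := by rw [mul_pow]; ring
      _ ≤ 2 ^ k * schwartzNorm m n k f := by gcongr

theorem pointwise_conv_bound {m : ℕ} (F G : 𝓢(EuclideanSpace ℝ (Fin m), ℂ)) (q : ℕ) (A : ℝ)
    (hF : ∀ y, (1 + ‖y‖) ^ q * ‖F y‖ ≤ A) (H : EuclideanSpace ℝ (Fin m) → ℝ)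
    (hH : Integrable H) (hG : ∀ z, (1 + ‖z‖) ^ q * ‖G z‖ ≤ H z)
    (x : EuclideanSpace ℝ (Fin m)) :
    ‖x‖ ^ q * ‖SchwartzMap.convolution mulB F G x‖ ≤ A * ∫ z, H z := by
  have hA : 0 ≤ A := le_trans (by positivity) (hF 0)
  rw [SchwartzMap.convolution_apply, MeasureTheory.convolution_def]
  have e : ‖x‖ ^ q * ‖∫ y, mulB (F y) (G (x - y))‖
      = ‖∫ y, ((‖x‖ ^ q : ℝ) : ℂ) * (F y * G (x - y))‖ := by
    rw [integral_const_mul, norm_mul]; simp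
  rw [e, ← integral_sub_left_eq_self H volume x, ← integral_const_mul]
  refine norm_integral_le_of_norm_le ((hH.comp_sub_left x).const_mul A) ?_
  refine Filter.Eventually.of_forall fun y => ?_
  have h1 : ‖x‖ ≤ (1 + ‖y‖) * (1 + ‖x - y‖) := by
    have : ‖x‖ ≤ ‖y‖ + ‖x - y‖ := by
      simpa using norm_add_le y (x - y)
    nlinarith [norm_nonneg y, norm_nonneg (x - y)]
  calc ‖((‖x‖ ^ q : ℝ) : ℂ) * (F y * G (x - y))‖
      = ‖x‖ ^ q * (‖F y‖ * ‖G (x - y)‖) := by simp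
    _ ≤ ((1 + ‖y‖) * (1 + ‖x - y‖)) ^ q * (‖F y‖ * ‖G (x - y)‖) := by gcongr
    _ = ((1 + ‖y‖) ^ q * ‖F y‖) * ((1 + ‖x - y‖) ^ q * ‖G (x - y)‖) := by rw [mul_pow]; ring
    _ ≤ A * H (x - y) := by
      gcongr
      · exact hF y
      · exact hG _

theorem deriv_bound {m : ℕ} (K : 𝓢(EuclideanSpace ℝ (Fin m), ℂ)) (n k p i q : ℕ)
    (hp : p ≤ n) (hq : q ≤ k) (f G : 𝓢(EuclideanSpace ℝ (Fin m), ℂ)) (t : ℝ) (ht : 1 ≤ t)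
    (hG : ∀ x, G x = (t : ℂ) ^ m * K (t • x)) (x : EuclideanSpace ℝ (Fin m)) :
    ‖x‖ ^ q * ‖iteratedFDeriv ℝ (p + i) (SchwartzMap.convolution mulB f G) x‖
      ≤ 2 ^ k * (∫ w, (1 + ‖w‖) ^ k * ‖iteratedFDeriv ℝ i K w‖) * t ^ i * schwartzNorm m n k f := by
  have ht0 : 0 < t := by linarith
  set M := ∫ w, (1 + ‖w‖) ^ k * ‖iteratedFDeriv ℝ i K w‖ with hM
  have hM0 : 0 ≤ M := integral_nonneg fun w => by positivity
  have hN := schwartzNorm_nonneg m n k f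
  rcases eq_or_ne (‖x‖ ^ q) 0 with h0 | h0
  · rw [h0, zero_mul]; positivity
  have hxq : 0 < ‖x‖ ^ q := lt_of_le_of_ne (by positivity) h0.symm
  rw [← le_div_iff₀' hxq]
  refine ContinuousMultilinearMap.opNorm_le_bound (by positivity) fun v => ?_
  rw [div_mul_eq_mul_div, le_div_iff₀' hxq, ← SchwartzMap.iteratedLineDerivOp_eq_iteratedFDeriv]
  obtain ⟨a, b, hab, hc⟩ := iterated_conv_split p i v f G
  rw [hc]
  have hK : Integrable (fun z : EuclideanSpace ℝ (Fin m) =>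
      (1 + ‖t • z‖) ^ k * ‖iteratedFDeriv ℝ i K (t • z)‖) :=
    (integrable_comp_smul_iff volume (fun w : EuclideanSpace ℝ (Fin m) =>
      (1 + ‖w‖) ^ k * ‖iteratedFDeriv ℝ i K w‖) ht0.ne').2 (one_add_pow_integrable K k i)
  have hGd : ∀ z, ‖iteratedFDeriv ℝ i G z‖ = t ^ m * (t ^ i * ‖iteratedFDeriv ℝ i K (t • z)‖) := by
    intro z
    have e : (G : EuclideanSpace ℝ (Fin m) → ℂ)
        = ((t : ℂ) ^ m) • (fun x => K (t • x)) := by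
      ext x; simp [hG]
    have hs : ContDiff ℝ i (K : EuclideanSpace ℝ (Fin m) → ℂ) := K.smooth i
    rw [e, iteratedFDeriv_const_smul_apply (by
      exact (hs.comp (contDiff_const_smul t)).contDiffAt), iteratedFDeriv_comp_const_smul t hs]
    simp [norm_smul, abs_of_pos ht0]
  have main := pointwise_conv_bound (∂^{a} f) (∂^{b} G) q
    (2 ^ k * schwartzNorm m n k f * ∏ j, ‖a j‖) ?_
    (fun z => (t ^ m * t ^ i * ∏ j, ‖b j‖) *
      ((1 + ‖t • z‖) ^ k * ‖iteratedFDeriv ℝ i K (t • z)‖)) (hK.const_mul _) ?_ x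
  · refine main.trans (le_of_eq ?_)
    rw [integral_const_mul, Measure.integral_comp_smul_of_nonneg volume
      (fun w : EuclideanSpace ℝ (Fin m) =>
      (1 + ‖w‖) ^ k * ‖iteratedFDeriv ℝ i K w‖) t (hR := ht0.le), ← hM, ← hab]
    simp only [finrank_euclideanSpace, Fintype.card_fin, smul_eq_mul]
    field_simp
  · intro y
    rw [SchwartzMap.iteratedLineDerivOp_eq_iteratedFDeriv]
    calc _ ≤ (1 + ‖y‖) ^ q * (‖iteratedFDeriv ℝ p f y‖ * ∏ j, ‖a j‖) := by
          gcongr; exact ContinuousMultilinearMap.le_opNorm _ _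
      _ = ((1 + ‖y‖) ^ q * ‖iteratedFDeriv ℝ p f y‖) * ∏ j, ‖a j‖ := by ring
      _ ≤ _ := by
          exact mul_le_mul_of_nonneg_right (one_add_pow_bound f hp hq y)
            (Finset.prod_nonneg fun _ _ => norm_nonneg _)
  · intro z
    rw [SchwartzMap.iteratedLineDerivOp_eq_iteratedFDeriv]
    have hz : ‖z‖ ≤ ‖t • z‖ := by
      rw [norm_smul, Real.norm_of_nonneg ht0.le]
      nlinarith [norm_nonneg z]
    have hpow : (1 + ‖z‖) ^ q ≤ (1 + ‖t • z‖) ^ k :=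
      (pow_le_pow_left₀ (by positivity) (by linarith) q).trans
        (pow_le_pow_right₀ (by linarith [norm_nonneg (t • z)]) hq)
    calc _ ≤ (1 + ‖t • z‖) ^ k * (‖iteratedFDeriv ℝ i G z‖ * ∏ j, ‖b j‖) := by
          gcongr; exact ContinuousMultilinearMap.le_opNorm _ _
      _ = _ := by rw [hGd]; ring

/-- for a Schwartz function `K`, with `K_t(x) := t^m K(t x)`, for all
`n, k, l` there is `C = C(K,n,k,l) > 0` such that for every Schwartz `f` and `t ≥ 1`,
`‖K_t * f‖_{n+l,k} ≤ C t^l ‖f‖_{n,k}`. -/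
theorem smoothing_convolution_estimate (m : ℕ) (hm : 1 ≤ m)
    (K : 𝓢(EuclideanSpace ℝ (Fin m), ℂ)) (n k l : ℕ) :
    ∃ C > (0 : ℝ), ∀ (f : 𝓢(EuclideanSpace ℝ (Fin m), ℂ)) (t : ℝ), 1 ≤ t →
      schwartzNorm m (n + l) k
          (conv m (fun x => (t : ℂ) ^ m * K (t • x)) (⇑f))
        ≤ C * t ^ l * schwartzNorm m n k (⇑f) := by
  have hM0 : ∀ i, 0 ≤ ∫ w, (1 + ‖w‖) ^ k * ‖iteratedFDeriv ℝ i K w‖ :=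
    fun i => integral_nonneg fun w => by positivity
  have hS0 : 0 ≤ ∑ i ∈ Finset.range (l + 1), ∫ w, (1 + ‖w‖) ^ k * ‖iteratedFDeriv ℝ i K w‖ :=
    Finset.sum_nonneg fun i _ => hM0 i
  refine ⟨2 ^ k * (∑ i ∈ Finset.range (l + 1),
    ∫ w, (1 + ‖w‖) ^ k * ‖iteratedFDeriv ℝ i K w‖) + 1, by positivity, fun f t ht => ?_⟩
  obtain ⟨G, hG⟩ := exists_dilate K t (by linarith)
  have hN := schwartzNorm_nonneg m n k f
  have hc : conv m (fun x => (t : ℂ) ^ m * K (t • x)) f = SchwartzMap.convolution mulB f G := by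
    ext x
    rw [SchwartzMap.convolution_apply, MeasureTheory.convolution_def, conv]
    refine integral_congr_ae (Filter.Eventually.of_forall fun y => ?_)
    simp only [hG, ContinuousLinearMap.mul_apply']
    ring
  rw [hc]
  refine ciSup_le ?_
  rintro ⟨x, j, q⟩
  obtain ⟨p, i, hp, hi, hj⟩ : ∃ p i, p ≤ n ∧ i ≤ l ∧ (j : ℕ) = p + i :=
    ⟨min (j : ℕ) n, (j : ℕ) - min (j : ℕ) n, by omega, by omega, by omega⟩
  change ‖x‖ ^ (q : ℕ) * ‖iteratedFDeriv ℝ (j : ℕ) _ x‖ ≤ _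
  rw [hj]
  refine (deriv_bound K n k p i q hp (by omega) f G t ht hG x).trans ?_
  have h1 : (∫ w, (1 + ‖w‖) ^ k * ‖iteratedFDeriv ℝ i K w‖) ≤
      ∑ i ∈ Finset.range (l + 1), ∫ w, (1 + ‖w‖) ^ k * ‖iteratedFDeriv ℝ i K w‖ :=
    Finset.single_le_sum (f := fun i => ∫ w, (1 + ‖w‖) ^ k * ‖iteratedFDeriv ℝ i K w‖)
      (fun i _ => hM0 i) (Finset.mem_range.2 (by omega))
  have h2 : t ^ i ≤ t ^ l := pow_le_pow_right₀ ht hi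
  have h3 : 2 ^ k * (∫ w, (1 + ‖w‖) ^ k * ‖iteratedFDeriv ℝ i K w‖) ≤
      2 ^ k * (∑ i ∈ Finset.range (l + 1),
        ∫ w, (1 + ‖w‖) ^ k * ‖iteratedFDeriv ℝ i K w‖) + 1 := by
    have := mul_le_mul_of_nonneg_left h1 (by positivity : (0 : ℝ) ≤ 2 ^ k)
    linarith
  gcongr
end

section
/- Let V, W : B̄_r → ℝ^m be smooth vector fields on the closed ball B̄_r ⊂ ℝ^m, both flat at the origin, and let [V,W] := (DW)·V − (DV)·W denote their Lie bracket. Then for all n, k, l ∈ ℕ there exists a constant C = C(n,k,l,r) > 0, depending continuously on r, such that ⟨[V,W]⟩_{n,k+l,r} ≤ C · ( ⟨V⟩_{0,k,r} · ⟨W⟩_{n+1,l,r} + ⟨V⟩_{n+1,k,r} · ⟨W⟩_{0,l,r} ). Moreover, the same inequality with l = 0 holds when W is an arbitrary smooth vector field on B̄_r (not necessarily flat), with ⟨W⟩_{·,0,r} the usual C^n norm. -/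
open Metric Set

/-- The weighted norm `⟨V⟩_{n,k,r}` on vector fields on the closed ball that are flat
at the origin (weight `k = 0` recovers the usual `C^n` norm). -/
noncomputable def flatVNorm (m : ℕ) (r : ℝ) (n k : ℕ)
    (V : EuclideanSpace ℝ (Fin m) → EuclideanSpace ℝ (Fin m)) : ℝ :=
  ⨆ p : (closedBall (0 : EuclideanSpace ℝ (Fin m)) r \ {0} :
      Set (EuclideanSpace ℝ (Fin m))) × Fin (n + 1),
    ‖(p.1 : EuclideanSpace ℝ (Fin m))‖ ^ (-(k : ℤ)) *
      ‖iteratedFDerivWithin ℝ p.2 V (closedBall 0 r) p.1‖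

/-- A smooth vector field on the closed ball. -/
def SmoothVF (m : ℕ) (r : ℝ)
    (V : EuclideanSpace ℝ (Fin m) → EuclideanSpace ℝ (Fin m)) : Prop :=
  ContDiffOn ℝ (⊤ : ℕ∞) V (closedBall 0 r)

/-- A vector field flat at the origin. -/
def FlatVF (m : ℕ) (r : ℝ)
    (V : EuclideanSpace ℝ (Fin m) → EuclideanSpace ℝ (Fin m)) : Prop :=
  ∀ i : ℕ, iteratedFDerivWithin ℝ i V (closedBall 0 r) 0 = 0

/-- The Lie bracket `[V,W] = (DW)·V − (DV)·W` of vector fields on the closed ball. -/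
noncomputable def lieBracket (m : ℕ) (r : ℝ)
    (V W : EuclideanSpace ℝ (Fin m) → EuclideanSpace ℝ (Fin m))
    (x : EuclideanSpace ℝ (Fin m)) : EuclideanSpace ℝ (Fin m) :=
  fderivWithin ℝ W (closedBall 0 r) x (V x) -
    fderivWithin ℝ V (closedBall 0 r) x (W x)

def Interp (C : ℝ) (b : ℕ → ℝ) : Prop :=
  (∀ i, 0 ≤ b i) ∧ ∀ i, ∀ h : ℝ, 0 < h → h ≤ 1 → b (i+1) ≤ C * (b i / h + h * b (i+2))

theorem interp_one (j : ℕ) : ∃ D : ℝ → ℝ, Continuous D ∧ ∀ C, 1 ≤ C → 1 ≤ D C ∧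
    ∀ b, Interp C b → ∀ h : ℝ, 0 < h → h ≤ 1 → b j ≤ D C * (b 0 / h ^ j + h * b (j+1)) := by
  induction j with
  | zero =>
    refine ⟨fun _ => 1, continuous_const, fun C hC => ⟨le_rfl, fun b hb h h0 h1 => ?_⟩⟩
    have := mul_nonneg h0.le (hb.1 1)
    simp; linarith
  | succ j ih =>
    obtain ⟨D, hD, H⟩ := ih
    refine ⟨fun C => (2 * C * D C) ^ (j+1), by fun_prop, fun C hC => ?_⟩
    obtain ⟨hD1, H⟩ := H C hC
    have hCD : 1 ≤ C * D C := by nlinarith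
    have hq : 1 ≤ 2 * C * D C := by nlinarith
    have hp : 1 ≤ (2 * C * D C) ^ j := one_le_pow₀ hq
    refine ⟨one_le_pow₀ hq, fun b hb h h0 h1 => ?_⟩
    have hq0 : 0 < 2 * C * D C := by linarith
    have hη : h / (2 * C * D C) ≤ 1 := by rw [div_le_one hq0]; linarith
    have e1 := H b hb (h / (2 * C * D C)) (by positivity) hη
    have e2 := hb.2 j h h0 h1
    have e3 : C * (b j / h) ≤ C * ((D C * (b 0 / (h / (2 * C * D C)) ^ j +
        h / (2 * C * D C) * b (j+1))) / h) := by gcongr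
    have hD0 : 0 < D C := by linarith
    have hC0 : 0 < C := by linarith
    have e4 : C * ((D C * (b 0 / (h / (2 * C * D C)) ^ j +
        h / (2 * C * D C) * b (j+1))) / h) =
        (2 * C * D C) ^ (j+1) / 2 * (b 0 / h ^ (j+1)) + b (j+1) / 2 := by
      rw [div_pow, pow_succ, pow_succ]
      generalize hP : (2 * C * D C) ^ j = P
      have : P ≠ 0 := by rw [← hP]; positivity
      field_simp
    have e5 : 2 * C ≤ (2 * C * D C) ^ (j+1) := by
      rw [pow_succ]; nlinarith
    have e6 : 2 * C * (h * b (j+2)) ≤ (2 * C * D C) ^ (j+1) * (h * b (j+2)) := by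
      have := mul_nonneg h0.le (hb.1 (j+2))
      gcongr
    rw [mul_add] at e2
    simp only [mul_add]
    linarith

theorem interp_two (d : ℕ) : ∀ i : ℕ, ∃ D : ℝ → ℝ, Continuous D ∧ ∀ C, 1 ≤ C → 1 ≤ D C ∧
    ∀ b, Interp C b → ∀ h : ℝ, 0 < h → h ≤ 1 →
      b i ≤ D C * (b 0 / h ^ i + h ^ d * b (i+d)) := by
  induction d with
  | zero =>
    intro i
    refine ⟨fun _ => 1, continuous_const, fun C hC => ⟨le_rfl, fun b hb h h0 h1 => ?_⟩⟩
    have : 0 ≤ b 0 / h ^ i := div_nonneg (hb.1 0) (by positivity)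
    simp; linarith
  | succ d ih =>
    intro i
    obtain ⟨D, hD, H⟩ := ih (i+1)
    obtain ⟨E, hE, H'⟩ := interp_one i
    refine ⟨fun C => E C * (1 + D C), by fun_prop, fun C hC => ?_⟩
    obtain ⟨hD1, H⟩ := H C hC
    obtain ⟨hE1, H'⟩ := H' C hC
    refine ⟨by nlinarith, fun b hb h h0 h1 => ?_⟩
    have e1 := H b hb h h0 h1
    have e2 := H' b hb h h0 h1
    have e3 : h * b (i+1) ≤ h * (D C * (b 0 / h ^ (i+1) + h ^ d * b (i+1+d))) := by gcongr
    have e4 : h * (D C * (b 0 / h ^ (i+1) + h ^ d * b (i+1+d))) =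
        D C * (b 0 / h ^ i + h ^ (d+1) * b (i+(d+1))) := by
      rw [show i + 1 + d = i + (d+1) by ring]
      field_simp
      ring
    have e5 : 0 ≤ h ^ (d+1) * b (i+(d+1)) := mul_nonneg (by positivity) (hb.1 _)
    calc b i ≤ E C * (b 0 / h ^ i + h * b (i+1)) := e2
      _ ≤ E C * (b 0 / h ^ i + h ^ (d+1) * b (i+(d+1)) +
          D C * (b 0 / h ^ i + h ^ (d+1) * b (i+(d+1)))) := by
            apply mul_le_mul_of_nonneg_left _ (by linarith)
            linarith
      _ = _ := by ring

theorem interp_three (i d : ℕ) : ∃ D : ℝ → ℝ, Continuous D ∧ ∀ C, 1 ≤ C → 1 ≤ D C ∧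
    ∀ b, Interp C b → ∀ A, b 0 ≤ A → b (i+d) ≤ A → 0 < b 0 → 
      ∃ u : ℝ, 1 ≤ u ∧ u ^ (i+d) * b 0 ≤ A ∧ b i ≤ D C * (u ^ i * b 0) := by
  obtain ⟨D, hD, H⟩ := interp_two d i
  refine ⟨fun C => 2 * D C, by fun_prop, fun C hC => ?_⟩
  obtain ⟨hD1, H⟩ := H C hC
  refine ⟨by linarith, fun b hb A hA hA' h0 => ?_⟩
  rcases Nat.eq_zero_or_pos (i+d) with hN | hN
  · obtain ⟨rfl, rfl⟩ : i = 0 ∧ d = 0 := by omega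
    refine ⟨1, le_rfl, by simpa using hA, ?_⟩
    simp; nlinarith
  have hA0 : 1 ≤ A / b 0 := by rwa [one_le_div h0]
  set u := (A / b 0) ^ ((1:ℝ) / (i+d : ℕ)) with hu
  have hu1 : 1 ≤ u := Real.one_le_rpow hA0 (by positivity)
  have huN : u ^ (i+d) = A / b 0 := by
    rw [hu, ← Real.rpow_natCast, ← Real.rpow_mul (by linarith)]
    rw [one_div_mul_cancel (by positivity), Real.rpow_one]
  have hAA : u ^ (i+d) * b 0 = A := by rw [huN]; field_simp
  have hu0 : 0 < u := by linarith
  refine ⟨u, hu1, hAA.le, ?_⟩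
  have e := H b hb u⁻¹ (by positivity) (inv_le_one_of_one_le₀ hu1)
  calc b i ≤ D C * (b 0 / u⁻¹ ^ i + u⁻¹ ^ d * b (i+d)) := e
    _ ≤ D C * (b 0 / u⁻¹ ^ i + u⁻¹ ^ d * (u ^ (i+d) * b 0)) := by
      rw [hAA]; gcongr
    _ = _ := by
      rw [pow_add, inv_pow, inv_pow]; field_simp; ring

theorem interp_zero (C : ℝ) (hC : 1 ≤ C) (b) (hb : Interp C b) (i d : ℕ) (hd : d ≠ 0)
    (h0 : b 0 = 0) : b i = 0 := by
  obtain ⟨D, hD, H⟩ := interp_two d i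
  obtain ⟨hD1, H⟩ := H C hC
  have H := H b hb
  apply le_antisymm _ (hb.1 i)
  by_contra! hi
  have hx := hb.1 (i+d)
  have e := H (min 1 (b i / (2 * D C * (b (i+d) + 1)))) (by positivity) (min_le_left _ _)
  set h := min 1 (b i / (2 * D C * (b (i+d) + 1))) with hh
  have hh1 : h ≤ 1 := min_le_left _ _
  have hh2 : h ≤ (b i / (2 * D C * (b (i+d) + 1))) := min_le_right _ _
  have hh0 : 0 < h := by positivity
  rw [le_div_iff₀ (by positivity)] at hh2
  have : h ^ d ≤ h := pow_le_of_le_one hh0.le hh1 hd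
  have h3 : h ^ d * b (i+d) ≤ h * b (i+d) := by gcongr
  have h4 : D C * (h ^ d * b (i+d)) ≤ D C * (h * b (i+d)) := by gcongr
  rw [h0] at e
  simp only [zero_div, zero_add] at e
  nlinarith [mul_pos (show 0 < D C by linarith) hh0]

theorem interp_prod (i j : ℕ) : ∃ D : ℝ → ℝ, Continuous D ∧ ∀ C, 1 ≤ C → 1 ≤ D C ∧
    ∀ a b, Interp C a → Interp C b → ∀ A B, a 0 ≤ A → a (i+j) ≤ A → b 0 ≤ B → b (i+j) ≤ B →
      a i * b j ≤ D C * (a 0 * B + A * b 0) := by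
  obtain ⟨D, hD, H⟩ := interp_three i j
  obtain ⟨E, hE, H'⟩ := interp_three j i
  refine ⟨fun C => D C * E C, by fun_prop, fun C hC => ?_⟩
  obtain ⟨hD1, H⟩ := H C hC
  obtain ⟨hE1, H'⟩ := H' C hC
  have hDE : 1 ≤ D C * E C := by nlinarith
  refine ⟨hDE, fun a b ha hb A B hA hA' hB hB' => ?_⟩
  have a0 := ha.1 0
  have b0 := hb.1 0
  have A0 : 0 ≤ A := a0.trans hA
  have B0 : 0 ≤ B := b0.trans hB
  have t1 : 0 ≤ a 0 * B := by positivity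
  have t2 : 0 ≤ A * b 0 := by positivity
  have hT : a 0 * B + A * b 0 ≤ D C * E C * (a 0 * B + A * b 0) :=
    le_mul_of_one_le_left (by positivity) hDE
  rcases Nat.eq_zero_or_pos i with rfl | hi
  · have : a 0 * b j ≤ a 0 * B := by rw [zero_add] at hB'; gcongr
    linarith
  rcases Nat.eq_zero_or_pos j with rfl | hj
  · have : a i * b 0 ≤ A * b 0 := by rw [add_zero] at hA'; gcongr
    linarith
  rcases a0.eq_or_lt with h | ha0
  · rw [interp_zero C hC a ha i j hj.ne' h.symm]; linarith
  rcases b0.eq_or_lt with h | hb0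
  · rw [interp_zero C hC b hb j i hi.ne' h.symm]; linarith
  obtain ⟨u, hu, hu1, hu2⟩ := H a ha A hA hA' ha0
  obtain ⟨v, hv, hv1, hv2⟩ := H' b hb B hB (by rwa [add_comm]) hb0
  have hu0 : 0 < u := by linarith
  have hv0 : 0 < v := by linarith
  have key : u ^ i * v ^ j ≤ u ^ (i+j) + v ^ (j+i) := by
    rcases le_total u v with h | h
    · have : u ^ i * v ^ j ≤ v ^ i * v ^ j := by gcongr
      have h2 : 0 ≤ u ^ (i+j) := by positivity
      rw [pow_add v, mul_comm (v^j)]; linarith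
    · have : u ^ i * v ^ j ≤ u ^ i * u ^ j := by gcongr
      have h2 : 0 ≤ v ^ (j+i) := by positivity
      rw [pow_add u]; linarith
  have bj := hb.1 j
  calc a i * b j ≤ (D C * (u ^ i * a 0)) * (E C * (v ^ j * b 0)) := by gcongr
    _ = D C * E C * (a 0 * b 0) * (u ^ i * v ^ j) := by ring
    _ ≤ D C * E C * (a 0 * b 0) * (u ^ (i+j) + v ^ (j+i)) := by gcongr
    _ = D C * E C * (a 0 * (v ^ (j+i) * b 0) + (u ^ (i+j) * a 0) * b 0) := by ring
    _ ≤ _ := by gcongr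

theorem interp_unif (n : ℕ) : ∃ D : ℝ → ℝ, Continuous D ∧ ∀ C, 1 ≤ C → 1 ≤ D C ∧
    ∀ a b, Interp C a → Interp C b → Monotone a → Monotone b → ∀ i j, i + j ≤ n →
      a i * b j ≤ D C * (a 0 * b n + a n * b 0) := by
  choose D hD H using interp_prod
  refine ⟨fun C => 1 + ∑ i ∈ Finset.range (n+1), ∑ j ∈ Finset.range (n+1), D i j C, by fun_prop,
    fun C hC => ?_⟩
  have hpos : ∀ i j, 0 ≤ D i j C := fun i j => zero_le_one.trans (H i j C hC).1
  refine ⟨le_add_of_nonneg_right (Finset.sum_nonneg fun i _ => Finset.sum_nonneg fun j _ => hpos i j),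
    fun a b ha hb hma hmb i j hij => ?_⟩
  refine ((H i j C hC).2 a b ha hb (a n) (b n) (hma (Nat.zero_le _)) (hma hij)
    (hmb (Nat.zero_le _)) (hmb hij)).trans ?_
  have a0 := ha.1 0
  have b0 := hb.1 0
  have an := ha.1 n
  have bn := hb.1 n
  gcongr
  have h1 : D i j C ≤ ∑ j ∈ Finset.range (n+1), D i j C :=
    Finset.single_le_sum (f := fun j => D i j C) (fun j _ => hpos i j) (Finset.mem_range.2 (by omega))
  have h2 : ∑ j ∈ Finset.range (n+1), D i j C ≤
      ∑ i ∈ Finset.range (n+1), ∑ j ∈ Finset.range (n+1), D i j C :=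
    Finset.single_le_sum (f := fun i => ∑ j ∈ Finset.range (n+1), D i j C)
      (fun i _ => Finset.sum_nonneg fun j _ => hpos i j) (Finset.mem_range.2 (by omega))
  linarith

theorem udo {m : ℕ} {r : ℝ} (hr : 0 < r) :
    UniqueDiffOn ℝ (closedBall (0 : EuclideanSpace ℝ (Fin m)) r) := by
  refine uniqueDiffOn_convex (convex_closedBall _ _) ⟨0, ?_⟩
  exact interior_mono ball_subset_closedBall (by rw [isOpen_ball.interior_eq]; simpa using hr)

theorem hasFD {m : ℕ} {r : ℝ} (hr : 0 < r) {V} (hV : SmoothVF m r V) (i : ℕ)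
    {x} (hx : x ∈ closedBall (0 : EuclideanSpace ℝ (Fin m)) r) :
    HasFDerivWithinAt (iteratedFDerivWithin ℝ i V (closedBall 0 r))
      (fderivWithin ℝ (iteratedFDerivWithin ℝ i V (closedBall 0 r)) (closedBall 0 r) x)
      (closedBall 0 r) x := by
  refine (ContDiffOn.differentiableOn_iteratedFDerivWithin hV ?_ (udo hr) x hx).hasFDerivWithinAt
  exact_mod_cast ENat.natCast_lt_top i

theorem contFD {m : ℕ} {r : ℝ} (hr : 0 < r) {V} (hV : SmoothVF m r V) (i : ℕ) :
    ContinuousOn (iteratedFDerivWithin ℝ i V (closedBall (0 : EuclideanSpace ℝ (Fin m)) r))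
      (closedBall 0 r) := fun _ hx => (hasFD hr hV i hx).continuousWithinAt

/-- mean value inequality -/
theorem mvt {m : ℕ} {r : ℝ} (hr : 0 < r) {V} (hV : SmoothVF m r V) (i : ℕ) {R B : ℝ}
    (hR : R ≤ r) (hB : ∀ y ∈ closedBall (0 : EuclideanSpace ℝ (Fin m)) R,
      ‖iteratedFDerivWithin ℝ (i+1) V (closedBall 0 r) y‖ ≤ B)
    {x y} (hx : x ∈ closedBall (0 : EuclideanSpace ℝ (Fin m)) R)
    (hy : y ∈ closedBall (0 : EuclideanSpace ℝ (Fin m)) R) :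
    ‖iteratedFDerivWithin ℝ i V (closedBall 0 r) y - iteratedFDerivWithin ℝ i V (closedBall 0 r) x‖
      ≤ B * ‖y - x‖ := by
  have hsub := closedBall_subset_closedBall (x := (0 : EuclideanSpace ℝ (Fin m))) hR
  refine Convex.norm_image_sub_le_of_norm_hasFDerivWithin_le
    (fun z hz => (hasFD hr hV i (hsub hz)).mono hsub) (fun z hz => ?_)
    (convex_closedBall _ _) hx hy
  rw [norm_fderivWithin_iteratedFDerivWithin]
  exact hB z hz

theorem second_order {m : ℕ} {r : ℝ} (hr : 0 < r) {V} (hV : SmoothVF m r V) (i : ℕ) {R A B h : ℝ}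
    (hR : R ≤ r) (h0 : 0 < h) (hh : h ≤ R)
    (hA : ∀ y ∈ closedBall (0 : EuclideanSpace ℝ (Fin m)) R,
      ‖iteratedFDerivWithin ℝ i V (closedBall 0 r) y‖ ≤ A)
    (hB : ∀ y ∈ closedBall (0 : EuclideanSpace ℝ (Fin m)) R,
      ‖iteratedFDerivWithin ℝ (i+2) V (closedBall 0 r) y‖ ≤ B)
    {x} (hx : x ∈ closedBall (0 : EuclideanSpace ℝ (Fin m)) R) :
    ‖iteratedFDerivWithin ℝ (i+1) V (closedBall 0 r) x‖ ≤ 8 * (A / h + h * B) := by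
  have hsub := closedBall_subset_closedBall (x := (0 : EuclideanSpace ℝ (Fin m))) hR
  have hA0 : 0 ≤ A := (norm_nonneg _).trans (hA x hx)
  have hB0 : 0 ≤ B := (norm_nonneg _).trans (hB x hx)
  have hR0 : 0 < R := by linarith
  have hxn : ‖x‖ ≤ R := by simpa using hx
  set c : EuclideanSpace ℝ (Fin m) := (1 - h / (2 * R)) • x with hc
  have hhR : h / (2 * R) ≤ 1 := by rw [div_le_one (by positivity)]; linarith
  have hcn : ‖c‖ ≤ R - h / 2 := by
    rw [hc, norm_smul, Real.norm_of_nonneg (by linarith)]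
    calc (1 - h / (2 * R)) * ‖x‖ ≤ (1 - h / (2 * R)) * R := by gcongr
      _ = _ := by field_simp
  have hxK : x ∈ closedBall c (h / 2) := by
    rw [mem_closedBall, dist_eq_norm, hc, show x - (1 - h / (2 * R)) • x = (h / (2 * R)) • x by
      module, norm_smul, Real.norm_of_nonneg (by positivity)]
    calc h / (2 * R) * ‖x‖ ≤ h / (2 * R) * R := by gcongr
      _ = _ := by field_simp
  have hK : closedBall c (h / 2) ⊆ closedBall 0 R := by
    apply closedBall_subset_closedBall'
    rw [dist_zero_right]; linarith
  have hd : ∀ y ∈ closedBall c (h / 2), ‖y - x‖ ≤ h := by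
    intro y hy
    have h1 := dist_triangle_right y x c
    rw [mem_closedBall] at hy hxK
    rw [← dist_eq_norm]; linarith
  set f := iteratedFDerivWithin ℝ i V (closedBall 0 r) with hf
  set φ := fderivWithin ℝ f (closedBall 0 r) x with hφ
  have key : ∀ y ∈ closedBall c (h / 2), ‖φ (y - x)‖ ≤ 2 * A + h * h * B := by
    intro y hy
    have h1 : ‖f y - f x - φ (y - x)‖ ≤ (B * h) * ‖y - x‖ := by
      refine Convex.norm_image_sub_le_of_norm_hasFDerivWithin_le' (s := closedBall c (h / 2))
        (fun z hz => (hasFD hr hV i (hsub (hK hz))).mono (hK.trans hsub)) (fun z hz => ?_)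
        (convex_closedBall _ _) hxK hy
      rw [hφ, hf, fderivWithin_iteratedFDerivWithin, Function.comp_apply, Function.comp_apply,
        ← map_sub, LinearIsometryEquiv.norm_map]
      refine (mvt hr hV (i+1) hR hB hx (hK hz)).trans ?_
      gcongr
      exact hd z hz
    have h2 : (B * h) * ‖y - x‖ ≤ (B * h) * h := by gcongr; exact hd y hy
    have h3 := hA y (hK hy)
    have h4 := hA x hx
    have h5 : φ (y - x) = f y - f x - (f y - f x - φ (y - x)) := by abel
    rw [h5]
    have h6 := norm_sub_le (f y - f x) (f y - f x - φ (y - x))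
    have h7 := norm_sub_le (f y) (f x)
    linarith
  rw [← norm_fderivWithin_iteratedFDerivWithin]
  refine ContinuousLinearMap.opNorm_le_bound _ (by positivity) fun v => ?_
  rcases eq_or_ne v 0 with rfl | hv
  · simp
  have hvn : 0 < ‖v‖ := norm_pos_iff.2 hv
  set t := h / (2 * ‖v‖) with ht
  have ht0 : 0 < t := by positivity
  have k1 := key (c + t • v) (by
    rw [mem_closedBall, dist_eq_norm, add_sub_cancel_left, norm_smul, Real.norm_of_nonneg ht0.le, ht]
    apply le_of_eq; field_simp)
  have k2 := key c (mem_closedBall_self (by positivity))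
  have k3 : t • φ v = φ (c + t • v - x) - φ (c - x) := by
    rw [← map_sub, ← map_smul]; congr 1; abel
  have k4 : t * ‖φ v‖ ≤ 4 * A + 2 * h * h * B := by
    have : ‖t • φ v‖ = t * ‖φ v‖ := by rw [norm_smul, Real.norm_of_nonneg ht0.le]
    rw [← this, k3]
    refine (norm_sub_le _ _).trans ?_
    linarith
  have k5 : ‖φ v‖ ≤ (4 * A + 2 * h * h * B) / t := by
    rw [le_div_iff₀ ht0]; linarith
  refine k5.trans ?_
  have k6 : (4 * A + 2 * h * h * B) / t = (8 * (A / h) + 4 * (h * B)) * ‖v‖ := by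
    rw [ht]; field_simp; ring
  rw [k6]
  have := mul_nonneg h0.le hB0
  gcongr
  linarith

theorem flat_decay {m : ℕ} {r : ℝ} (hr : 0 < r) {V} (hV : SmoothVF m r V) (hF : FlatVF m r V)
    (k : ℕ) : ∀ i, ∃ M, 0 ≤ M ∧ ∀ x ∈ closedBall (0 : EuclideanSpace ℝ (Fin m)) r,
      ‖iteratedFDerivWithin ℝ i V (closedBall 0 r) x‖ ≤ M * ‖x‖ ^ k := by
  induction k with
  | zero =>
    intro i
    obtain ⟨M, hM⟩ := (isCompact_closedBall (0 : EuclideanSpace ℝ (Fin m)) r).exists_bound_of_continuousOn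
      (contFD hr hV i)
    refine ⟨M, (norm_nonneg _).trans (hM 0 (by simp [hr.le])), fun x hx => ?_⟩
    simpa using hM x hx
  | succ k ih =>
    intro i
    obtain ⟨M, hM0, hM⟩ := ih (i+1)
    refine ⟨M, hM0, fun x hx => ?_⟩
    have hxr : ‖x‖ ≤ r := by simpa using hx
    have := mvt hr hV i (R := ‖x‖) (B := M * ‖x‖ ^ k) hxr (fun y hy => by
      have hy' : ‖y‖ ≤ ‖x‖ := by simpa using hy
      refine (hM y (by simpa using hy'.trans hxr)).trans ?_
      gcongr) (x := 0) (y := x) (by simp) (by simp)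
    rw [hF i, sub_zero, sub_zero] at this
    rw [pow_succ, ← mul_assoc]; exact this

theorem norm_bdd {m : ℕ} {r : ℝ} {k : ℕ} {V : EuclideanSpace ℝ (Fin m) → EuclideanSpace ℝ (Fin m)}
    (H : ∀ i, ∃ M, 0 ≤ M ∧ ∀ x ∈ closedBall (0 : EuclideanSpace ℝ (Fin m)) r,
      ‖iteratedFDerivWithin ℝ i V (closedBall 0 r) x‖ ≤ M * ‖x‖ ^ k) (n : ℕ) :
    BddAbove (range fun p : (closedBall (0 : EuclideanSpace ℝ (Fin m)) r \ {0} :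
      Set (EuclideanSpace ℝ (Fin m))) × Fin (n + 1) =>
    ‖(p.1 : EuclideanSpace ℝ (Fin m))‖ ^ (-(k : ℤ)) *
      ‖iteratedFDerivWithin ℝ p.2 V (closedBall 0 r) p.1‖) := by
  choose M hM0 hM using H
  refine ⟨∑ i ∈ Finset.range (n+1), M i, ?_⟩
  rintro _ ⟨⟨⟨x, hx, hx0⟩, i⟩, rfl⟩
  have hxp : 0 < ‖x‖ := norm_pos_iff.2 hx0
  have h1 : M i ≤ ∑ i ∈ Finset.range (n+1), M i :=
    Finset.single_le_sum (f := M) (fun j _ => hM0 j) (Finset.mem_range.2 i.2)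
  refine le_trans ?_ h1
  simp only [zpow_neg, zpow_natCast]
  rw [inv_mul_le_iff₀ (by positivity), mul_comm]
  exact hM i x hx

theorem le_norm {m : ℕ} {r : ℝ} {k : ℕ} {V : EuclideanSpace ℝ (Fin m) → EuclideanSpace ℝ (Fin m)}
    (H : ∀ i, ∃ M, 0 ≤ M ∧ ∀ x ∈ closedBall (0 : EuclideanSpace ℝ (Fin m)) r,
      ‖iteratedFDerivWithin ℝ i V (closedBall 0 r) x‖ ≤ M * ‖x‖ ^ k) {n i : ℕ} (hi : i ≤ n)
    {x} (hx : x ∈ closedBall (0 : EuclideanSpace ℝ (Fin m)) r) (hx0 : x ≠ 0) :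
    ‖iteratedFDerivWithin ℝ i V (closedBall 0 r) x‖ ≤ flatVNorm m r n k V * ‖x‖ ^ k := by
  have hxp : 0 < ‖x‖ := norm_pos_iff.2 hx0
  have := le_ciSup (norm_bdd H n) (⟨⟨x, hx, hx0⟩, ⟨i, by omega⟩⟩)
  simp only [zpow_neg, zpow_natCast] at this
  rw [inv_mul_le_iff₀ (by positivity), mul_comm] at this
  simpa [flatVNorm] using this

theorem norm_le' {m : ℕ} {r : ℝ} {n k : ℕ} {V : EuclideanSpace ℝ (Fin m) → EuclideanSpace ℝ (Fin m)}
    {T : ℝ} (hT : 0 ≤ T) (H : ∀ i ≤ n, ∀ x ∈ closedBall (0 : EuclideanSpace ℝ (Fin m)) r, x ≠ 0 →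
      ‖iteratedFDerivWithin ℝ i V (closedBall 0 r) x‖ ≤ T * ‖x‖ ^ k) :
    flatVNorm m r n k V ≤ T := by
  refine Real.iSup_le ?_ hT
  rintro ⟨⟨x, hx, hx0⟩, i⟩
  have hxp : 0 < ‖x‖ := norm_pos_iff.2 hx0
  simp only [zpow_neg, zpow_natCast]
  rw [inv_mul_le_iff₀ (by positivity), mul_comm]
  exact H i (by omega) x hx hx0

theorem flatVNorm_nn (m : ℕ) (r : ℝ) (n k : ℕ) (V : EuclideanSpace ℝ (Fin m) → EuclideanSpace ℝ (Fin m)) :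
    0 ≤ flatVNorm m r n k V := Real.iSup_nonneg fun p => by positivity

/-- The facts on a field that are needed for the estimate. -/
def Good (m : ℕ) (r : ℝ) (k : ℕ) (V : EuclideanSpace ℝ (Fin m) → EuclideanSpace ℝ (Fin m)) : Prop :=
  SmoothVF m r V ∧ (∀ n i, i ≤ n → ∀ x ∈ closedBall (0 : EuclideanSpace ℝ (Fin m)) r,
    ‖iteratedFDerivWithin ℝ i V (closedBall 0 r) x‖ ≤ flatVNorm m r n k V * ‖x‖ ^ k) ∧
  Interp (8 * (1 + 1 / r)) (fun n => flatVNorm m r n k V)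

theorem Good.mono {m : ℕ} {r : ℝ} {k : ℕ} {V} (h : Good m r k V) :
    Monotone (fun n => flatVNorm m r n k V) := fun a b hab =>
  norm_le' (flatVNorm_nn _ _ _ _ _) fun i hi x hx _ => h.2.1 b i (hi.trans hab) x hx

theorem good_of {m : ℕ} {r : ℝ} (hr : 0 < r) {k : ℕ} {V} (hV : SmoothVF m r V)
    (H : ∀ n i, i ≤ n → ∀ x ∈ closedBall (0 : EuclideanSpace ℝ (Fin m)) r,
      ‖iteratedFDerivWithin ℝ i V (closedBall 0 r) x‖ ≤ flatVNorm m r n k V * ‖x‖ ^ k)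
    (H2 : ∀ i, ∀ h, 0 < h → h ≤ 1 → ∀ x ∈ closedBall (0 : EuclideanSpace ℝ (Fin m)) r, x ≠ 0 →
      ‖iteratedFDerivWithin ℝ (i+1) V (closedBall 0 r) x‖ ≤
      8 * (1 + 1 / r) * (flatVNorm m r i k V / h + h * flatVNorm m r (i+2) k V) * ‖x‖ ^ k) :
    Good m r k V := by
  refine ⟨hV, H, fun i => flatVNorm_nn _ _ _ _ _, fun i h h0 h1 => ?_⟩
  have a1 := flatVNorm_nn m r i k V
  have a2 := flatVNorm_nn m r (i+2) k V
  refine norm_le' (by positivity) fun j hj x hx hx0 => ?_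
  rcases hj.eq_or_lt with rfl | hj
  · exact H2 i h h0 h1 x hx hx0
  · refine (H i j (by omega) x hx).trans ?_
    gcongr
    have h3 : flatVNorm m r i k V ≤ flatVNorm m r i k V / h := by
      rw [le_div_iff₀ h0]; nlinarith
    have h4 : 0 ≤ h * flatVNorm m r (i+2) k V := by positivity
    have h5 : 0 < 1 / r := by positivity
    have h6 : 1 ≤ 8 * (1 + 1 / r) := by linarith
    have h7 : 0 ≤ flatVNorm m r i k V / h + h * flatVNorm m r (i+2) k V := by positivity
    nlinarith

theorem good_flat {m : ℕ} {r : ℝ} (hr : 0 < r) (k : ℕ) {V} (hV : SmoothVF m r V)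
    (hF : FlatVF m r V) : Good m r k V := by
  have H : ∀ n i, i ≤ n → ∀ x ∈ closedBall (0 : EuclideanSpace ℝ (Fin m)) r,
      ‖iteratedFDerivWithin ℝ i V (closedBall 0 r) x‖ ≤ flatVNorm m r n k V * ‖x‖ ^ k := by
    intro n i hi x hx
    rcases eq_or_ne x 0 with rfl | hx0
    · rw [hF i, norm_zero]
      exact mul_nonneg (flatVNorm_nn _ _ _ _ _) (by positivity)
    · exact le_norm (flat_decay hr hV hF k) hi hx hx0
  refine good_of hr hV H fun i h h0 h1 x hx hx0 => ?_
  have hxr : ‖x‖ ≤ r := by simpa using hx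
  have hxp : 0 < ‖x‖ := norm_pos_iff.2 hx0
  have a1 := flatVNorm_nn m r i k V
  have a2 := flatVNorm_nn m r (i+2) k V
  have h5 : 0 < 1 / r := by positivity
  have HR : ∀ j, ∀ y ∈ closedBall (0 : EuclideanSpace ℝ (Fin m)) ‖x‖,
      ‖iteratedFDerivWithin ℝ j V (closedBall 0 r) y‖ ≤ flatVNorm m r j k V * ‖x‖ ^ k := by
    intro j y hy
    have hy' : ‖y‖ ≤ ‖x‖ := by simpa using hy
    refine (H j j le_rfl y (by simpa using hy'.trans hxr)).trans ?_
    have := flatVNorm_nn m r j k V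
    gcongr
  have h7 : 0 ≤ (flatVNorm m r i k V / h + h * flatVNorm m r (i+2) k V) * ‖x‖ ^ k := by positivity
  rcases le_total h ‖x‖ with hle | hle
  · refine (second_order hr hV i hxr h0 hle (HR i) (HR (i+2)) (by simp)).trans ?_
    calc _ = 8 * ((flatVNorm m r i k V / h + h * flatVNorm m r (i+2) k V) * ‖x‖ ^ k) := by ring
      _ ≤ _ := by
        rw [mul_assoc (8 * (1 + 1 / r))]
        gcongr
        linarith
  · have := mvt hr hV (i+1) hxr (HR (i+2)) (x := 0) (y := x) (by simp) (by simp)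
    rw [hF, sub_zero, sub_zero] at this
    refine this.trans ?_
    calc _ ≤ flatVNorm m r (i+2) k V * ‖x‖ ^ k * h := by gcongr
      _ ≤ (flatVNorm m r i k V / h + h * flatVNorm m r (i+2) k V) * ‖x‖ ^ k := by
        have : 0 ≤ flatVNorm m r i k V / h * ‖x‖ ^ k := by positivity
        linarith
      _ ≤ _ := by
        rw [mul_assoc (8 * (1 + 1 / r))]
        apply le_mul_of_one_le_left h7
        linarith

theorem good_zero {m : ℕ} (hm : 1 ≤ m) {r : ℝ} (hr : 0 < r) {V} (hV : SmoothVF m r V) :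
    Good m r 0 V := by
  have hdec : ∀ i, ∃ M, 0 ≤ M ∧ ∀ x ∈ closedBall (0 : EuclideanSpace ℝ (Fin m)) r,
      ‖iteratedFDerivWithin ℝ i V (closedBall 0 r) x‖ ≤ M * ‖x‖ ^ 0 := by
    intro i
    obtain ⟨M, hM⟩ := (isCompact_closedBall (0 : EuclideanSpace ℝ (Fin m)) r).exists_bound_of_continuousOn
      (contFD hr hV i)
    refine ⟨M, (norm_nonneg _).trans (hM 0 (by simp [hr.le])), fun x hx => ?_⟩
    simpa using hM x hx
  have H : ∀ n i, i ≤ n → ∀ x ∈ closedBall (0 : EuclideanSpace ℝ (Fin m)) r,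
      ‖iteratedFDerivWithin ℝ i V (closedBall 0 r) x‖ ≤ flatVNorm m r n 0 V * ‖x‖ ^ 0 := by
    intro n i hi x hx
    rcases eq_or_ne x 0 with rfl | hx0
    · have : Nonempty (Fin m) := ⟨⟨0, hm⟩⟩
      have hcl : (0 : EuclideanSpace ℝ (Fin m)) ∈ closure (closedBall 0 r \ {0}) := by
        have h1 : (0 : EuclideanSpace ℝ (Fin m)) ∈ closure {0}ᶜ := by
          rw [(dense_compl_singleton (0 : EuclideanSpace ℝ (Fin m))).closure_eq]; trivial
        have h2 := (mem_closure_iff_nhdsWithin_neBot.1 h1)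
        rw [sdiff_eq, mem_closure_iff_nhdsWithin_neBot, inter_comm,
          nhdsWithin_inter_of_mem' (mem_nhdsWithin_of_mem_nhds (closedBall_mem_nhds _ hr))]
        exact h2
      have hc := ((contFD hr hV i) 0 hx).norm.mono (sdiff_subset (t := {0}))
      refine ContinuousWithinAt.closure_le hcl hc
        (continuousWithinAt_const (b := flatVNorm m r n 0 V * ‖(0:EuclideanSpace ℝ (Fin m))‖ ^ 0))
        fun y hy => ?_
      simpa using le_norm hdec hi hy.1 hy.2
    · exact le_norm hdec hi hx hx0
  refine good_of hr hV H fun i h h0 h1 x hx hx0 => ?_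
  have a1 := flatVNorm_nn m r i 0 V
  have a2 := flatVNorm_nn m r (i+2) 0 V
  have hR : ∀ j, ∀ y ∈ closedBall (0 : EuclideanSpace ℝ (Fin m)) r,
      ‖iteratedFDerivWithin ℝ j V (closedBall 0 r) y‖ ≤ flatVNorm m r j 0 V := by
    intro j y hy
    simpa using H j j le_rfl y hy
  have hh : h * (r / (1 + r)) ≤ r := by
    rw [← mul_div_assoc, div_le_iff₀ (by positivity)]; nlinarith
  refine (second_order hr hV i le_rfl (h := h * (r / (1 + r))) (by positivity) hh
    (hR i) (hR (i+2)) hx).trans ?_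
  have e1 : flatVNorm m r i 0 V / (h * (r / (1 + r))) =
      (1 + 1 / r) * (flatVNorm m r i 0 V / h) := by field_simp; ring
  have e2 : r / (1 + r) ≤ 1 + 1 / r := by
    have : r / (1 + r) ≤ 1 := by rw [div_le_one (by positivity)]; linarith
    have : 0 < 1 / r := by positivity
    linarith
  have e3 : h * (r / (1 + r)) * flatVNorm m r (i+2) 0 V ≤
      (1 + 1 / r) * (h * flatVNorm m r (i+2) 0 V) := by
    have : 0 ≤ h * flatVNorm m r (i+2) 0 V := by positivity
    nlinarith
  rw [e1, pow_zero, mul_one]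
  linarith

theorem term_bound {m : ℕ} {r : ℝ} (hr : 0 < r) {V W} (hV : SmoothVF m r V) (hW : SmoothVF m r W)
    {p : ℕ} {x} (hx : x ∈ closedBall (0 : EuclideanSpace ℝ (Fin m)) r) {T : ℝ}
    (H : ∀ i j, i + j = p + 1 → ‖iteratedFDerivWithin ℝ i W (closedBall 0 r) x‖ *
      ‖iteratedFDerivWithin ℝ j V (closedBall 0 r) x‖ ≤ T) :
    ‖iteratedFDerivWithin ℝ p (fun y => fderivWithin ℝ W (closedBall 0 r) y (V y))
      (closedBall 0 r) x‖ ≤ 2 ^ p * T := by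
  have hWd : ContDiffOn ℝ (⊤ : ℕ∞) (fderivWithin ℝ W (closedBall 0 r)) (closedBall 0 r) :=
    ContDiffOn.fderivWithin hW (udo hr) (by simp)
  refine (norm_iteratedFDerivWithin_clm_apply hWd hV (udo hr) hx
    (by exact_mod_cast le_top)).trans ?_
  calc _ ≤ ∑ i ∈ Finset.range (p+1), (p.choose i : ℝ) * T := by
        refine Finset.sum_le_sum fun i hi => ?_
        rw [norm_iteratedFDerivWithin_fderivWithin (udo hr) hx, mul_assoc]
        have := Finset.mem_range.1 hi
        gcongr
        exact H _ _ (by omega)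
    _ = _ := by
      rw [← Finset.sum_mul]; congr 1
      exact_mod_cast Nat.sum_range_choose p

theorem main_bound {m : ℕ} {r : ℝ} (hr : 0 < r) {n k l : ℕ} {V W} (hV : Good m r k V)
    (hW : Good m r l W) {K : ℝ} (hK : 0 ≤ K)
    (H : ∀ i j, i + j ≤ n + 1 → flatVNorm m r i k V * flatVNorm m r j l W ≤
      K * (flatVNorm m r 0 k V * flatVNorm m r (n + 1) l W +
              flatVNorm m r (n + 1) k V * flatVNorm m r 0 l W)) :
    flatVNorm m r n (k + l) (lieBracket m r V W) ≤ 2 * 2 ^ n * K *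
      (flatVNorm m r 0 k V * flatVNorm m r (n + 1) l W +
              flatVNorm m r (n + 1) k V * flatVNorm m r 0 l W) := by
  have v0 := fun j => flatVNorm_nn m r j k V
  have w0 := fun j => flatVNorm_nn m r j l W
  set Q := flatVNorm m r 0 k V * flatVNorm m r (n + 1) l W +
              flatVNorm m r (n + 1) k V * flatVNorm m r 0 l W with hQ
  have hQ0 : 0 ≤ Q := add_nonneg (mul_nonneg (v0 _) (w0 _)) (mul_nonneg (v0 _) (w0 _))
  refine norm_le' (by positivity) fun p hp x hx hx0 => ?_
  have key : ∀ i j, i + j = p + 1 → ‖iteratedFDerivWithin ℝ i V (closedBall 0 r) x‖ *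
      ‖iteratedFDerivWithin ℝ j W (closedBall 0 r) x‖ ≤ K * Q * ‖x‖ ^ (k + l) := by
    intro i j hij
    have h1 := hV.2.1 i i le_rfl x hx
    have h2 := hW.2.1 j j le_rfl x hx
    have h3 := v0 i
    calc _ ≤ (flatVNorm m r i k V * ‖x‖ ^ k) * (flatVNorm m r j l W * ‖x‖ ^ l) := by gcongr
      _ = flatVNorm m r i k V * flatVNorm m r j l W * ‖x‖ ^ (k + l) := by rw [pow_add]; ring
      _ ≤ _ := by
        have := H i j (by omega)
        gcongr
  have t1 := term_bound hr hV.1 hW.1 hx (p := p) (T := K * Q * ‖x‖ ^ (k + l)) (fun i j hij => by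
    rw [mul_comm]; exact key j i (by omega))
  have t2 := term_bound hr hW.1 hV.1 hx (p := p) (T := K * Q * ‖x‖ ^ (k + l)) key
  have sm : ∀ V W, SmoothVF m r V → SmoothVF m r W → ContDiffWithinAt ℝ (p : WithTop ℕ∞)
      (fun y => fderivWithin ℝ W (closedBall 0 r) y (V y)) (closedBall 0 r) x := by
    intro V W hV hW
    have hWd : ContDiffOn ℝ (⊤ : ℕ∞) (fderivWithin ℝ W (closedBall 0 r)) (closedBall 0 r) :=
      ContDiffOn.fderivWithin hW (udo hr) (by simp)
    exact ((hWd.clm_apply hV) x hx).of_le (by exact_mod_cast le_top)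
  have e : lieBracket m r V W = (fun y => fderivWithin ℝ W (closedBall 0 r) y (V y)) -
      (fun y => fderivWithin ℝ V (closedBall 0 r) y (W y)) := rfl
  rw [e, iteratedFDerivWithin_sub_apply (sm V W hV.1 hW.1) (sm W V hW.1 hV.1) (udo hr) hx]
  refine (norm_sub_le _ _).trans ?_
  have h2 : (2:ℝ) ^ p ≤ 2 ^ n := by gcongr; norm_num
  have h3 : 2 ^ p * (K * Q * ‖x‖ ^ (k + l)) ≤ 2 ^ n * (K * Q * ‖x‖ ^ (k + l)) := by gcongr
  linarith

/-- estimate for the Lie bracket: for all `n, k, l` there is a constant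
`C(n,k,l,r) > 0`, depending continuously on `r > 0`, such that for flat smooth vector
fields `V, W` on `B̄_r`,
`⟨[V,W]⟩_{n,k+l,r} ≤ C (⟨V⟩_{0,k,r} ⟨W⟩_{n+1,l,r} + ⟨V⟩_{n+1,k,r} ⟨W⟩_{0,l,r})`;
moreover for `l = 0` the same holds with `W` an arbitrary smooth vector field. -/
theorem lie_bracket_estimate (m : ℕ) (hm : 1 ≤ m) (n k l : ℕ) :
    ∃ C : ℝ → ℝ, ContinuousOn C (Set.Ioi 0) ∧
      ∀ r : ℝ, 0 < r → 0 < C r ∧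
        (∀ V W, SmoothVF m r V → FlatVF m r V → SmoothVF m r W → FlatVF m r W →
          flatVNorm m r n (k + l) (lieBracket m r V W) ≤
            C r * (flatVNorm m r 0 k V * flatVNorm m r (n + 1) l W +
              flatVNorm m r (n + 1) k V * flatVNorm m r 0 l W)) ∧
        (∀ V W, SmoothVF m r V → FlatVF m r V → SmoothVF m r W →
          flatVNorm m r n k (lieBracket m r V W) ≤
            C r * (flatVNorm m r 0 k V * flatVNorm m r (n + 1) 0 W +
              flatVNorm m r (n + 1) k V * flatVNorm m r 0 0 W)) := by
  obtain ⟨D, hD, H⟩ := interp_unif (n+1)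
  refine ⟨fun r => 2 * 2 ^ n * D (8 * (1 + 1 / r)), ?_, fun r hr => ?_⟩
  · refine ContinuousOn.mul continuousOn_const (hD.comp_continuousOn ?_)
    refine ContinuousOn.mul continuousOn_const (continuousOn_const.add
      (continuousOn_const.div continuousOn_id fun x hx => (ne_of_gt hx)))
  have h5 : 0 < 1 / r := by positivity
  obtain ⟨hD1, H⟩ := H (8 * (1 + 1 / r)) (by linarith)
  have hD0 : 0 < D (8 * (1 + 1 / r)) := by linarith
  refine ⟨by positivity, fun V W hV hVf hW hWf => ?_, fun V W hV hVf hW => ?_⟩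
  · have gV := good_flat hr k hV hVf
    have gW := good_flat hr l hW hWf
    exact main_bound hr gV gW hD0.le (H _ _ gV.2.2 gW.2.2 gV.mono gW.mono)
  · have gV := good_flat hr k hV hVf
    have gW := good_zero hm hr hW
    exact main_bound (l := 0) hr gV gW hD0.le (H _ _ gV.2.2 gW.2.2 gV.mono gW.mono)
end

section
/- There exists θ > 0, depending only on the dimension m, such that for all 0 < s < r and every smooth vector field Y : B̄_r → ℝ^m flat at the origin with ‖Y‖_{0,r} < (r−s)·θ and ‖Y‖_{1,r} < θ, the flow of Y is defined for all times t ∈ [0,1] as a smooth map φ_Y^t : B̄_s → B_r (i.e. there is a smooth map φ : [0,1] × B̄_s → B_r with φ(0,x) = x and ∂_t φ(t,x) = Y(φ(t,x))), and moreover the time-one flow φ_Y := φ_Y^1 satisfies, for every n ∈ ℕ, ‖φ_Y − id‖_{n,s} ≤ C · ‖Y‖_{n,r} with a constant C = C(n,r) depending continuously on r. -/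
open Metric Set

/-- The `C^n` norm `‖F‖_{n,r} = sup_{x ∈ B̄_r} max_{|a| ≤ n} |D^a F(x)|` of a map on
the closed ball. -/
noncomputable def cnNorm (m : ℕ) (r : ℝ) (n : ℕ)
    (F : EuclideanSpace ℝ (Fin m) → EuclideanSpace ℝ (Fin m)) : ℝ :=
  ⨆ p : (closedBall (0 : EuclideanSpace ℝ (Fin m)) r :
      Set (EuclideanSpace ℝ (Fin m))) × Fin (n + 1),
    ‖iteratedFDerivWithin ℝ p.2 F (closedBall 0 r) p.1‖

section FlowAux
open scoped ContDiff

section Nem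
variable {K : Type*} [TopologicalSpace K] [CompactSpace K]
variable {E : Type} [NormedAddCommGroup E] [NormedSpace ℝ E]

/-- Pointwise application of a path of operators to a path. -/
noncomputable def pathApp (K : Type*) [TopologicalSpace K] [CompactSpace K]
    (E : Type*) [NormedAddCommGroup E] [NormedSpace ℝ E]
    (G : Type*) [NormedAddCommGroup G] [NormedSpace ℝ G]
    {W : Type*} [NormedAddCommGroup W] [NormedSpace ℝ W] (b : W →L[ℝ] E →L[ℝ] G) :
    C(K, W) →L[ℝ] C(K, E) →L[ℝ] C(K, G) :=
  LinearMap.mkContinuous₂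
    (LinearMap.mk₂ ℝ
      (fun (A : C(K, W)) (h : C(K, E)) =>
        (⟨fun t => b (A t) (h t), by fun_prop⟩ : C(K, G)))
      (by intros; ext; simp) (by intros; ext; simp) (by intros; ext; simp)
      (by intros; ext; simp))
    ‖b‖ (by
      intro A h
      rw [ContinuousMap.norm_le _ (by positivity)]
      intro t
      refine (b.le_opNorm₂ (A t) (h t)).trans ?_
      gcongr
      · exact A.norm_coe_le_norm t
      · exact h.norm_coe_le_norm t)

/-- The superposition operator. -/
def nem (K : Type*) [TopologicalSpace K] {E G : Type*} [NormedAddCommGroup E]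
    [NormedAddCommGroup G]
    (f : E → G) (hf : Continuous f) (γ : C(K, E)) : C(K, G) :=
  (⟨f, hf⟩ : C(E, G)).comp γ

theorem hasFDerivAt_nem {G : Type*} [NormedAddCommGroup G] [NormedSpace ℝ G]
    {f : E → G} (hf : ContDiff ℝ ∞ f) (hf' : Continuous (fderiv ℝ f)) (γ : C(K, E)) :
    HasFDerivAt (nem K f hf.continuous) (pathApp K E G (ContinuousLinearMap.id ℝ _) (nem K (fderiv ℝ f) hf' γ)) γ := by
  rw [hasFDerivAt_iff_isLittleO_nhds_zero, Asymptotics.isLittleO_iff]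
  intro ε hε
  have hc : Continuous (nem K (fderiv ℝ f) hf') := ContinuousMap.continuous_postcomp _
  obtain ⟨δ, hδ, hd⟩ := Metric.continuous_iff (α := C(K, E)) (β := C(K, E →L[ℝ] G)).1 hc γ ε hε
  filter_upwards [Metric.ball_mem_nhds (0 : C(K, E)) hδ] with h hh
  rw [ContinuousMap.norm_le _ (by positivity)]
  intro t
  have key : ∀ y ∈ segment ℝ (γ t) (γ t + h t),
      ‖fderiv ℝ f y - fderiv ℝ f (γ t)‖ ≤ ε := by
    intro y hy
    rw [segment_eq_image'] at hy
    obtain ⟨σ, hσ, rfl⟩ := hy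
    have h1 : dist (γ + σ • h) γ < δ := by
      rw [dist_eq_norm, add_sub_cancel_left, norm_smul, Real.norm_of_nonneg hσ.1]
      have : ‖h‖ < δ := by simpa using hh
      nlinarith [norm_nonneg h, hσ.2]
    have h2 := hd _ h1
    have h3 := (ContinuousMap.dist_apply_le_dist t).trans_lt h2
    rw [dist_eq_norm] at h3
    refine le_trans (le_of_eq ?_) h3.le
    simp [nem]
  have h4 := (convex_segment (γ t) (γ t + h t)).norm_image_sub_le_of_norm_fderiv_le' (𝕜 := ℝ)
    (f := f) (φ := fderiv ℝ f (γ t)) (C := ε)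
    (fun y _ => (hf.differentiable (by simp)) y) key (left_mem_segment _ _ _)
    (right_mem_segment _ _ _)
  have h5 : ‖h t‖ ≤ ‖h‖ := h.norm_coe_le_norm t
  refine le_trans (le_of_eq ?_) (h4.trans (by rw [add_sub_cancel_left]; gcongr))
  simp [nem, pathApp]

theorem contDiff_nem_nat (n : ℕ) : ∀ {G : Type} [NormedAddCommGroup G] [NormedSpace ℝ G]
    {f : E → G} (hf : ContDiff ℝ ∞ f), ContDiff ℝ n (nem K f hf.continuous) := by
  induction n with
  | zero =>
    intro G _ _ f hf
    exact contDiff_zero.2 (ContinuousMap.continuous_postcomp _)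
  | succ n ih =>
    intro G _ _ f hf
    have hf1 : ContDiff ℝ ∞ (fderiv ℝ f) := hf.fderiv_right (by simp)
    have h1 := ih hf1
    push_cast
    rw [contDiff_succ_iff_hasFDerivAt]
    exact ⟨fun γ => pathApp K E G (ContinuousLinearMap.id ℝ _) (nem K (fderiv ℝ f) hf1.continuous γ),
      ContDiff.comp (pathApp K E G (ContinuousLinearMap.id ℝ (E →L[ℝ] G))).contDiff h1, fun γ => hasFDerivAt_nem hf hf1.continuous γ⟩

theorem contDiff_nem {G : Type} [NormedAddCommGroup G] [NormedSpace ℝ G]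
    {f : E → G} (hf : ContDiff ℝ ∞ f) : ContDiff ℝ ∞ (nem K f hf.continuous) :=
  contDiff_infty.2 fun n => contDiff_nem_nat n hf

end Nem

section Vol
variable {E : Type} [NormedAddCommGroup E] [NormedSpace ℝ E]

theorem vol_cont (w : C(unitInterval, E)) :
    Continuous (fun σ : ℝ => w (projIcc 0 1 zero_le_one σ)) :=
  w.continuous.comp continuous_projIcc

theorem vol_bound (w : C(unitInterval, E)) (t : unitInterval) :
    ‖∫ σ in (0 : ℝ)..t, w (projIcc 0 1 zero_le_one σ)‖ ≤ ‖w‖ := by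
  have h := intervalIntegral.norm_integral_le_of_norm_le_const (a := 0) (b := (t : ℝ)) (C := ‖w‖)
    (f := fun σ : ℝ => w (projIcc 0 1 zero_le_one σ)) (fun σ _ => w.norm_coe_le_norm _)
  refine h.trans ?_
  rw [sub_zero, abs_of_nonneg t.2.1]
  exact mul_le_of_le_one_right (norm_nonneg _) t.2.2

/-- Integration of paths from `0`. -/
noncomputable def vol (E : Type) [NormedAddCommGroup E] [NormedSpace ℝ E] :
    C(unitInterval, E) →L[ℝ] C(unitInterval, E) :=
  LinearMap.mkContinuous
    { toFun := fun w => ⟨fun t => ∫ σ in (0 : ℝ)..t, w (projIcc 0 1 zero_le_one σ),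
        (intervalIntegral.continuous_primitive
          (fun a b => (vol_cont w).intervalIntegrable a b) 0).comp continuous_subtype_val⟩
      map_add' := by
        intro v w
        ext t
        simp only [ContinuousMap.coe_mk, ContinuousMap.add_apply]
        exact intervalIntegral.integral_add ((vol_cont v).intervalIntegrable _ _)
          ((vol_cont w).intervalIntegrable _ _)
      map_smul' := by
        intro a w
        ext t
        simp }
    1 (by
      intro w
      rw [one_mul, ContinuousMap.norm_le _ (norm_nonneg _)]
      intro t
      exact vol_bound w t)

theorem vol_apply (w : C(unitInterval, E)) (t : unitInterval) :
    vol E w t = ∫ σ in (0 : ℝ)..t, w (projIcc 0 1 zero_le_one σ) := rfl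

theorem vol_norm_le (w : C(unitInterval, E)) : ‖vol E w‖ ≤ ‖w‖ := by
  rw [ContinuousMap.norm_le _ (norm_nonneg _)]
  intro t
  exact vol_bound w t

end Vol

section ParamFix
variable {E : Type} [NormedAddCommGroup E] [NormedSpace ℝ E] [CompleteSpace E]
variable {X : Type} [NormedAddCommGroup X] [NormedSpace ℝ X] [CompleteSpace X]

theorem param_fixed_unique {T : X → X} {ρ : ℝ}
    (hL : ∀ a b : X, ‖a‖ ≤ ρ → ‖b‖ ≤ ρ → ‖T a - T b‖ ≤ 1 / 4 * ‖a - b‖)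
    {t : ℝ} (ht : |t| ≤ 2) {c a b : X} (ha : ‖a‖ ≤ ρ) (hb : ‖b‖ ≤ ρ)
    (hea : a = c + t • T a) (heb : b = c + t • T b) : a = b := by
  have h1 : a - b = t • (T a - T b) := by
    rw [smul_sub]
    calc a - b = (c + t • T a) - (c + t • T b) := by rw [← hea, ← heb]
      _ = _ := by abel
  have h2 : ‖a - b‖ ≤ 2 * (1 / 4 * ‖a - b‖) := by
    calc ‖a - b‖ = |t| * ‖T a - T b‖ := by
          conv_lhs => rw [h1]
          rw [norm_smul, Real.norm_eq_abs]
      _ ≤ _ := by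
        gcongr
        exact hL a b ha hb
  have h3 : ‖a - b‖ = 0 := by linarith [norm_nonneg (a - b)]
  exact sub_eq_zero.1 (norm_eq_zero.1 h3)

theorem param_fixed_exists {T : X → X} {ρ M : ℝ} (hM : 0 ≤ M)
    (hT0 : ∀ a : X, ‖a‖ ≤ ρ → ‖T a‖ ≤ M)
    (hL : ∀ a b : X, ‖a‖ ≤ ρ → ‖b‖ ≤ ρ → ‖T a - T b‖ ≤ 1 / 4 * ‖a - b‖)
    {t : ℝ} (ht : |t| ≤ 2) {c : X} (hc : ‖c‖ + 2 * M < ρ) :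
    ∃ a : X, ‖a‖ < ρ ∧ a = c + t • T a := by
  have hmap : ∀ a : X, ‖a‖ ≤ ρ → ‖c + t • T a‖ < ρ := by
    intro a ha
    calc ‖c + t • T a‖ ≤ ‖c‖ + |t| * ‖T a‖ := by
          refine (norm_add_le _ _).trans ?_
          rw [norm_smul, Real.norm_eq_abs]
      _ ≤ ‖c‖ + 2 * M := by
          gcongr
          exact hT0 a ha
      _ < ρ := hc
  have hmaps : MapsTo (fun a => c + t • T a) (closedBall (0 : X) ρ) (closedBall 0 ρ) := by
    intro a ha
    rw [mem_closedBall_zero_iff] at ha ⊢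
    exact (hmap a ha).le
  have hcon : ContractingWith (1 / 2) (hmaps.restrict _ _ _) := by
    refine ⟨by rw [← NNReal.coe_lt_coe]; norm_num, LipschitzWith.of_dist_le_mul ?_⟩
    rintro ⟨a, ha⟩ ⟨b, hb⟩
    rw [mem_closedBall_zero_iff] at ha hb
    simp only [Subtype.dist_eq, MapsTo.val_restrict_apply, dist_eq_norm]
    rw [add_sub_add_left_eq_sub, ← smul_sub, norm_smul, Real.norm_eq_abs]
    have := hL a b ha hb
    push_cast
    calc |t| * ‖T a - T b‖ ≤ 2 * (1 / 4 * ‖a - b‖) := by gcongr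
      _ = _ := by ring
  have hρ : 0 ≤ ρ := by linarith [norm_nonneg c]
  obtain ⟨a, ha, hfix, -⟩ := hcon.exists_fixedPoint' isClosed_closedBall.isComplete hmaps
    (x := 0) (by simpa using hρ) (edist_ne_top _ _)
  rw [mem_closedBall_zero_iff] at ha
  refine ⟨a, ?_, hfix.symm⟩
  have := hmap a ha
  rwa [show c + t • T a = a from hfix] at this

theorem param_fixed_smooth {T : X → X} {ρ M s : ℝ} (hM : 0 ≤ M) (hT : ContDiff ℝ ∞ T)
    (hT0 : ∀ a : X, ‖a‖ ≤ ρ → ‖T a‖ ≤ M)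
    (hL : ∀ a b : X, ‖a‖ ≤ ρ → ‖b‖ ≤ ρ → ‖T a - T b‖ ≤ 1 / 4 * ‖a - b‖)
    (c : E →L[ℝ] X) (hc : ∀ x, ‖c x‖ ≤ ‖x‖) (hs : s + 2 * M ≤ ρ) :
    ∃ Γ : ℝ × E → X, ContDiffOn ℝ ∞ Γ (Ioo (-2) 2 ×ˢ ball 0 s) ∧
      ∀ p ∈ Ioo (-2 : ℝ) 2 ×ˢ ball (0 : E) s, ‖Γ p‖ < ρ ∧ Γ p = c p.2 + p.1 • T (Γ p) := by
  have hex : ∀ p : ℝ × E, p ∈ Ioo (-2 : ℝ) 2 ×ˢ ball (0 : E) s →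
      ∃ a : X, ‖a‖ < ρ ∧ a = c p.2 + p.1 • T a := by
    rintro ⟨t, x⟩ ⟨ht, hx⟩
    have hx' : ‖x‖ < s := by simpa using hx
    refine param_fixed_exists hM hT0 hL (abs_le.2 ⟨ht.1.le, ht.2.le⟩) ?_
    have := hc x
    simp only
    linarith
  choose! Γ hΓ1 hΓ2 using hex
  refine ⟨Γ, ?_, fun p hp => ⟨hΓ1 p hp, hΓ2 p hp⟩⟩
  have hopen : IsOpen (Ioo (-2 : ℝ) 2 ×ˢ ball (0 : E) s) := isOpen_Ioo.prod isOpen_ball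
  intro p₀ hp₀
  apply ContDiffAt.contDiffWithinAt
  let F : (ℝ × E) × X → X := fun q => q.2 - c q.1.2 - q.1.1 • T q.2
  have hF : ContDiff ℝ ∞ F := by
    have h1 : ContDiff ℝ ∞ (fun q : (ℝ × E) × X => T q.2) := hT.comp contDiff_snd
    have h2 : ContDiff ℝ ∞ (fun q : (ℝ × E) × X => c q.1.2) :=
      c.contDiff.comp (contDiff_snd.comp contDiff_fst)
    exact (contDiff_snd.sub h2).sub ((contDiff_fst.comp contDiff_fst).smul h1)
  let u : (ℝ × E) × X := (p₀, Γ p₀)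
  have hFu : F u = 0 := by
    have := hΓ2 p₀ hp₀
    simp only [F, u]
    rw [sub_sub, sub_eq_zero]
    exact this
  have hder : fderiv ℝ F u ∘L .inr ℝ (ℝ × E) X
      = 1 - p₀.1 • fderiv ℝ T (Γ p₀) := by
    have h1 : HasFDerivAt (fun a : X => F (p₀, a))
        (fderiv ℝ F u ∘L .inr ℝ (ℝ × E) X) (Γ p₀) := by
      have h2 : HasFDerivAt F (fderiv ℝ F u) (p₀, Γ p₀) :=
        (hF.differentiable (by simp) u).hasFDerivAt
      exact h2.comp (Γ p₀) (hasFDerivAt_prodMk_right p₀ (Γ p₀))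
    have h3 : HasFDerivAt (fun a : X => F (p₀, a))
        (1 - p₀.1 • fderiv ℝ T (Γ p₀)) (Γ p₀) := by
      have h4 : HasFDerivAt T (fderiv ℝ T (Γ p₀)) (Γ p₀) :=
        (hT.differentiable (by simp) _).hasFDerivAt
      exact ((hasFDerivAt_id _).sub_const (c p₀.2)).sub (h4.const_smul p₀.1)
    exact h1.unique h3
  have hnorm : ‖fderiv ℝ T (Γ p₀)‖ ≤ 1 / 4 := by
    have h1 : LipschitzOnWith (1 / 4) T (closedBall 0 ρ) := by
      refine LipschitzOnWith.of_dist_le_mul fun a ha b hb => ?_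
      rw [mem_closedBall_zero_iff] at ha hb
      simpa [dist_eq_norm] using hL a b ha hb
    have h2 : closedBall (0 : X) ρ ∈ nhds (Γ p₀) := by
      refine closedBall_mem_nhds_of_mem ?_
      simpa using hΓ1 p₀ hp₀
    simpa using norm_fderiv_le_of_lipschitzOn ℝ h2 h1
  have hinv : (fderiv ℝ F u ∘L .inr ℝ (ℝ × E) X).IsInvertible := by
    rw [hder]
    have h1 : IsUnit (1 - p₀.1 • fderiv ℝ T (Γ p₀)) := by
      apply isUnit_one_sub_of_norm_lt_one
      rw [norm_smul, Real.norm_eq_abs]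
      have : |p₀.1| ≤ 2 := abs_le.2 ⟨hp₀.1.1.le, hp₀.1.2.le⟩
      calc _ ≤ (2 : ℝ) * (1 / 4) := by gcongr
        _ < 1 := by norm_num
    obtain ⟨w, hw⟩ := h1
    exact ⟨ContinuousLinearEquiv.ofUnit w, by rw [← hw]; rfl⟩
  have hcd : ContDiffAt ℝ ∞ F u := hF.contDiffAt
  let g := hcd.implicitFunction (by simp) hinv
  have hg : ContDiffAt ℝ ∞ g p₀ := hcd.contDiffAt_implicitFunction (by simp) hinv
  have hg0 : g p₀ = Γ p₀ := hcd.implicitFunction_apply_self (by simp) hinv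
  have hge : ∀ᶠ p in nhds p₀, F (p, g p) = F u :=
    hcd.eventually_apply_implicitFunction (by simp) hinv
  have hgn : ∀ᶠ p in nhds p₀, ‖g p‖ < ρ := by
    refine hg.continuousAt.norm.eventually_lt continuousAt_const ?_
    rw [hg0]; exact hΓ1 p₀ hp₀
  refine hg.congr_of_eventuallyEq ?_
  filter_upwards [hge, hgn, hopen.mem_nhds hp₀] with p h1 h2 h3
  refine (param_fixed_unique hL (abs_le.2 ⟨h3.1.1.le, h3.1.2.le⟩) h2.le (hΓ1 p h3).le ?_
    (hΓ2 p h3)).symm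
  rw [hFu] at h1
  simp only [F] at h1
  rw [sub_sub, sub_eq_zero] at h1
  exact h1

end ParamFix

section Est
open scoped Nat
variable {E : Type} [NormedAddCommGroup E] [NormedSpace ℝ E]

theorem sup_iteratedFDerivWithin {K : Type} [TopologicalSpace K] [CompactSpace K]
    {F : Type} [NormedAddCommGroup F] [NormedSpace ℝ F]
    {h : E → C(K, F)} {U : Set E} (hU : UniqueDiffOn ℝ U) (hh : ContDiffOn ℝ ∞ h U)
    {x : E} (hx : x ∈ U) (i : ℕ) {B : ℝ} (hB0 : 0 ≤ B)
    (hB : ∀ τ, ‖iteratedFDerivWithin ℝ i (fun y => h y τ) U x‖ ≤ B) :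
    ‖iteratedFDerivWithin ℝ i h U x‖ ≤ B := by
  refine ContinuousMultilinearMap.opNorm_le_bound hB0 fun v => ?_
  rw [ContinuousMap.norm_le _ (by positivity)]
  intro τ
  have h1 := (ContinuousMap.evalCLM ℝ τ : C(K, F) →L[ℝ] F).iteratedFDerivWithin_comp_left
    (i := i) (hh x hx) hU hx (by exact_mod_cast le_top)
  have h2 : (iteratedFDerivWithin ℝ i h U x v) τ
      = iteratedFDerivWithin ℝ i (fun y => h y τ) U x v := by
    have : (fun y => h y τ) = (ContinuousMap.evalCLM ℝ τ : C(K, F) →L[ℝ] F) ∘ h := rfl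
    rw [this, h1]
    rfl
  rw [h2]
  refine (ContinuousMultilinearMap.le_opNorm _ _).trans ?_
  gcongr
  exact hB τ

theorem eval_iteratedFDerivWithin {K : Type} [TopologicalSpace K] [CompactSpace K]
    {F : Type} [NormedAddCommGroup F] [NormedSpace ℝ F]
    {h : E → C(K, F)} {U : Set E} (hU : UniqueDiffOn ℝ U) (hh : ContDiffOn ℝ ∞ h U)
    {x : E} (hx : x ∈ U) (i : ℕ) (τ : K) :
    ‖iteratedFDerivWithin ℝ i (fun y => h y τ) U x‖ ≤ ‖iteratedFDerivWithin ℝ i h U x‖ := by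
  have h1 := (ContinuousMap.evalCLM ℝ τ : C(K, F) →L[ℝ] F).norm_iteratedFDerivWithin_comp_left
    (n := i) (hh x hx) hU hx (by exact_mod_cast le_top)
  refine h1.trans (mul_le_of_le_one_left (norm_nonneg _) ?_)
  refine ContinuousLinearMap.opNorm_le_bound _ zero_le_one fun w => ?_
  rw [one_mul]
  exact w.norm_coe_le_norm τ

theorem weighted_comp {F W : Type} [NormedAddCommGroup F] [NormedSpace ℝ F]
    [NormedAddCommGroup W] [NormedSpace ℝ W] {g : F → W} (hg : ContDiff ℝ ∞ g)
    {f : E → F} {U : Set E} (hU : UniqueDiffOn ℝ U) (hf : ContDiffOn ℝ ∞ f U)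
    {x : E} (hx : x ∈ U) (k : ℕ) {A C D : ℝ} (hA : 0 < A)
    (hC : ∀ j ≤ k, ‖iteratedFDeriv ℝ j g (f x)‖ ≤ C * A ^ j)
    (hD : ∀ j, 1 ≤ j → j ≤ k → A * ‖iteratedFDerivWithin ℝ j f U x‖ ≤ (D * A) ^ j) :
    ‖iteratedFDerivWithin ℝ k (g ∘ f) U x‖ ≤ k ! * C * (D * A) ^ k := by
  let g' : F → W := fun z => g (A⁻¹ • z)
  have hg' : ContDiff ℝ ∞ g' := hg.comp (contDiff_const_smul _)
  have hf' : ContDiffOn ℝ ∞ (A • f) U := hf.const_smul A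
  have he : g ∘ f = g' ∘ (A • f) := by
    ext y
    simp [g', smul_smul, inv_mul_cancel₀ hA.ne']
  rw [he]
  refine norm_iteratedFDerivWithin_comp_le (t := univ) (N := ∞) hg'.contDiffOn hf'
    (by exact_mod_cast le_top) uniqueDiffOn_univ hU (mapsTo_univ _ _) hx ?_ ?_
  · intro j hj
    rw [iteratedFDerivWithin_univ, iteratedFDeriv_comp_const_smul _
      (hg.of_le (by exact_mod_cast le_top)), norm_smul]
    simp only [Pi.smul_apply, smul_smul, inv_mul_cancel₀ hA.ne', one_smul]
    rw [norm_pow, norm_inv, Real.norm_of_nonneg hA.le, inv_pow]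
    rw [inv_mul_le_iff₀ (by positivity), mul_comm]
    exact hC j hj
  · intro j h1 hj
    rw [iteratedFDerivWithin_const_smul_apply ((hf x hx).of_le (by exact_mod_cast le_top)) hU hx,
      norm_smul, Real.norm_of_nonneg hA.le]
    exact hD j h1 hj

/-- Combinatorial constant. -/
def wConst (i : ℕ) : ℝ := ∑ k ∈ Finset.range i, (i.choose (k + 1) : ℝ) * ((k + 1) ! : ℝ)

theorem wConst_nonneg (i : ℕ) : 0 ≤ wConst i := by unfold wConst; positivity

theorem comp_top_bound {Z : E → E} (hZ : ContDiff ℝ ∞ Z)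
    {f : E → E} {U : Set E} (hUo : IsOpen U) (hf : ContDiffOn ℝ ∞ f U)
    {x : E} (hx : x ∈ U) (i : ℕ) {A L B D : ℝ} (hA : 0 < A) (hD0 : 0 ≤ D) (hB : 0 ≤ B)
    (hL : ‖fderiv ℝ Z (f x)‖ ≤ L)
    (hZb : ∀ j ≤ i, ‖iteratedFDeriv ℝ (j + 1) Z (f x)‖ ≤ B * A ^ j)
    (hfb : ∀ j < i, ‖iteratedFDerivWithin ℝ (j + 1) f U x‖ ≤ D ^ (j + 1) * A ^ j) :
    ‖iteratedFDerivWithin ℝ (i + 1) (Z ∘ f) U x‖ ≤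
      L * ‖iteratedFDerivWithin ℝ (i + 1) f U x‖ + B * D ^ (i + 1) * A ^ i * wConst i := by
  have hU := hUo.uniqueDiffOn (𝕜 := ℝ)
  have hZ1 : ContDiff ℝ ∞ (fderiv ℝ Z) := hZ.fderiv_right (by simp)
  have hf1 : ContDiffOn ℝ ∞ (fderivWithin ℝ f U) U := hf.fderivWithin hU (by simp)
  rw [← norm_iteratedFDerivWithin_fderivWithin hU hx]
  have hcongr : EqOn (fderivWithin ℝ (Z ∘ f) U)
      (fun y => ContinuousLinearMap.compL ℝ E E E ((fderiv ℝ Z ∘ f) y) (fderivWithin ℝ f U y)) U := by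
    intro y hy
    simp only [Function.comp, ContinuousLinearMap.compL_apply]
    exact fderiv_comp_fderivWithin y (hZ.differentiable (by simp) _)
      (hf.differentiableOn (by simp) y hy) (hU y hy)
  rw [iteratedFDerivWithin_congr hcongr hx]
  refine (ContinuousLinearMap.norm_iteratedFDerivWithin_le_of_bilinear_of_le_one _
    (hZ1.comp_contDiffOn hf) hf1 hU hx (n := i) (by exact_mod_cast le_top)
    (ContinuousLinearMap.norm_compL_le ℝ E E E)).trans ?_
  rw [Finset.sum_range_succ']
  rw [add_comm]
  simp only [Nat.choose_zero_right, Nat.cast_one, one_mul, Nat.sub_zero,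
    norm_iteratedFDerivWithin_zero, norm_iteratedFDerivWithin_fderivWithin hU hx]
  refine add_le_add (by gcongr; exact hL) ?_
  rw [wConst, Finset.mul_sum]
  refine Finset.sum_le_sum fun k hk => ?_
  rw [Finset.mem_range] at hk
  have h1 : ‖iteratedFDerivWithin ℝ (k + 1) (fderiv ℝ Z ∘ f) U x‖ ≤
      ((k + 1) ! : ℝ) * B * (D * A) ^ (k + 1) := by
    refine weighted_comp hZ1 hU hf hx (k + 1) hA ?_ ?_
    · intro j hj
      rw [norm_iteratedFDeriv_fderiv]
      exact hZb j (by omega)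
    · intro j hj1 hj
      obtain ⟨j, rfl⟩ : ∃ j', j = j' + 1 := ⟨j - 1, by omega⟩
      have := hfb j (by omega)
      calc A * ‖iteratedFDerivWithin ℝ (j + 1) f U x‖ ≤ A * (D ^ (j + 1) * A ^ j) := by gcongr
        _ = _ := by ring
  have h2 : ‖iteratedFDerivWithin ℝ (i - (k + 1) + 1) f U x‖ ≤
      D ^ (i - (k + 1) + 1) * A ^ (i - (k + 1)) := hfb _ (by omega)
  obtain ⟨l, rfl⟩ : ∃ l, i = l + (k + 1) := ⟨i - (k + 1), by omega⟩
  rw [Nat.add_sub_cancel] at h2 ⊢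
  calc _ ≤ ((l + (k + 1)).choose (k + 1) : ℝ) * (((k + 1) ! : ℝ) * B * (D * A) ^ (k + 1)) *
        (D ^ (l + 1) * A ^ l) := by gcongr
    _ = _ := by ring

/-- Constants in the derivative estimates. -/
noncomputable def dSeq (K : ℝ) : ℕ → ℝ
  | 0 => 2 * K
  | (i + 1) => dSeq K i + 2 * K * wConst (i + 1) * dSeq K i ^ (i + 2)

theorem dSeq_ge {K : ℝ} (hK : 1 ≤ K) (i : ℕ) : 2 * K ≤ dSeq K i := by
  induction i with
  | zero => exact le_rfl
  | succ i ih =>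
    have h0 : 0 ≤ dSeq K i := by linarith
    have := wConst_nonneg (i + 1)
    rw [dSeq]
    have : 0 ≤ 2 * K * wConst (i + 1) * dSeq K i ^ (i + 2) := by positivity
    linarith

theorem dSeq_mono {K : ℝ} (hK : 1 ≤ K) : Monotone (dSeq K) := by
  refine monotone_nat_of_le_succ fun i => ?_
  have h0 : 0 ≤ dSeq K i := by linarith [dSeq_ge hK i]
  have := wConst_nonneg (i + 1)
  rw [dSeq]
  have : 0 ≤ 2 * K * wConst (i + 1) * dSeq K i ^ (i + 2) := by positivity
  linarith

theorem dSeq_continuous (i : ℕ) : Continuous (fun K => dSeq K i) := by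
  induction i with
  | zero => simp only [dSeq]; fun_prop
  | succ i ih => simp only [dSeq]; fun_prop

theorem arith_core (n : ℕ) {K M A : ℝ} (hK : 1 ≤ K) (hM0 : 0 ≤ M) (hM : M ≤ 1 / 4) (hA : 1 ≤ A)
    (d e : ℕ → ℝ) (hd0 : ∀ i, 0 ≤ d i) (hde1 : d 1 ≤ 1 + e 1)
    (hde : ∀ i, 2 ≤ i → d i ≤ e i)
    (he1 : e 1 ≤ K * M * d 1) (he1' : e 1 ≤ 1 / 4 * d 1)
    (hrec : ∀ i ≤ n, ∀ D : ℝ, 0 ≤ D → (∀ j < i, d (j + 1) ≤ D ^ (j + 1) * A ^ j) →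
      e (i + 1) ≤ 1 / 4 * d (i + 1) + K * M * D ^ (i + 1) * A ^ i * wConst i) :
    ∀ i ≤ n, e (i + 1) ≤ dSeq K i * M * A ^ i ∧ d (i + 1) ≤ dSeq K i ^ (i + 1) * A ^ i := by
  intro i
  induction i using Nat.strong_induction_on with
  | _ i ih =>
    intro hi
    rcases i with _ | i
    · have h1 : d 1 ≤ 4 / 3 := by linarith
      simp only [zero_add, pow_zero, mul_one, pow_one, dSeq]
      constructor
      · have : K * M * d 1 ≤ K * M * 2 := by gcongr; linarith
        linarith
      · linarith
    · have hD := dSeq_ge hK i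
      have hD0 : 0 ≤ dSeq K i := by linarith
      have hW := wConst_nonneg (i + 1)
      have hS := dSeq_ge hK (i + 1)
      have h1 := hrec (i + 1) hi (dSeq K i) hD0 (by
        intro j hj
        refine (ih j hj (by omega)).2.trans ?_
        have h3 : dSeq K j ≤ dSeq K i := dSeq_mono hK (by omega)
        have h4 : 0 ≤ dSeq K j := by linarith [dSeq_ge hK j]
        gcongr)
      have h2 := hde (i + 1 + 1) (by omega)
      have hA0 : 0 ≤ A := by linarith
      have h3 : e (i + 1 + 1) ≤ dSeq K (i + 1) * M * A ^ (i + 1) := by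
        have h5 : 0 ≤ K * M * dSeq K i ^ (i + 1 + 1) * A ^ (i + 1) * wConst (i + 1) := by positivity
        have h6 : e (i + 1 + 1) ≤
            2 * (K * M * dSeq K i ^ (i + 1 + 1) * A ^ (i + 1) * wConst (i + 1)) := by linarith
        have h7 : 0 ≤ dSeq K i * M * A ^ (i + 1) := by positivity
        rw [dSeq]
        calc _ ≤ _ := h6
          _ ≤ 2 * (K * M * dSeq K i ^ (i + 1 + 1) * A ^ (i + 1) * wConst (i + 1))
            + dSeq K i * M * A ^ (i + 1) := by linarith
          _ = _ := by ring
      refine ⟨h3, (h2.trans h3).trans ?_⟩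
      gcongr
      have h8 : dSeq K (i + 1) ≤ dSeq K (i + 1) ^ (i + 1 + 1) :=
        le_self_pow₀ (by linarith) (by omega)
      nlinarith

end Est

section EstFlow
variable {E : Type} [NormedAddCommGroup E] [NormedSpace ℝ E]

theorem flow_deriv_est {Z : E → E} (hZ : ContDiff ℝ ∞ Z) {G : E → C(unitInterval, E)}
    {U : Set E} (hUo : IsOpen U) (hG : ContDiffOn ℝ ∞ G U) {c : E →L[ℝ] C(unitInterval, E)}
    (hc : ‖c‖ ≤ 1)
    (heq : ∀ x ∈ U, G x = c x + vol E (nem unitInterval Z hZ.continuous (G x)))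
    {ρ : ℝ} (hρ : ∀ x ∈ U, ‖G x‖ < ρ)
    (hL : ∀ y, ‖y‖ < ρ → ‖fderiv ℝ Z y‖ ≤ 1 / 4) (n : ℕ) {K M A : ℝ}
    (hK : 1 ≤ K) (hM0 : 0 ≤ M) (hM : M ≤ 1 / 4) (hA : 1 ≤ A)
    (hZb : ∀ y, ‖y‖ < ρ → ∀ j ≤ n, ‖iteratedFDeriv ℝ (j + 1) Z y‖ ≤ K * M * A ^ j)
    {x : E} (hx : x ∈ U) (τ : unitInterval) :
    ‖iteratedFDerivWithin ℝ (n + 1)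
      (fun y => vol E (nem unitInterval Z hZ.continuous (G y)) τ) U x‖ ≤
      dSeq K n * M * A ^ n := by
  have hU := hUo.uniqueDiffOn (𝕜 := ℝ)
  set N : E → C(unitInterval, E) := fun y => nem unitInterval Z hZ.continuous (G y) with hN
  have hNs : ContDiffOn ℝ ∞ N U := (contDiff_nem hZ).comp_contDiffOn hG
  have hvol1 : ‖vol E‖ ≤ 1 :=
    ContinuousLinearMap.opNorm_le_bound _ zero_le_one fun w => by
      rw [one_mul]; exact vol_norm_le w
  have hVs : ContDiffOn ℝ ∞ (vol E ∘ N) U := (vol E).contDiff.comp_contDiffOn hNs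
  have hv : ∀ i, ‖iteratedFDerivWithin ℝ i (vol E ∘ N) U x‖ ≤
      ‖iteratedFDerivWithin ℝ i N U x‖ := fun i =>
    ((vol E).norm_iteratedFDerivWithin_comp_left (n := i) (hNs x hx) hU hx
      (by exact_mod_cast le_top)).trans (mul_le_of_le_one_left (norm_nonneg _) hvol1)
  have hGt : ∀ t, ContDiffOn ℝ ∞ (fun y => G y t) U := fun t =>
    (ContinuousMap.evalCLM ℝ t : C(unitInterval, E) →L[ℝ] E).contDiff.comp_contDiffOn hG
  have hGρ : ∀ t, ‖G x t‖ < ρ := fun t => ((G x).norm_coe_le_norm t).trans_lt (hρ x hx)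
  have hcz : ∀ i, 2 ≤ i → iteratedFDerivWithin ℝ i c U x = 0 := by
    intro i hi
    obtain ⟨j, rfl⟩ : ∃ j, i = j + 1 + 1 := ⟨i - 2, by omega⟩
    rw [← norm_eq_zero, ← norm_iteratedFDerivWithin_fderivWithin hU hx]
    have : EqOn (fderivWithin ℝ c U) (fun _ => c) U := fun y hy => by
      rw [c.fderivWithin (hU y hy)]
    rw [iteratedFDerivWithin_congr this hx, iteratedFDerivWithin_const_of_ne (by omega)]
    simp
  have hGeq : ∀ i, iteratedFDerivWithin ℝ i G U x =
      iteratedFDerivWithin ℝ i c U x + iteratedFDerivWithin ℝ i (vol E ∘ N) U x := by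
    intro i
    have : EqOn G ((c : E → _) + vol E ∘ N) U := fun y hy => heq y hy
    rw [iteratedFDerivWithin_congr this hx]
    exact iteratedFDerivWithin_add_apply (c.contDiff.contDiffWithinAt)
      ((hVs x hx).of_le (by exact_mod_cast le_top)) hU hx
  have key := arith_core n hK hM0 hM hA (fun j => ‖iteratedFDerivWithin ℝ j G U x‖)
    (fun j => ‖iteratedFDerivWithin ℝ j N U x‖) (fun _ => norm_nonneg _) ?_ ?_ ?_ ?_ ?_ n le_rfl
  · refine le_trans ?_ key.1
    exact (eval_iteratedFDerivWithin hU hVs hx (n + 1) τ).trans (hv _)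
  ·
    rw [hGeq]
    refine (norm_add_le _ _).trans (add_le_add ?_ (hv 1))
    rw [← zero_add 1, ← norm_iteratedFDerivWithin_fderivWithin hU hx,
      norm_iteratedFDerivWithin_zero, c.fderivWithin (hU x hx)]
    exact hc
  · intro i hi
    rw [hGeq, hcz i hi, zero_add]
    exact hv i
  ·
    refine sup_iteratedFDerivWithin hU hNs hx 1 (by positivity) fun t => ?_
    have h := comp_top_bound hZ hUo (hGt t) hx 0 (A := 1) (L := K * M) (B := K * M) (D := 0)
      one_pos le_rfl (by positivity) (by
        have := hZb _ (hGρ t) 0 (by omega)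
        rw [← norm_iteratedFDeriv_fderiv] at this
        simpa using this)
      (by intro j hj; obtain rfl : j = 0 := by omega
          simpa using hZb _ (hGρ t) 0 (by omega)) (by intro j hj; omega)
    simp only [zero_add, pow_one, mul_zero, zero_mul, add_zero] at h
    refine h.trans ?_
    gcongr
    exact eval_iteratedFDerivWithin hU hG hx 1 t
  ·
    refine sup_iteratedFDerivWithin hU hNs hx 1 (by positivity) fun t => ?_
    have h := comp_top_bound hZ hUo (hGt t) hx 0 (A := 1) (L := 1 / 4) (B := K * M) (D := 0)
      one_pos le_rfl (by positivity) (hL _ (hGρ t))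
      (by intro j hj; obtain rfl : j = 0 := by omega
          simpa using hZb _ (hGρ t) 0 (by omega)) (by intro j hj; omega)
    simp only [zero_add, pow_one, mul_zero, zero_mul, add_zero] at h
    refine h.trans ?_
    gcongr
    exact eval_iteratedFDerivWithin hU hG hx 1 t
  · intro i hi D hD0 hd
    have hW := wConst_nonneg i
    have hA0 : 0 < A := by linarith
    refine sup_iteratedFDerivWithin hU hNs hx (i + 1) (by positivity) fun t => ?_
    have h := comp_top_bound hZ hUo (hGt t) hx i (A := A) (L := 1 / 4) (B := K * M) (D := D)
      hA0 hD0 (by positivity) (hL _ (hGρ t))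
      (by intro j hj
          exact hZb _ (hGρ t) j (by omega))
      (fun j hj => (eval_iteratedFDerivWithin hU hG hx (j + 1) t).trans (hd j hj))
    refine h.trans ?_
    gcongr
    exact eval_iteratedFDerivWithin hU hG hx (i + 1) t

end EstFlow

section Interp

theorem convex_seq_nonpos (v : ℕ → ℝ) (hv : ∀ k, 2 * v (k + 1) ≤ v k + v (k + 2)) (h0 : v 0 ≤ 0)
    (N : ℕ) (hN : v N ≤ 0) : ∀ j ≤ N, v j ≤ 0 := by
  have P : ∀ k, 0 < v k → v k ≤ v (k + 1) := by
    intro k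
    induction k with
    | zero => intro h; linarith
    | succ k ih =>
      intro h
      have := hv k
      by_cases hk : 0 < v k
      · have := ih hk
        linarith
      · push Not at hk
        have h2 : v (k + 1 + 1) = v (k + 2) := rfl
        linarith
  have Q : ∀ j i, 0 < v j → v j ≤ v (j + i) := by
    intro j i hj
    induction i with
    | zero => exact le_rfl
    | succ i ih => exact ih.trans (P (j + i) (hj.trans_le ih))
  intro j hj
  by_contra hc
  push Not at hc
  have := Q j (N - j) hc
  rw [Nat.add_sub_cancel' hj] at this
  linarith

theorem interp_seq (u : ℕ → ℝ) (hu : ∀ k, 0 < u k) (hmono : Monotone u) {κ : ℝ} (hκ : 1 ≤ κ)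
    (h : ∀ k, u (k + 1) ^ 2 ≤ κ ^ 2 * (u k * u (k + 2))) (N : ℕ) :
    ∃ A : ℝ, 1 ≤ A ∧ u 0 * A ^ N = u N ∧ ∀ j ≤ N, u j ≤ κ ^ (N ^ 2) * u 0 * A ^ j := by
  rcases Nat.eq_zero_or_pos N with rfl | hN
  · refine ⟨1, le_rfl, by simp, ?_⟩
    intro j hj
    obtain rfl : j = 0 := by omega
    simp
  have hN' : (0 : ℝ) < N := by exact_mod_cast hN
  have hκ0 : 0 < κ := by linarith
  have hl : 0 ≤ Real.log κ := Real.log_nonneg hκ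
  set w : ℕ → ℝ := fun k => Real.log (u k) with hw
  set a : ℝ := (w N - w 0) / N with ha
  have haN : a * N = w N - w 0 := by rw [ha]; field_simp
  have hwm : w 0 ≤ w N := Real.log_le_log (hu 0) (hmono (Nat.zero_le _))
  have ha0 : 0 ≤ a := div_nonneg (by linarith) hN'.le
  have hw2 : ∀ k, 2 * w (k + 1) ≤ 2 * Real.log κ + (w k + w (k + 2)) := by
    intro k
    have h1 := Real.log_le_log (pow_pos (hu (k + 1)) 2) (h k)
    rw [Real.log_pow, Real.log_mul (by positivity) (mul_pos (hu _) (hu _)).ne', Real.log_pow,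
      Real.log_mul (hu _).ne' (hu _).ne'] at h1
    exact_mod_cast h1
  have hexp : ∀ k, Real.exp (w k) = u k := fun k => Real.exp_log (hu k)
  have hv := convex_seq_nonpos (fun k => w k - Real.log κ * (k * (N - k)) - w 0 - k * a)
    (by intro k; have := hw2 k; push_cast; nlinarith) (by simp) N (by
      simp only [sub_self, mul_zero]; linarith)
  refine ⟨Real.exp a, Real.one_le_exp ha0, ?_, ?_⟩
  · rw [← Real.exp_nat_mul, ← hexp 0, ← Real.exp_add, ← hexp N]
    congr 1
    linarith
  · intro j hj
    have h1 := hv j hj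
    have hjN : (j : ℝ) ≤ N := by exact_mod_cast hj
    have hj0 : (0 : ℝ) ≤ j := by positivity
    rw [← hexp j, ← hexp 0, ← Real.exp_nat_mul, ← Real.exp_log hκ0, ← Real.exp_nat_mul,
      ← Real.exp_add, ← Real.exp_add]
    apply Real.exp_le_exp.2
    have h2 : Real.log κ * (j * (N - j)) ≤ Real.log κ * (N ^ 2) := by
      gcongr; nlinarith
    push_cast
    nlinarith

variable {E : Type} [NormedAddCommGroup E] [NormedSpace ℝ E]
variable {F : Type} [NormedAddCommGroup F] [NormedSpace ℝ F]

theorem uniqueDiffOn_cball {r : ℝ} (hr : 0 < r) : UniqueDiffOn ℝ (closedBall (0 : E) r) := by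
  refine uniqueDiffOn_convex (convex_closedBall 0 r) ⟨0, ?_⟩
  exact ball_subset_interior_closedBall (mem_ball_self hr)

theorem landau {f : E → F} {r h M0 M2 : ℝ} (hh : 0 < h) (hhr : h ≤ r)
    (hf : DifferentiableOn ℝ f (closedBall 0 r)) (hM2 : 0 ≤ M2)
    (h0 : ∀ x ∈ closedBall (0 : E) r, ‖f x‖ ≤ M0)
    (h2 : ∀ x ∈ closedBall (0 : E) r, ∀ y ∈ closedBall (0 : E) r,
      ‖fderivWithin ℝ f (closedBall 0 r) y - fderivWithin ℝ f (closedBall 0 r) x‖ ≤ M2 * ‖y - x‖)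
    {x : E} (hx : x ∈ closedBall (0 : E) r) :
    ‖fderivWithin ℝ f (closedBall 0 r) x‖ ≤ M0 / h + 2 * h * M2 := by
  have hr : 0 < r := hh.trans_le hhr
  have hM0 : 0 ≤ M0 := (norm_nonneg _).trans (h0 x hx)
  have hx' : ‖x‖ ≤ r := by simpa using hx
  refine ContinuousLinearMap.opNorm_le_of_unit_norm (by positivity) fun v hv => ?_
  set l := h / r with hl
  have hl0 : 0 ≤ l := by positivity
  have hl1 : l ≤ 1 := (div_le_one hr).2 hhr
  have hlr : l * r = h := by rw [hl]; field_simp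
  set S := closedBall (0 : E) r ∩ closedBall x (2 * h) with hS
  have hSc : Convex ℝ S := (convex_closedBall _ _).inter (convex_closedBall _ _)
  have hmem : ∀ e : ℝ, |e| = 1 → (1 - l) • x + (e * h) • v ∈ S := by
    intro e he
    have h3 : ‖(e * h) • v‖ = h := by
      rw [norm_smul, hv, mul_one, Real.norm_eq_abs, abs_mul, he, one_mul, abs_of_pos hh]
    constructor
    · rw [mem_closedBall_zero_iff]
      refine (norm_add_le _ _).trans ?_
      rw [h3, norm_smul, Real.norm_of_nonneg (by linarith)]
      nlinarith
    · rw [mem_closedBall, dist_eq_norm]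
      have : (1 - l) • x + (e * h) • v - x = (e * h) • v - l • x := by
        rw [sub_smul, one_smul]; abel
      rw [this]
      refine (norm_sub_le _ _).trans ?_
      rw [h3, norm_smul, Real.norm_of_nonneg hl0]
      nlinarith
  have hp := hmem 1 (by simp)
  have hq := hmem (-1) (by simp)
  have hmv := hSc.norm_image_sub_le_of_norm_hasFDerivWithin_le' (f := f)
    (f' := fun y => fderivWithin ℝ f (closedBall 0 r) y)
    (φ := fderivWithin ℝ f (closedBall 0 r) x) (C := M2 * (2 * h))
    (fun y hy => ((hf y hy.1).hasFDerivWithinAt).mono inter_subset_left)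
    (fun y hy => (h2 x hx y hy.1).trans (by
      gcongr
      have := hy.2
      rwa [mem_closedBall, dist_eq_norm] at this)) hq hp
  have hd : ((1 - l) • x + (1 * h) • v) - ((1 - l) • x + (-1 * h) • v) = (2 * h) • v := by
    rw [add_sub_add_left_eq_sub, ← sub_smul]; congr 1; ring
  rw [hd, map_smul, norm_smul, hv, mul_one, Real.norm_of_nonneg (by positivity)] at hmv
  have h4 : 2 * h * ‖fderivWithin ℝ f (closedBall 0 r) x v‖ ≤ M0 + M0 + M2 * (2 * h) * (2 * h) := by
    set P := f ((1 - l) • x + (1 * h) • v)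
    set Q := f ((1 - l) • x + (-1 * h) • v)
    have hP : ‖P‖ ≤ M0 := h0 _ hp.1
    have hQ : ‖Q‖ ≤ M0 := h0 _ hq.1
    calc 2 * h * ‖fderivWithin ℝ f (closedBall 0 r) x v‖
        = ‖(2 * h) • fderivWithin ℝ f (closedBall 0 r) x v‖ := by
          rw [norm_smul, Real.norm_of_nonneg (by positivity)]
      _ = ‖P - Q - (P - Q - (2 * h) • fderivWithin ℝ f (closedBall 0 r) x v)‖ := by congr 1; abel
      _ ≤ ‖P - Q‖ + _ := norm_sub_le _ _
      _ ≤ (‖P‖ + ‖Q‖) + _ := by gcongr; exact norm_sub_le _ _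
      _ ≤ _ := by gcongr
  have h5 : ‖fderivWithin ℝ f (closedBall 0 r) x v‖ * h ≤ (M0 / h + 2 * h * M2) * h := by
    have : M0 / h * h = M0 := by field_simp
    nlinarith
  exact le_of_mul_le_mul_right h5 hh

theorem landau_iter {f : E → F} {r h M0 M2 : ℝ} (hh : 0 < h) (hhr : h ≤ r) (k : ℕ)
    (hf : ContDiffOn ℝ ∞ f (closedBall 0 r)) (hM2 : 0 ≤ M2)
    (h0 : ∀ x ∈ closedBall (0 : E) r, ‖iteratedFDerivWithin ℝ k f (closedBall 0 r) x‖ ≤ M0)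
    (h2 : ∀ x ∈ closedBall (0 : E) r, ‖iteratedFDerivWithin ℝ (k + 2) f (closedBall 0 r) x‖ ≤ M2)
    {x : E} (hx : x ∈ closedBall (0 : E) r) :
    ‖iteratedFDerivWithin ℝ (k + 1) f (closedBall 0 r) x‖ ≤ M0 / h + 2 * h * M2 := by
  have hr : 0 < r := hh.trans_le hhr
  have hU := uniqueDiffOn_cball (E := E) hr
  have hd : ∀ j : ℕ, DifferentiableOn ℝ (iteratedFDerivWithin ℝ j f (closedBall 0 r))
      (closedBall 0 r) := fun j =>
    hf.differentiableOn_iteratedFDerivWithin (by exact_mod_cast WithTop.coe_lt_top _) hU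
  rw [← norm_fderivWithin_iteratedFDerivWithin]
  refine landau hh hhr (hd k) hM2 h0 ?_ hx
  intro y hy z hz
  have hmv := (convex_closedBall (0 : E) r).norm_image_sub_le_of_norm_fderivWithin_le
    (f := iteratedFDerivWithin ℝ (k + 1) f (closedBall 0 r)) (C := M2) (hd (k + 1))
    (fun w hw => by rw [norm_fderivWithin_iteratedFDerivWithin]; exact h2 w hw) hy hz
  rw [iteratedFDerivWithin_succ_eq_comp_left] at hmv
  simp only [Function.comp] at hmv
  rw [← dist_eq_norm] at hmv ⊢
  exact (LinearIsometryEquiv.dist_map _ _ _).symm.le.trans hmv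

variable (m : ℕ) {r : ℝ} {Y : EuclideanSpace ℝ (Fin m) → EuclideanSpace ℝ (Fin m)}

theorem cn_bdd (hr : 0 < r) (hY : ContDiffOn ℝ ∞ Y (closedBall 0 r)) (n : ℕ) :
    BddAbove (range fun p : (closedBall (0 : EuclideanSpace ℝ (Fin m)) r :
      Set (EuclideanSpace ℝ (Fin m))) × Fin (n + 1) =>
        ‖iteratedFDerivWithin ℝ p.2 Y (closedBall 0 r) p.1‖) := by
  have h : ∀ i : ℕ, ∃ B, ∀ x ∈ closedBall (0 : EuclideanSpace ℝ (Fin m)) r,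
      ‖iteratedFDerivWithin ℝ i Y (closedBall 0 r) x‖ ≤ B := fun i =>
    (isCompact_closedBall _ _).exists_bound_of_continuousOn
      (hY.continuousOn_iteratedFDerivWithin (by exact_mod_cast le_top) (uniqueDiffOn_cball hr))
  choose B hB using h
  refine ⟨∑ i ∈ Finset.range (n + 1), |B i|, ?_⟩
  rintro _ ⟨⟨x, i⟩, rfl⟩
  refine (hB i x x.2).trans ((le_abs_self _).trans ?_)
  exact Finset.single_le_sum (f := fun i => |B i|) (fun _ _ => abs_nonneg _)
    (Finset.mem_range.2 i.2)

theorem cn_le (hr : 0 < r) (hY : ContDiffOn ℝ ∞ Y (closedBall 0 r)) {i n : ℕ} (hi : i ≤ n)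
    {x : EuclideanSpace ℝ (Fin m)} (hx : x ∈ closedBall 0 r) :
    ‖iteratedFDerivWithin ℝ i Y (closedBall 0 r) x‖ ≤ cnNorm m r n Y :=
  le_ciSup (cn_bdd m hr hY n) (⟨x, hx⟩, ⟨i, by omega⟩)

theorem cn_le_of {n : ℕ} {B : ℝ} (hB0 : 0 ≤ B)
    (hB : ∀ i ≤ n, ∀ x ∈ closedBall (0 : EuclideanSpace ℝ (Fin m)) r,
      ‖iteratedFDerivWithin ℝ i Y (closedBall 0 r) x‖ ≤ B) : cnNorm m r n Y ≤ B := by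
  refine Real.iSup_le ?_ hB0
  rintro ⟨x, i⟩
  exact hB i (by omega) x x.2

theorem cn_nonneg (n : ℕ) : 0 ≤ cnNorm m r n Y := Real.iSup_nonneg fun _ => norm_nonneg _

theorem cn_mono (hr : 0 < r) (hY : ContDiffOn ℝ ∞ Y (closedBall 0 r)) :
    Monotone fun n => cnNorm m r n Y := by
  intro a b hab
  exact cn_le_of m (cn_nonneg m b) fun i hi x hx => cn_le m hr hY (hi.trans hab) hx

/-- Interpolation constant. -/
noncomputable def kap (r : ℝ) : ℝ := 1 / min 1 r + 2 * min 1 r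

theorem kap_one_le {r : ℝ} (hr : 0 < r) : 1 ≤ kap r := by
  have h0 : 0 < min 1 r := lt_min one_pos hr
  have h1 : min 1 r ≤ 1 := min_le_left _ _
  have : 1 ≤ 1 / min 1 r := by rw [le_div_iff₀ h0]; linarith
  unfold kap
  linarith

theorem kap_cont : ContinuousOn kap (Ioi 0) := by
  unfold kap
  refine ContinuousOn.add (ContinuousOn.div continuousOn_const (by fun_prop) ?_) (by fun_prop)
  intro x hx
  exact (lt_min one_pos hx).ne'

theorem cn_interp (hr : 0 < r) (hY : ContDiffOn ℝ ∞ Y (closedBall 0 r)) (k : ℕ)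
    (hk : 0 < cnNorm m r k Y) :
    cnNorm m r (k + 1) Y ^ 2 ≤ kap r ^ 2 * (cnNorm m r k Y * cnNorm m r (k + 2) Y) := by
  set a := cnNorm m r k Y with ha
  set b := cnNorm m r (k + 2) Y with hb
  have hab : a ≤ b := cn_mono m hr hY (by omega)
  have hb0 : 0 < b := hk.trans_le hab
  have hc0 : 0 < min 1 r := lt_min one_pos hr
  set c := min 1 r with hc
  set p := √a with hp
  set q := √b with hq
  have hp0 : 0 < p := Real.sqrt_pos.2 hk
  have hq0 : 0 < q := Real.sqrt_pos.2 hb0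
  have hpa : p * p = a := Real.mul_self_sqrt hk.le
  have hqb : q * q = b := Real.mul_self_sqrt hb0.le
  have hpq : p ≤ q := Real.sqrt_le_sqrt hab
  have hh : 0 < c * (p / q) := by positivity
  have hhr : c * (p / q) ≤ r := by
    have h1 : p / q ≤ 1 := (div_le_one hq0).2 hpq
    have h2 : c ≤ r := min_le_right _ _
    nlinarith
  have hκ := kap_one_le hr
  have hmain : cnNorm m r (k + 1) Y ≤ kap r * (p * q) := by
    refine cn_le_of m (by positivity) fun i hi x hx => ?_
    rcases Nat.lt_or_ge i (k + 1) with hi' | hi'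
    · have h1 : ‖iteratedFDerivWithin ℝ i Y (closedBall 0 r) x‖ ≤ a :=
        cn_le m hr hY (by omega) hx
      have : p * p ≤ p * q := by gcongr
      nlinarith
    · obtain rfl : i = k + 1 := by omega
      refine (landau_iter hh hhr k hY hb0.le (M0 := a) (M2 := b)
        (fun y hy => cn_le m hr hY le_rfl hy) (fun y hy => cn_le m hr hY le_rfl hy) hx).trans ?_
      apply le_of_eq
      rw [← hpa, ← hqb, kap, ← hc]
      field_simp
  calc cnNorm m r (k + 1) Y ^ 2 ≤ (kap r * (p * q)) ^ 2 := by
        gcongr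
        exact cn_nonneg m _
    _ = _ := by rw [← hpa, ← hqb]; ring

theorem cn_interp_seq (hr : 0 < r) (hY : ContDiffOn ℝ ∞ Y (closedBall 0 r))
    (h1 : 0 < cnNorm m r 1 Y) (N : ℕ) :
    ∃ A : ℝ, 1 ≤ A ∧ cnNorm m r 1 Y * A ^ N = cnNorm m r (N + 1) Y ∧
      ∀ j ≤ N, cnNorm m r (j + 1) Y ≤ kap r ^ (N ^ 2) * cnNorm m r 1 Y * A ^ j := by
  have hpos : ∀ k, 0 < cnNorm m r (k + 1) Y := fun k =>
    h1.trans_le (cn_mono m hr hY (by omega))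
  exact interp_seq (fun k => cnNorm m r (k + 1) Y) hpos
    (fun a b hab => cn_mono m hr hY (by omega)) (kap_one_le hr)
    (fun k => cn_interp m hr hY (k + 1) (hpos k)) N

end Interp

section FlowConstr
variable {E : Type} [NormedAddCommGroup E] [NormedSpace ℝ E] [CompleteSpace E]

theorem flow_constr {Z : E → E} (hZ : ContDiff ℝ ∞ Z) {ρ M s : ℝ} (hM : 0 ≤ M)
    (hZ0 : ∀ y, ‖y‖ ≤ ρ → ‖Z y‖ ≤ M)
    (hZL : ∀ a b, ‖a‖ ≤ ρ → ‖b‖ ≤ ρ → ‖Z a - Z b‖ ≤ 1 / 4 * ‖a - b‖)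
    (hs : s + 2 * M ≤ ρ) :
    ∃ (φ : ℝ → E → E) (G : E → C(unitInterval, E)),
      ContDiffOn ℝ ∞ (fun p : ℝ × E => φ p.1 p.2) (Ioo (-2) 2 ×ˢ ball 0 s) ∧
      ContDiffOn ℝ ∞ G (ball 0 s) ∧
      ∀ x ∈ ball (0 : E) s, ‖G x‖ < ρ ∧
        G x = ContinuousLinearMap.const ℝ unitInterval x +
          vol E (nem unitInterval Z hZ.continuous (G x)) ∧
        ∀ t : unitInterval, φ t x = G x t := by
  set T : C(unitInterval, E) → C(unitInterval, E) :=
    fun γ => vol E (nem unitInterval Z hZ.continuous γ) with hT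
  have hTs : ContDiff ℝ ∞ T := (vol E).contDiff.comp (contDiff_nem hZ)
  have hT0 : ∀ a : C(unitInterval, E), ‖a‖ ≤ ρ → ‖T a‖ ≤ M := by
    intro a ha
    refine (vol_norm_le _).trans ?_
    rw [ContinuousMap.norm_le _ hM]
    intro t
    exact hZ0 _ ((a.norm_coe_le_norm t).trans ha)
  have hTL : ∀ a b : C(unitInterval, E), ‖a‖ ≤ ρ → ‖b‖ ≤ ρ → ‖T a - T b‖ ≤ 1 / 4 * ‖a - b‖ := by
    intro a b ha hb
    rw [hT]
    simp only
    rw [← map_sub]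
    refine (vol_norm_le _).trans ?_
    rw [ContinuousMap.norm_le _ (by positivity)]
    intro t
    refine (hZL (a t) (b t) ((a.norm_coe_le_norm t).trans ha)
      ((b.norm_coe_le_norm t).trans hb)).trans ?_
    gcongr
    exact (a - b).norm_coe_le_norm t
  have hcn : ∀ x : E, ‖ContinuousLinearMap.const ℝ unitInterval x‖ ≤ ‖x‖ := by
    intro x
    rw [ContinuousMap.norm_le _ (norm_nonneg _)]
    intro t
    exact le_rfl
  obtain ⟨Γ, hΓs, hΓ⟩ := param_fixed_smooth hM hTs hT0 hTL
    (ContinuousLinearMap.const ℝ unitInterval) hcn hs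
  have h1 : (1 : ℝ) ∈ Ioo (-2 : ℝ) 2 := by norm_num
  refine ⟨fun t x => Γ (t, x) 1, fun x => Γ (1, x), ?_, ?_, ?_⟩
  · exact (ContinuousMap.evalCLM ℝ (1 : unitInterval) :
      C(unitInterval, E) →L[ℝ] E).contDiff.comp_contDiffOn hΓs
  · refine hΓs.comp (t := Ioo (-2 : ℝ) 2 ×ˢ ball (0 : E) s) (f := fun x => ((1 : ℝ), x)) ?_ ?_
    · fun_prop
    · intro x hx
      exact ⟨h1, hx⟩
  intro x hx
  obtain ⟨hn, he⟩ := hΓ (1, x) ⟨h1, hx⟩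
  simp only [one_smul] at he
  refine ⟨hn, he, ?_⟩
  intro t
  have htm : (t : ℝ) ∈ Ioo (-2 : ℝ) 2 := ⟨by linarith [t.2.1], by linarith [t.2.2]⟩
  obtain ⟨hn2, he2⟩ := hΓ (t, x) ⟨htm, hx⟩
  set g : C(unitInterval, E) := Γ (1, x) with hg
  set H : C(unitInterval, E) := g.comp ⟨fun σ => t * σ, by fun_prop⟩ with hH
  have hHn : ‖H‖ ≤ ρ := by
    rw [ContinuousMap.norm_le _ ((norm_nonneg _).trans hn.le)]
    intro σ
    exact (g.norm_coe_le_norm _).trans hn.le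
  have hHe : H = ContinuousLinearMap.const ℝ unitInterval x + (t : ℝ) • T H := by
    ext1 σ
    have e1 : H σ = g (t * σ) := rfl
    have e2 : g (t * σ) = x + T g (t * σ) := by
      conv_lhs => rw [he]
      rfl
    have e3 : (ContinuousLinearMap.const ℝ unitInterval x + (t : ℝ) • T H) σ =
      x + (t : ℝ) • T H σ := rfl
    rw [e1, e2, e3]
    congr 1
    have e4 : T g (t * σ) = ∫ u in (0 : ℝ)..(t * σ : ℝ), Z (g (projIcc 0 1 zero_le_one u)) := rfl
    have e5 : T H σ = ∫ u in (0 : ℝ)..(σ : ℝ), Z (g (t * projIcc 0 1 zero_le_one u)) := rfl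
    rw [e4, e5]
    have e6 := intervalIntegral.smul_integral_comp_mul_left (a := 0) (b := (σ : ℝ))
      (fun u => Z (g (projIcc 0 1 zero_le_one u))) (t : ℝ)
    rw [mul_zero] at e6
    rw [← e6]
    congr 1
    refine intervalIntegral.integral_congr fun u hu => ?_
    rw [uIcc_of_le σ.2.1] at hu
    have hu1 : u ∈ Icc (0 : ℝ) 1 := ⟨hu.1, hu.2.trans σ.2.2⟩
    have hu2 : (t : ℝ) * u ∈ Icc (0 : ℝ) 1 :=
      ⟨mul_nonneg t.2.1 hu.1, mul_le_one₀ t.2.2 hu1.1 hu1.2⟩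
    rw [projIcc_of_mem _ hu1, projIcc_of_mem _ hu2]
    rfl
  have hfin := param_fixed_unique hTL (t := (t : ℝ)) (abs_le.2 ⟨htm.1.le, htm.2.le⟩) hn2.le hHn
    he2 hHe
  simp only
  rw [hfin]
  change g (t * 1) = g t
  rw [mul_one]

theorem flow_deriv {Z : E → E} (hZ : Continuous Z) {g : C(unitInterval, E)} {x : E}
    (hg : g = ContinuousLinearMap.const ℝ unitInterval x + vol E (nem unitInterval Z hZ g))
    {ψ : ℝ → E} (hψ : ∀ t : unitInterval, ψ t = g t) :
    ψ 0 = x ∧ ∀ t ∈ Icc (0 : ℝ) 1, HasDerivWithinAt ψ (Z (ψ t)) (Icc 0 1) t := by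
  have hval : ∀ t (ht : t ∈ Icc (0 : ℝ) 1), ψ t =
      x + ∫ u in (0 : ℝ)..t, Z (g (projIcc 0 1 zero_le_one u)) := by
    intro t ht
    rw [hψ ⟨t, ht⟩]
    conv_lhs => rw [hg]
    rfl
  refine ⟨by rw [hval 0 (by simp)]; simp, ?_⟩
  intro t ht
  have hc : Continuous fun u : ℝ => Z (g (projIcc 0 1 zero_le_one u)) :=
    hZ.comp (g.continuous.comp continuous_projIcc)
  have h1 : HasDerivAt (fun t : ℝ => x + ∫ u in (0 : ℝ)..t, Z (g (projIcc 0 1 zero_le_one u)))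
      (Z (g (projIcc 0 1 zero_le_one t))) t :=
    (hc.integral_hasStrictDerivAt 0 t).hasDerivAt.const_add x
  rw [projIcc_of_mem _ ht, ← hψ ⟨t, ht⟩] at h1
  exact h1.hasDerivWithinAt.congr hval (hval t ht)

end FlowConstr

section Cutoff
variable {E : Type} [NormedAddCommGroup E] [InnerProductSpace ℝ E]

theorem cutoff {Y : E → E} {r ρ : ℝ} (hρ : 0 < ρ) (hρr : ρ < r)
    (hY : ContDiffOn ℝ ∞ Y (closedBall 0 r)) :
    ∃ Z : E → E, ContDiff ℝ ∞ Z ∧ (∀ y ∈ closedBall (0 : E) ρ, Z y = Y y) ∧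
      ∀ (i : ℕ) (y : E), ‖y‖ < ρ →
        iteratedFDeriv ℝ i Z y = iteratedFDerivWithin ℝ i Y (closedBall 0 r) y := by
  let χ : ContDiffBump (0 : E) := ⟨ρ, (ρ + r) / 2, hρ, by linarith⟩
  have hYat : ∀ y : E, ‖y‖ < r → ContDiffAt ℝ ∞ Y y := fun y hy =>
    hY.contDiffAt (closedBall_mem_nhds_of_mem (by simpa using hy))
  have hZY : ∀ y ∈ closedBall (0 : E) ρ, χ y • Y y = Y y := fun y hy => by
    rw [χ.one_of_mem_closedBall hy, one_smul]
  refine ⟨fun y => χ y • Y y, ?_, hZY, ?_⟩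
  · rw [contDiff_iff_contDiffAt]
    intro y
    rcases lt_or_ge ‖y‖ r with hy | hy
    · exact χ.contDiffAt.smul (hYat y hy)
    · have : (fun y => χ y • Y y) =ᶠ[nhds y] fun _ => 0 := by
        have ho : IsOpen {z : E | (ρ + r) / 2 < ‖z‖} := isOpen_lt continuous_const continuous_norm
        filter_upwards [ho.mem_nhds (show (ρ + r) / 2 < ‖y‖ by linarith)] with z hz
        rw [χ.zero_of_le_dist (by rw [dist_zero_right]; exact le_of_lt hz), zero_smul]
      exact contDiffAt_const.congr_of_eventuallyEq this
  · intro i y hy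
    have h1 : (fun y => χ y • Y y) =ᶠ[nhds y] Y := by
      filter_upwards [closedBall_mem_nhds_of_mem (show y ∈ ball (0 : E) ρ by simpa using hy)]
        with z hz
      exact hZY z hz
    rw [(Filter.EventuallyEq.iteratedFDeriv ℝ h1 i).eq_of_nhds, iteratedFDerivWithin_eq_iteratedFDeriv
      (uniqueDiffOn_cball (hρ.trans hρr))
      ((hYat y (hy.trans hρr)).of_le (by exact_mod_cast le_top)) (by simpa using (hy.trans hρr).le)]

end Cutoff

end FlowAux

/-- there is `θ > 0`, depending only on `m`, and constants
`C(n,r) > 0` depending continuously on `r`, such that for all `0 < s < r` and every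
smooth flat vector field `Y` on `B̄_r` with `‖Y‖_{0,r} < (r−s)θ` and `‖Y‖_{1,r} < θ`,
the flow of `Y` exists for `t ∈ [0,1]` as a smooth map `φ : [0,1] × B̄_s → B_r` with
`φ(0,x) = x` and `∂ₜφ = Y ∘ φ`, and the time-one flow satisfies
`‖φ¹_Y − id‖_{n,s} ≤ C(n,r) ‖Y‖_{n,r}`. -/
theorem flow_existence_and_estimate (m : ℕ) (hm : 1 ≤ m) :
    ∃ θ > (0 : ℝ), ∃ C : ℕ → ℝ → ℝ,
      (∀ n : ℕ, ContinuousOn (C n) (Set.Ioi 0) ∧ ∀ r : ℝ, 0 < r → 0 < C n r) ∧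
      ∀ r s : ℝ, 0 < s → s < r →
        ∀ Y : EuclideanSpace ℝ (Fin m) → EuclideanSpace ℝ (Fin m),
          ContDiffOn ℝ (⊤ : ℕ∞) Y (closedBall 0 r) → FlatVF m r Y →
          cnNorm m r 0 Y < (r - s) * θ → cnNorm m r 1 Y < θ →
          ∃ φ : ℝ → EuclideanSpace ℝ (Fin m) → EuclideanSpace ℝ (Fin m),
            ContDiffOn ℝ (⊤ : ℕ∞)
              (fun p : ℝ × EuclideanSpace ℝ (Fin m) => φ p.1 p.2)
              (Set.Icc 0 1 ×ˢ closedBall 0 s) ∧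
            (∀ x ∈ closedBall (0 : EuclideanSpace ℝ (Fin m)) s, φ 0 x = x) ∧
            (∀ t ∈ Set.Icc (0 : ℝ) 1,
              ∀ x ∈ closedBall (0 : EuclideanSpace ℝ (Fin m)) s,
                φ t x ∈ ball (0 : EuclideanSpace ℝ (Fin m)) r ∧
                HasDerivWithinAt (fun τ => φ τ x) (Y (φ t x)) (Set.Icc 0 1) t) ∧
            ∀ n : ℕ, cnNorm m s n (fun x => φ 1 x - x) ≤ C n r * cnNorm m r n Y := by
  refine ⟨1 / 4, by norm_num,
    fun n r => 1 + ∑ j ∈ Finset.range n, dSeq (kap r ^ (j ^ 2)) j, ?_, ?_⟩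
  · intro n
    constructor
    · refine continuousOn_const.add (continuousOn_finsetSum _ fun j _ => ?_)
      exact (dSeq_continuous j).comp_continuousOn (kap_cont.pow _)
    · intro r hr
      have : 0 ≤ ∑ j ∈ Finset.range n, dSeq (kap r ^ (j ^ 2)) j :=
        Finset.sum_nonneg fun j _ => by
          have h1 : 1 ≤ kap r ^ (j ^ 2) := one_le_pow₀ (kap_one_le hr)
          linarith [dSeq_ge h1 j]
      linarith
  intro r s hs hsr Y hY _ hY0 hY1
  have hr : 0 < r := hs.trans hsr
  set M0 := cnNorm m r 0 Y with hM0
  set M1 := cnNorm m r 1 Y with hM1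
  have hM0n : 0 ≤ M0 := cn_nonneg m 0
  have hM1n : 0 ≤ M1 := cn_nonneg m 1
  set s' := s + (r - s) / 4 with hs'
  set ρ := s' + (r - s) / 2 with hρ
  have hss' : s < s' := by rw [hs']; linarith
  set ρ' := (ρ + r) / 2 with hρ'
  have hρr : ρ < r := by rw [hρ, hs']; linarith
  have hρρ' : ρ < ρ' := by rw [hρ']; linarith
  have hρ'r : ρ' < r := by rw [hρ']; linarith
  have hρ0 : 0 < ρ := by rw [hρ]; linarith
  obtain ⟨Z, hZ, hZY, hZD⟩ := cutoff (hρ0.trans hρρ') hρ'r hY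
  have hZb : ∀ (i n : ℕ), i ≤ n → ∀ y : EuclideanSpace ℝ (Fin m), ‖y‖ ≤ ρ →
      ‖iteratedFDeriv ℝ i Z y‖ ≤ cnNorm m r n Y := by
    intro i n hi y hy
    rw [hZD i y (hy.trans_lt hρρ')]
    exact cn_le m hr hY hi (by simpa using hy.trans hρr.le)
  have hZ0 : ∀ y, ‖y‖ ≤ ρ → ‖Z y‖ ≤ M0 := by
    intro y hy
    simpa using hZb 0 0 le_rfl y hy
  have hZ1 : ∀ y, ‖y‖ ≤ ρ → ‖fderiv ℝ Z y‖ ≤ 1 / 4 := by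
    intro y hy
    have := hZb 1 1 le_rfl y hy
    rw [← zero_add 1, ← norm_iteratedFDeriv_fderiv, norm_iteratedFDeriv_zero, zero_add] at this
    exact this.trans hY1.le
  have hZL : ∀ a b, ‖a‖ ≤ ρ → ‖b‖ ≤ ρ → ‖Z a - Z b‖ ≤ 1 / 4 * ‖a - b‖ := by
    intro a b ha hb
    refine (convex_closedBall (0 : EuclideanSpace ℝ (Fin m)) ρ).norm_image_sub_le_of_norm_fderiv_le
      (𝕜 := ℝ) (fun y _ => hZ.differentiable (by simp) y) (fun y hy => hZ1 y (by simpa using hy))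
      (by simpa using hb) (by simpa using ha)
  obtain ⟨φ, G, hφs, hGs, hG⟩ := flow_constr hZ hM0n hZ0 hZL (s := s') (ρ := ρ)
    (by rw [hρ]; linarith)
  have hsub : closedBall (0 : EuclideanSpace ℝ (Fin m)) s ⊆ ball 0 s' :=
    closedBall_subset_ball hss'
  have hfl : ∀ x ∈ closedBall (0 : EuclideanSpace ℝ (Fin m)) s, φ 0 x = x ∧
      ∀ t ∈ Icc (0 : ℝ) 1, HasDerivWithinAt (fun τ => φ τ x) (Z (φ t x)) (Icc 0 1) t := by
    intro x hx
    obtain ⟨_, h2, h3⟩ := hG x (hsub hx)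
    exact flow_deriv hZ.continuous h2 (ψ := fun τ => φ τ x) h3
  refine ⟨φ, ?_, fun x hx => (hfl x hx).1, ?_, ?_⟩
  · refine hφs.mono (prod_mono ?_ hsub)
    intro t ht
    exact ⟨by linarith [ht.1], by linarith [ht.2]⟩
  · intro t ht x hx
    obtain ⟨h1, h2, h3⟩ := hG x (hsub hx)
    have h4 : ‖φ t x‖ < ρ := by
      rw [h3 ⟨t, ht⟩]
      exact ((G x).norm_coe_le_norm _).trans_lt h1
    refine ⟨by simpa using h4.trans hρr, ?_⟩
    rw [← hZY (φ t x) (by simpa using (h4.trans hρρ').le)]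
    exact (hfl x hx).2 t ht
  intro n
  have hcn : ‖(ContinuousLinearMap.const ℝ unitInterval : EuclideanSpace ℝ (Fin m) →L[ℝ] _)‖ ≤ 1 := by
    refine ContinuousLinearMap.opNorm_le_bound _ zero_le_one fun x => ?_
    rw [one_mul, ContinuousMap.norm_le _ (norm_nonneg _)]
    intro t
    exact le_rfl
  set V : EuclideanSpace ℝ (Fin m) → EuclideanSpace ℝ (Fin m) :=
    fun y => vol _ (nem unitInterval Z hZ.continuous (G y)) 1 with hV
  have hVφ : EqOn (fun x => φ 1 x - x) V (ball 0 s') := by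
    intro x hx
    obtain ⟨_, h2, h3⟩ := hG x hx
    have h4 : φ 1 x = G x 1 := by simpa using h3 1
    simp only
    rw [h4, sub_eq_iff_eq_add']
    conv_lhs => rw [h2]
    rfl
  have hVs : ContDiffOn ℝ (⊤ : ℕ∞) V (ball 0 s') :=
    (ContinuousMap.evalCLM ℝ (1 : unitInterval) :
      C(unitInterval, EuclideanSpace ℝ (Fin m)) →L[ℝ] _).contDiff.comp_contDiffOn
        ((vol (EuclideanSpace ℝ (Fin m))).contDiff.comp_contDiffOn ((contDiff_nem hZ).comp_contDiffOn hGs))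
  have hconv : ∀ (i : ℕ), ∀ x ∈ closedBall (0 : EuclideanSpace ℝ (Fin m)) s,
      iteratedFDerivWithin ℝ i (fun x => φ 1 x - x) (closedBall 0 s) x =
        iteratedFDerivWithin ℝ i V (ball 0 s') x := by
    intro i x hx
    have hx' := hsub hx
    rw [iteratedFDerivWithin_congr (hVφ.mono hsub) hx,
      iteratedFDerivWithin_eq_iteratedFDeriv (uniqueDiffOn_cball hs)
      ((hVs.contDiffAt (isOpen_ball.mem_nhds hx')).of_le (by exact_mod_cast le_top)) hx,
      iteratedFDerivWithin_of_isOpen i isOpen_ball hx']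
  have hCn : ∀ j, 0 ≤ dSeq (kap r ^ (j ^ 2)) j := fun j => by
    have h1 : 1 ≤ kap r ^ (j ^ 2) := one_le_pow₀ (kap_one_le hr)
    linarith [dSeq_ge h1 j]
  have hCs : 0 ≤ ∑ j ∈ Finset.range n, dSeq (kap r ^ (j ^ 2)) j :=
    Finset.sum_nonneg fun j _ => hCn j
  have hMn : 0 ≤ cnNorm m r n Y := cn_nonneg m n
  refine cn_le_of m (by positivity) fun i hi x hx => ?_
  rw [hconv i x hx]
  have hx' := hsub hx
  rcases i with _ | i
  · rw [norm_iteratedFDerivWithin_zero]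
    have h1 : ‖V x‖ ≤ M0 := by
      refine (ContinuousMap.norm_coe_le_norm _ _).trans ((vol_norm_le _).trans ?_)
      rw [ContinuousMap.norm_le _ hM0n]
      intro t
      exact hZ0 _ (((G x).norm_coe_le_norm t).trans (hG x hx').1.le)
    have h2 : M0 ≤ cnNorm m r n Y := cn_mono m hr hY (Nat.zero_le n)
    nlinarith
  rcases hM1n.eq_or_lt with h0 | h0
  · have hV0 : EqOn V (fun _ => 0) (ball 0 s') := by
      intro y hy
      have h1 : ‖V y‖ ≤ 0 := by
        refine (ContinuousMap.norm_coe_le_norm _ _).trans ((vol_norm_le _).trans ?_)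
        rw [ContinuousMap.norm_le _ le_rfl]
        intro t
        have := hZb 0 1 (by omega) (G y t) (((G y).norm_coe_le_norm t).trans (hG y hy).1.le)
        rw [norm_iteratedFDeriv_zero, ← hM1, ← h0] at this
        exact this
      exact norm_le_zero_iff.1 h1
    rw [iteratedFDerivWithin_congr hV0 hx', iteratedFDerivWithin_const_of_ne (by omega)]
    simp only [Pi.zero_apply, norm_zero]
    positivity
  obtain ⟨A, hA1, hAN, hAj⟩ := cn_interp_seq m hr hY h0 i
  have hest := flow_deriv_est hZ isOpen_ball hGs hcn (fun x hx => (hG x hx).2.1)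
    (fun x hx => (hG x hx).1) (fun y hy => hZ1 y hy.le) i (K := kap r ^ (i ^ 2)) (M := M1) (A := A)
    (one_le_pow₀ (kap_one_le hr)) hM1n hY1.le hA1
    (fun y hy j hj => (hZb (j + 1) (j + 1) le_rfl y hy.le).trans (hAj j hj)) hx' 1
  refine hest.trans ?_
  rw [mul_assoc, hAN]
  have h2 : cnNorm m r (i + 1) Y ≤ cnNorm m r n Y := cn_mono m hr hY hi
  have h3 : dSeq (kap r ^ (i ^ 2)) i ≤ ∑ j ∈ Finset.range n, dSeq (kap r ^ (j ^ 2)) j :=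
    Finset.single_le_sum (f := fun j => dSeq (kap r ^ (j ^ 2)) j) (fun j _ => hCn j)
      (Finset.mem_range.2 (by omega))
  have h4 := hCn i
  exact mul_le_mul (by linarith) h2 (cn_nonneg m _) (by linarith)
end
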